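/- The cyclotomic Hecke algebra H_n(v_1,…,v_m;q) is a semisimple k-algebra if and only if the elements q^i v_j − v_k are nonzero in k for all integers i with |i| < n and all 1 ≤ j ≠ k ≤ m, and the elements 1 + q + ⋯ + q^i are nonzero in k for all 1 ≤ i < n. -/

import Mathlib

noncomputable section
open scoped Classical
open scoped Fin.NatCast

namespace Cyclo

/-- The defining relations of the cyclotomic Hecke algebra of type `G(m,1,n)`.
Generator `i : Fin n` corresponds to `a_{i+1}` of the paper. -/
inductive Rel (k : Type) [Field k] (m n : ℕ) (v : Fin m → k) (q : k) :
    FreeAlgebra k (Fin n) → FreeAlgebra k (Fin n) → Prop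
  | cyclo (i : Fin n) (hi : i.1 = 0) :
      Rel k m n v q
        ((List.ofFn fun j : Fin m =>
          (FreeAlgebra.ι k i - algebraMap k (FreeAlgebra k (Fin n)) (v j))).prod) 0
  | quad (i : Fin n) (hi : 1 ≤ i.1) :
      Rel k m n v q
        ((FreeAlgebra.ι k i - algebraMap k (FreeAlgebra k (Fin n)) q) * (FreeAlgebra.ι k i + 1)) 0
  | braid0 (i j : Fin n) (hi : i.1 = 0) (hj : j.1 = 1) :
      Rel k m n v q
        (FreeAlgebra.ι k i * FreeAlgebra.ι k j * FreeAlgebra.ι k i * FreeAlgebra.ι k j)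
        (FreeAlgebra.ι k j * FreeAlgebra.ι k i * FreeAlgebra.ι k j * FreeAlgebra.ι k i)
  | comm (i j : Fin n) (h : i.1 + 2 ≤ j.1) :
      Rel k m n v q (FreeAlgebra.ι k i * FreeAlgebra.ι k j)
        (FreeAlgebra.ι k j * FreeAlgebra.ι k i)
  | braid (i j : Fin n) (hi : 1 ≤ i.1) (hj : j.1 = i.1 + 1) :
      Rel k m n v q
        (FreeAlgebra.ι k j * FreeAlgebra.ι k i * FreeAlgebra.ι k j)
        (FreeAlgebra.ι k i * FreeAlgebra.ι k j * FreeAlgebra.ι k i)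

/-- The cyclotomic Hecke algebra `H_n(v_1,…,v_m;q)` of type `G(m,1,n)`. -/
def CH (k : Type) [Field k] (m n : ℕ) (v : Fin m → k) (q : k) : Type :=
  RingQuot (Rel k m n v q)

instance (k : Type) [Field k] (m n : ℕ) (v : Fin m → k) (q : k) : Ring (CH k m n v q) :=
  inferInstanceAs (Ring (RingQuot (Rel k m n v q)))

instance (k : Type) [Field k] (m n : ℕ) (v : Fin m → k) (q : k) : Algebra k (CH k m n v q) :=
  inferInstanceAs (Algebra k (RingQuot (Rel k m n v q)))

variable (k : Type) [Field k] (m n : ℕ) (v : Fin m → k) (q : k)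

/-- `gen k m n v q t` is the generator `a_{t+1}` (so `gen 0 = a_1`, …, `gen (n-1) = a_n`). -/
def gen [NeZero n] (t : ℕ) : CH k m n v q :=
  RingQuot.mkAlgHom k (Rel k m n v q) (FreeAlgebra.ι k ((t : Fin n)))

/-- `murphyAux k m n v q t` is the Murphy element `L_{t+1}`. -/
def murphyAux [NeZero n] : ℕ → CH k m n v q
  | 0 => gen k m n v q 0
  | t + 1 => q⁻¹ • (gen k m n v q (t + 1) * murphyAux t * gen k m n v q (t + 1))

/-- The Murphy element `L_{i+1}`, for `i : Fin n`. -/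
def murphy [NeZero n] (i : Fin n) : CH k m n v q := murphyAux k m n v q i.1

/-- The product of adjacent transpositions encoded by a list of `0`-based indices:
`t` encodes the transposition `(t, t+1)` (in `0`-based labels), i.e. `s_{t+1}` of the paper. -/
def swapProd [NeZero n] (l : List ℕ) : Equiv.Perm (Fin n) :=
  (l.map fun t => Equiv.swap ((t : Fin n)) (((t + 1 : ℕ) : Fin n))).prod

/-- The corresponding product of generators of the Hecke algebra: the index `t`
(encoding `s_{t+1}`) contributes the generator `a_{t+2} = gen (t+1)`. -/
def genProd [NeZero n] (l : List ℕ) : CH k m n v q :=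
  (l.map fun t => gen k m n v q (t + 1)).prod

/-- `l` is a reduced word for the permutation `w`. -/
def IsReducedWord [NeZero n] (l : List ℕ) (w : Equiv.Perm (Fin n)) : Prop :=
  (∀ t ∈ l, t + 1 < n) ∧ swapProd n l = w ∧
    ∀ l' : List ℕ, (∀ t ∈ l', t + 1 < n) → swapProd n l' = w → l.length ≤ l'.length

/-- `aw` assigns to each permutation `w` the element `a_w` computed from a(ny) reduced word. -/
def IsAW [NeZero n] (aw : Equiv.Perm (Fin n) → CH k m n v q) : Prop :=
  ∀ (w : Equiv.Perm (Fin n)) (l : List ℕ), IsReducedWord n l w → aw w = genProd k m n v q l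



/-- An `m`-multipartition of `n`:  `part c` is the partition `λ^{(c+1)}`
(so `c = m-1` corresponds to the component `λ^{(m)}` of the paper), given by its
(weakly decreasing) list of row lengths `part c 0, part c 1, …`. -/
structure Multipartition (m n : ℕ) where
  part : Fin m → ℕ → ℕ
  mono : ∀ c i, part c (i + 1) ≤ part c i
  bound : ∀ c i, n ≤ i → part c i = 0
  total : (∑ c : Fin m, ∑ i ∈ Finset.range n, part c i) = n

namespace Multipartition

variable {m n : ℕ}

/-- The size `|λ^{(c+1)}|` of a component. -/
def compSize (Λ : Multipartition m n) (c : Fin m) : ℕ :=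
  ∑ i ∈ Finset.range n, Λ.part c i

/-- `|λ^{(1)}| + ⋯ + |λ^{(kk)}|`. -/
def compSizeUpto (Λ : Multipartition m n) (kk : ℕ) : ℕ :=
  ∑ c ∈ Finset.range kk, (if h : c < m then Λ.compSize ⟨c, h⟩ else 0)

/-- The statistic `Σ_{j>k}|λ^{(j)}| + Σ_{j=1}^{l} λ^{(k)}_j` of the dominance order,
where the component `k` (`1`-based) is `c.1 + 1`. -/
def domStat (Λ : Multipartition m n) (c : Fin m) (l : ℕ) : ℕ :=
  (∑ c' ∈ Finset.univ.filter (fun c' : Fin m => c.1 < c'.1), Λ.compSize c') +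
    ∑ j ∈ Finset.range l, Λ.part c j

/-- The dominance order `Λ ⊵ M`. -/
def Dominates (Λ M : Multipartition m n) : Prop :=
  ∀ (c : Fin m) (l : ℕ), M.domStat c l ≤ Λ.domStat c l

/-- Strict dominance `Λ ▷ M`. -/
def StrictDom (Λ M : Multipartition m n) : Prop :=
  Λ.Dominates M ∧ Λ ≠ M

/-- The (0-based) entry of the canonical tableau `t^Λ` in the box in row `i`, column `j`
of component `c`: the boxes are filled row by row, starting with the rows of `λ^{(m)}`,
then those of `λ^{(m-1)}`, and so on. -/
def canonEntry (Λ : Multipartition m n) (c : Fin m) (i j : ℕ) : ℕ :=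
  (∑ c' ∈ Finset.univ.filter (fun c' : Fin m => c.1 < c'.1), Λ.compSize c') +
    (∑ i' ∈ Finset.range i, Λ.part c i') + j

end Multipartition

/-- A standard tableau of shape `Λ`, with (0-based) entries `0, …, n-1`:
`entry c i j` is the entry in the box in row `i`, column `j` of component `c`
(and is normalised to `0` outside the boxes of `Λ`). -/
structure StdTableau {m n : ℕ} (Λ : Multipartition m n) where
  entry : Fin m → ℕ → ℕ → ℕ
  lt_n : ∀ c i j, j < Λ.part c i → entry c i j < n
  inj : ∀ c i j c' i' j', j < Λ.part c i → j' < Λ.part c' i' →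
    entry c i j = entry c' i' j' → (c, i, j) = (c', i', j')
  surj : ∀ x, x < n → ∃ c i j, j < Λ.part c i ∧ entry c i j = x
  row : ∀ c i j, j + 1 < Λ.part c i → entry c i j < entry c i (j + 1)
  col : ∀ c i j, j < Λ.part c (i + 1) → entry c i j < entry c (i + 1) j
  outside : ∀ c i j, ¬ j < Λ.part c i → entry c i j = 0

variable (k : Type) [Field k] (m n : ℕ)

/-- `d` assigns to each standard tableau `T` of each shape `Λ` the permutation `d(T)`
sending, box by box, the entry of the canonical tableau `t^Λ` to the entry of `T`. -/
def IsD [NeZero n] (d : ∀ Λ : Multipartition m n, StdTableau Λ → Equiv.Perm (Fin n)) : Prop :=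
  ∀ (Λ : Multipartition m n) (T : StdTableau Λ) (c : Fin m) (i j : ℕ), j < Λ.part c i →
    d Λ T ((Λ.canonEntry c i j : ℕ) : Fin n) = ((T.entry c i j : ℕ) : Fin n)

/-- Membership in the row stabiliser `S_Λ` of the canonical tableau `t^Λ`. -/
def InRowStab [NeZero n] (Λ : Multipartition m n) (w : Equiv.Perm (Fin n)) : Prop :=
  ∀ (c : Fin m) (i j : ℕ), j < Λ.part c i →
    ∃ j', j' < Λ.part c i ∧
      w ((Λ.canonEntry c i j : ℕ) : Fin n) = ((Λ.canonEntry c i j' : ℕ) : Fin n)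


variable (k : Type) [Field k] (m n : ℕ) (v : Fin m → k) (q : k)

open Multipartition

/-- The element `x_Λ = Σ_{w ∈ S_Λ} a_w`, where `aw` computes the elements `a_w`. -/
def xlam [NeZero n] (aw : Equiv.Perm (Fin n) → CH k m n v q) (Λ : Multipartition m n) :
    CH k m n v q :=
  ∑ w : Equiv.Perm (Fin n), if InRowStab m n Λ w then aw w else 0

/-- `a_kk = n − |λ^{(1)}| − ⋯ − |λ^{(kk)}|`. -/
def aVal (Λ : Multipartition m n) (kk : ℕ) : ℕ := n - Λ.compSizeUpto kk

/-- The element `u_a = ∏_{kk} (L_1 − v_kk)(L_2 − v_kk)⋯(L_{a_kk} − v_kk)`. -/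
def ua [NeZero n] (Λ : Multipartition m n) : CH k m n v q :=
  (List.ofFn fun kk : Fin m =>
    (List.ofFn fun ii : Fin n =>
      if ii.1 < aVal m n Λ (kk.1 + 1) then
        murphy k m n v q ii - algebraMap k (CH k m n v q) (v kk)
      else 1).prod).prod

/-- The element `m_Λ = x_Λ u_a`. -/
def mlam [NeZero n] (aw : Equiv.Perm (Fin n) → CH k m n v q) (Λ : Multipartition m n) :
    CH k m n v q :=
  xlam k m n v q aw Λ * ua k m n v q Λ

/-- The element `m_{st} = a_{d(s)}^* ⬝ m_Λ ⬝ a_{d(t)}`;  here `aw` computes the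
elements `a_w`, `σ` is the `*` anti-involution and `d` computes the permutations `d(t)`. -/
def mst [NeZero n] (aw : Equiv.Perm (Fin n) → CH k m n v q) (σ : CH k m n v q →ₗ[k] CH k m n v q)
    (d : ∀ Λ : Multipartition m n, StdTableau Λ → Equiv.Perm (Fin n))
    {Λ : Multipartition m n} (s t : StdTableau Λ) : CH k m n v q :=
  σ (aw (d Λ s)) * mlam k m n v q aw Λ * aw (d Λ t)

/-- `σ` is the `*` anti-involution: the `k`-linear anti-automorphism fixing the generators. -/
def IsStar [NeZero n] (σ : CH k m n v q →ₗ[k] CH k m n v q) : Prop :=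
  σ 1 = 1 ∧ (∀ x y, σ (x * y) = σ y * σ x) ∧ ∀ t, t < n → σ (gen k m n v q t) = gen k m n v q t

/-- The set of elements `m_{uv}`, for `u, v` standard tableaux of a common shape `M ▷ Λ`. -/
def IsetSet [NeZero n] (aw : Equiv.Perm (Fin n) → CH k m n v q)
    (σ : CH k m n v q →ₗ[k] CH k m n v q)
    (d : ∀ Λ : Multipartition m n, StdTableau Λ → Equiv.Perm (Fin n))
    (Λ : Multipartition m n) : Set (CH k m n v q) :=
  {x | ∃ (M : Multipartition m n) (_ : M.StrictDom Λ) (u v' : StdTableau M),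
    x = mst k m n v q aw σ d u v'}

/-- `I_Λ`, the `k`-span of the `m_{uv}` with shape strictly dominating `Λ`. -/
def Ilam [NeZero n] (aw : Equiv.Perm (Fin n) → CH k m n v q)
    (σ : CH k m n v q →ₗ[k] CH k m n v q)
    (d : ∀ Λ : Multipartition m n, StdTableau Λ → Equiv.Perm (Fin n))
    (Λ : Multipartition m n) : Submodule k (CH k m n v q) :=
  Submodule.span k (IsetSet k m n v q aw σ d Λ)

/-- The image `z_Λ h` of `m_Λ h` in the quotient `H_n / I_Λ`. -/
def zh [NeZero n] (aw : Equiv.Perm (Fin n) → CH k m n v q)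
    (σ : CH k m n v q →ₗ[k] CH k m n v q)
    (d : ∀ Λ : Multipartition m n, StdTableau Λ → Equiv.Perm (Fin n))
    (Λ : Multipartition m n) (h : CH k m n v q) :
    CH k m n v q ⧸ Ilam k m n v q aw σ d Λ :=
  Submodule.Quotient.mk (mlam k m n v q aw Λ * h)

/-- The Specht module `S^Λ = z_Λ ⬝ (H_n/I_Λ)`, as a `k`-submodule of `H_n / I_Λ`. -/
def Specht [NeZero n] (aw : Equiv.Perm (Fin n) → CH k m n v q)
    (σ : CH k m n v q →ₗ[k] CH k m n v q)
    (d : ∀ Λ : Multipartition m n, StdTableau Λ → Equiv.Perm (Fin n))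
    (Λ : Multipartition m n) :
    Submodule k (CH k m n v q ⧸ Ilam k m n v q aw σ d Λ) :=
  Submodule.span k (Set.range (zh k m n v q aw σ d Λ))

/-- The generator `z_Λ h` as an element of the Specht module. -/
def zhS [NeZero n] (aw : Equiv.Perm (Fin n) → CH k m n v q)
    (σ : CH k m n v q →ₗ[k] CH k m n v q)
    (d : ∀ Λ : Multipartition m n, StdTableau Λ → Equiv.Perm (Fin n))
    (Λ : Multipartition m n) (h : CH k m n v q) :
    Specht k m n v q aw σ d Λ :=
  ⟨zh k m n v q aw σ d Λ h, Submodule.subset_span ⟨h, rfl⟩⟩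


end Cyclo

/-!
Sufficiency, `q ≠ 1`. Consider the simultaneous eigenspaces of the Murphy elements, together with
dual Murphy elements built from the inverse generators, which take over on the components with
`v j = 0`. Under the separation hypotheses the possible eigenvalue sequences correspond to the
standard multitableaux, and the algebra is the sum of their weight spaces. The elements `T i - α`
map the weight space of a tableau injectively to that of the tableau with two consecutive entries
exchanged, so tableaux of the same shape are linked. By induction along the chain of subalgebras
`H_1 ⊆ H_2 ⊆ ⋯`, every element of the algebra followed by the projection to the weight space of
`t` acts on a weight vector of `t` by a scalar, so every weight vector generates a simple module.

Sufficiency, `q = 1`. A projection onto a left ideal is made equivariant as in Maschke's theorem, by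
averaging over coset representatives of the symmetric groups and compressing by the spectral
idempotents of the Murphy elements.

Necessity. Over a semisimple algebra, a functional on a module that transforms by a character `χ`
vanishes as soon as it kills all eigenvectors with character `χ`. The Hecke algebra acts on
functions of words by permuting positions, and explicit nonzero functionals on these modules
transform by the character `a_1 ↦ x`, `a_i ↦ q`. Their values on its eigenvectors are multiples of
`q ^ d * v j - v k` or of `1 + q + ⋯ + q ^ d`, so none of these parameters can vanish.
-/

/-! ### Murphy elements -/

namespace CyclotomicHecke

section Relations

variable {K A : Type*} [Field K] [Ring A] [Algebra K A]

/-- The relations of `H_n(v_1, …, v_m; q)` other than the polynomial equation for `a = a_1`.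
The element `T i` plays the role of `a_{i+2}`, so only the `T i` with
`i + 1 < n` are involved. -/
structure HeckeRelations (q : K) (n : ℕ) (a : A) (T : ℕ → A) : Prop where
  quad : ∀ i, i + 1 < n → T i * T i = (q - 1) • T i + q • (1 : A)
  braid_zero : 1 < n → a * T 0 * a * T 0 = T 0 * a * T 0 * a
  commute_zero : ∀ i, 1 ≤ i → i + 1 < n → Commute a (T i)
  commute : ∀ i j, i + 2 ≤ j → j + 1 < n → Commute (T i) (T j)
  braid : ∀ i, i + 2 < n → T (i + 1) * T i * T (i + 1) = T i * T (i + 1) * T i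

/-- The subalgebra generated by the first `i` generators `a, T 0, …, T (i - 2)`; it is the image
of the Hecke algebra `H_i`. -/
def parabolic (K : Type*) {A : Type*} [Field K] [Ring A] [Algebra K A] (a : A) (T : ℕ → A)
    (i : ℕ) : Subalgebra K A :=
  Algebra.adjoin K {x | (1 ≤ i ∧ x = a) ∨ ∃ j, j + 1 < i ∧ x = T j}

/-- The Murphy elements `L_{i+1}`: `L_1 = a` and `L_{i+2} = q⁻¹ T_i L_{i+1} T_i`. -/
def murphy (q : K) (a : A) (T : ℕ → A) : ℕ → A
  | 0 => a
  | i + 1 => q⁻¹ • (T i * murphy q a T i * T i)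

/-- The inverse of `T i`, read off from the quadratic relation. -/
def invGen (q : K) (T : ℕ → A) (i : ℕ) : A := q⁻¹ • (T i - (q - 1) • (1 : A))

/-- The Murphy elements built from the inverse generators and an element `z` that annihilates `a`.
They separate weights on the generalised kernel of `a`, where the Murphy elements vanish. -/
abbrev dualMurphy (q : K) (z : A) (T : ℕ → A) : ℕ → A := murphy q⁻¹ z (invGen q T)

variable {q : K} {n : ℕ} {a : A} {T : ℕ → A}

lemma parabolic_mono {i j : ℕ} (hij : i ≤ j) : parabolic K a T i ≤ parabolic K a T j := by
  apply Algebra.adjoin_mono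
  rintro x (⟨hi, rfl⟩ | ⟨l, hl, rfl⟩)
  · exact Or.inl ⟨hi.trans hij, rfl⟩
  · exact Or.inr ⟨l, by omega, rfl⟩

lemma mem_parabolic_zeroth {i : ℕ} (hi : 1 ≤ i) : a ∈ parabolic K a T i :=
  Algebra.subset_adjoin (Or.inl ⟨hi, rfl⟩)

lemma mem_parabolic_gen {i j : ℕ} (hj : j + 1 < i) : T j ∈ parabolic K a T i :=
  Algebra.subset_adjoin (Or.inr ⟨j, hj, rfl⟩)

lemma commute_of_mem_parabolic {i : ℕ} {x h : A} (ha : 1 ≤ i → Commute x a)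
    (hT : ∀ j, j + 1 < i → Commute x (T j)) (hh : h ∈ parabolic K a T i) : Commute x h := by
  have hle : parabolic K a T i ≤ Subalgebra.centralizer K {x} := by
    refine Algebra.adjoin_le ?_
    rintro y (⟨hi, rfl⟩ | ⟨j, hj, rfl⟩) _ rfl
    · exact ha hi
    · exact hT j hj
  exact hle hh x rfl

lemma commute_of_mem_adjoin_singleton {x y z : A} (hz : z ∈ Algebra.adjoin K {x})
    (hxy : Commute x y) : Commute z y := by
  have hle : Algebra.adjoin K {x} ≤ Subalgebra.centralizer K {y} :=
    Algebra.adjoin_le (by rintro _ rfl _ rfl; exact hxy.symm)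
  exact (hle hz y rfl).symm

lemma murphy_mem {B : Subalgebra K A} {i : ℕ} (ha : a ∈ B) (hT : ∀ j < i, T j ∈ B) :
    murphy q a T i ∈ B := by
  induction i with
  | zero => exact ha
  | succ i ih =>
    have hTi := hT i (by omega)
    exact B.smul_mem (B.mul_mem (B.mul_mem hTi (ih fun j hj => hT j (by omega))) hTi) _

lemma invGen_mem {B : Subalgebra K A} {i : ℕ} (hT : T i ∈ B) : invGen q T i ∈ B :=
  B.smul_mem (B.sub_mem hT (B.smul_mem B.one_mem _)) _

lemma murphy_mem_parabolic {i l : ℕ} (hil : i < l) : murphy q a T i ∈ parabolic K a T l :=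
  murphy_mem (mem_parabolic_zeroth (by omega)) fun _ hj => mem_parabolic_gen (by omega)

lemma dualMurphy_mem_parabolic {z : A} (hz : z ∈ Algebra.adjoin K {a}) {i l : ℕ} (hil : i < l) :
    dualMurphy q z T i ∈ parabolic K a T l := by
  refine murphy_mem ?_ fun j hj => invGen_mem (mem_parabolic_gen (by omega))
  exact Algebra.adjoin_le (by rintro _ rfl; exact mem_parabolic_zeroth (by omega)) hz

lemma commute_invGen {x : A} {i : ℕ} (hx : Commute x (T i)) : Commute x (invGen q T i) :=
  (hx.sub_right ((Commute.one_right x).smul_right _)).smul_right _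

lemma gen_eq_invGen (hq : q ≠ 0) (i : ℕ) : T i = q • invGen q T i + (q - 1) • (1 : A) := by
  rw [invGen, smul_smul, mul_inv_cancel₀ hq, one_smul, sub_add_cancel]

lemma commute_of_commute_invGen (hq : q ≠ 0) {x : A} {i : ℕ} (hx : Commute x (invGen q T i)) :
    Commute x (T i) := by
  rw [gen_eq_invGen (T := T) hq i]
  exact (hx.smul_right _).add_right ((Commute.one_right x).smul_right _)

lemma commute_murphy {x : A} (ha : Commute x a) (hT : ∀ j, 1 ≤ j → j + 1 < n → Commute x (T j))
    (h_one : 1 < n → Commute x (murphy q a T 1)) {i : ℕ} (hi : i < n) :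
    Commute x (murphy q a T i) := by
  induction i with
  | zero => exact ha
  | succ i ih =>
    rcases Nat.eq_zero_or_pos i with rfl | hpos
    · exact h_one hi
    · have hTi := hT i hpos (by omega)
      exact ((hTi.mul_right (ih (by omega))).mul_right hTi).smul_right _

namespace HeckeRelations

variable (H : HeckeRelations q n a T)
include H

lemma commute_gen_mul_zeroth_mul_gen (hn : 1 < n) : Commute a (T 0 * a * T 0) := by
  have h := H.braid_zero hn
  simp only [Commute, SemiconjBy, ← mul_assoc] at h ⊢
  exact h

lemma commute_murphy_gen_of_lt {i j : ℕ} (hij : i < j) (hj : j + 1 < n) :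
    Commute (murphy q a T i) (T j) := by
  induction i with
  | zero => exact H.commute_zero j hij hj
  | succ i ih =>
    have hTi := H.commute i j hij hj
    exact ((hTi.mul_left (ih (by omega))).mul_left hTi).smul_left _

lemma commute_murphy_add_two_gen {j : ℕ} (hj : j + 2 < n) :
    Commute (murphy q a T (j + 2)) (T j) := by
  have hL := H.commute_murphy_gen_of_lt (i := j) (j := j + 1) (by omega) (by omega)
  simp only [murphy, mul_smul_comm, smul_mul_assoc]
  refine Commute.smul_left (Commute.smul_left ?_ _) _
  set L := murphy q a T j
  calc T (j + 1) * (T j * L * T j) * T (j + 1) * T j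
      = T (j + 1) * T j * L * (T j * T (j + 1) * T j) := by noncomm_ring
    _ = T (j + 1) * T j * (L * T (j + 1)) * T j * T (j + 1) := by
        rw [← H.braid j hj]; noncomm_ring
    _ = (T (j + 1) * T j * T (j + 1)) * L * T j * T (j + 1) := by rw [hL.eq]; noncomm_ring
    _ = T j * (T (j + 1) * (T j * L * T j) * T (j + 1)) := by rw [H.braid j hj]; noncomm_ring

lemma commute_murphy_gen_of_add_two_le {i j : ℕ} (hij : j + 2 ≤ i) (hi : i < n) :
    Commute (murphy q a T i) (T j) := by
  induction i, hij using Nat.le_induction with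
  | base => exact H.commute_murphy_add_two_gen hi
  | succ i hij ih =>
    have hTi := (H.commute j i hij (by omega)).symm
    exact ((hTi.mul_left (ih (by omega))).mul_left hTi).smul_left _

lemma commute_murphy_zeroth {i : ℕ} (hi : i < n) : Commute (murphy q a T i) a :=
  (commute_murphy (Commute.refl a) H.commute_zero
    (fun hn => (H.commute_gen_mul_zeroth_mul_gen hn).smul_right _) hi).symm

lemma commute_murphy_parabolic {i : ℕ} (hi : i < n) {h : A} (hh : h ∈ parabolic K a T i) :
    Commute (murphy q a T i) h :=
  commute_of_mem_parabolic (fun _ => H.commute_murphy_zeroth hi)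
    (fun _ hj => H.commute_murphy_gen_of_add_two_le (by omega) hi) hh

lemma commute_gen_parabolic {i : ℕ} (hi : i + 1 < n) {h : A} (hh : h ∈ parabolic K a T i) :
    Commute (T i) h :=
  commute_of_mem_parabolic (fun h1 => (H.commute_zero i h1 hi).symm)
    (fun _ hj => (H.commute _ _ (by omega) hi).symm) hh

variable (hq : q ≠ 0)
include hq

lemma gen_mul_invGen {i : ℕ} (hi : i + 1 < n) : T i * invGen q T i = 1 := by
  rw [invGen, mul_smul_comm, mul_sub, H.quad i hi, mul_smul_comm, mul_one, add_sub_cancel_left,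
    smul_smul, inv_mul_cancel₀ hq, one_smul]

lemma invGen_mul_gen {i : ℕ} (hi : i + 1 < n) : invGen q T i * T i = 1 := by
  rw [(commute_invGen (Commute.refl (T i))).eq.symm, H.gen_mul_invGen hq hi]

lemma murphy_mul_gen {i : ℕ} (hi : i + 1 < n) :
    murphy q a T i * T i = T i * murphy q a T (i + 1) - (q - 1) • murphy q a T (i + 1) := by
  have hT : T i * murphy q a T (i + 1) = q⁻¹ • (T i * T i * (murphy q a T i * T i)) := by
    simp only [murphy, mul_smul_comm, mul_assoc]
  rw [hT, H.quad i hi]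
  simp only [murphy, add_mul, smul_mul_assoc, smul_add, smul_smul, one_mul, ← mul_assoc]
  rw [inv_mul_cancel₀ hq, one_smul, mul_comm q⁻¹, add_sub_cancel_left]

lemma murphy_succ_mul_gen {i : ℕ} (hi : i + 1 < n) :
    murphy q a T (i + 1) * T i = T i * murphy q a T i + (q - 1) • murphy q a T (i + 1) := by
  have hT : murphy q a T (i + 1) * T i = q⁻¹ • (T i * murphy q a T i * (T i * T i)) := by
    simp only [murphy, smul_mul_assoc, mul_assoc]
  rw [hT, H.quad i hi]
  simp only [murphy, mul_add, mul_smul_comm, smul_add, smul_smul, mul_one]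
  rw [inv_mul_cancel₀ hq, one_smul, mul_comm q⁻¹, add_comm]

lemma invGen_quad {i : ℕ} (hi : i + 1 < n) :
    invGen q T i * invGen q T i = (q⁻¹ - 1) • invGen q T i + q⁻¹ • (1 : A) := by
  nth_rewrite 1 [invGen]
  rw [smul_mul_assoc, sub_mul, H.gen_mul_invGen hq hi, smul_mul_assoc, one_mul, smul_sub, smul_smul,
    mul_sub, mul_one, inv_mul_cancel₀ hq, sub_eq_neg_add, ← neg_smul, neg_sub]

lemma invGen_braid {i : ℕ} (hi : i + 2 < n) :
    invGen q T (i + 1) * invGen q T i * invGen q T (i + 1) =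
      invGen q T i * invGen q T (i + 1) * invGen q T i := by
  have hl : T i * T (i + 1) * T i * (invGen q T i * invGen q T (i + 1) * invGen q T i) = 1 := by
    simp only [mul_assoc]
    rw [← mul_assoc (T i) (invGen q T i), H.gen_mul_invGen hq (by omega), one_mul,
      ← mul_assoc (T (i + 1)), H.gen_mul_invGen hq (by omega), one_mul,
      H.gen_mul_invGen hq (by omega)]
  have hr : invGen q T (i + 1) * invGen q T i * invGen q T (i + 1) *
      (T (i + 1) * T i * T (i + 1)) = 1 := by
    simp only [mul_assoc]
    rw [← mul_assoc (invGen q T (i + 1)) (T (i + 1)), H.invGen_mul_gen hq (by omega), one_mul,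
      ← mul_assoc (invGen q T i), H.invGen_mul_gen hq (by omega), one_mul,
      H.invGen_mul_gen hq (by omega)]
  rw [H.braid i hi] at hr
  exact left_inv_eq_right_inv hr hl

lemma dualMurphy_mul_gen {z : A} {i : ℕ} (hi : i + 1 < n) :
    dualMurphy q z T i * T i =
      T i * dualMurphy q z T (i + 1) + (q - 1) • dualMurphy q z T i := by
  have hTZ : T i * dualMurphy q z T (i + 1) =
      q • (T i * invGen q T i * (dualMurphy q z T i * invGen q T i)) := by
    simp only [dualMurphy, murphy, inv_inv, mul_smul_comm, mul_assoc]
  rw [hTZ, H.gen_mul_invGen hq hi, one_mul]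
  rw [gen_eq_invGen (T := T) hq i]
  rw [mul_add, mul_smul_comm, mul_smul_comm, mul_one]

lemma dualMurphy_succ_mul_gen {z : A} {i : ℕ} (hi : i + 1 < n) :
    dualMurphy q z T (i + 1) * T i =
      T i * dualMurphy q z T i - (q - 1) • dualMurphy q z T i := by
  have hZT : dualMurphy q z T (i + 1) * T i =
      q • (invGen q T i * dualMurphy q z T i * (invGen q T i * T i)) := by
    simp only [dualMurphy, murphy, inv_inv, smul_mul_assoc, mul_assoc]
  rw [hZT, H.invGen_mul_gen hq hi, mul_one]
  rw [gen_eq_invGen (T := T) hq i]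
  rw [add_mul, smul_mul_assoc, smul_mul_assoc, one_mul, add_sub_cancel_right]

section Dual

variable {z : A} (hz : z ∈ Algebra.adjoin K {a}) (hza : z * a = 0) (haz : a * z = 0)
include hz hza haz

-- Conjugating `z (T a T) = (T a T) z` by `T⁻¹` gives `T⁻¹ z T a = a T z T⁻¹`; expanding
-- `T = q T⁻¹ + (q - 1)` in the middle, the constant terms die since `z a = 0 = a z`.
lemma commute_zeroth_invGen_mul_mul_invGen (hn : 1 < n) :
    Commute a (invGen q T 0 * z * invGen q T 0) := by
  set S := invGen q T 0
  have hTS : T 0 * S = 1 := H.gen_mul_invGen hq hn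
  have hST : S * T 0 = 1 := H.invGen_mul_gen hq hn
  have hzT : z * (T 0 * a * T 0) = T 0 * a * T 0 * z :=
    commute_of_mem_adjoin_singleton hz (H.commute_gen_mul_zeroth_mul_gen hn)
  have hconj : S * z * T 0 * a = a * T 0 * z * S := by
    calc S * z * T 0 * a = S * z * T 0 * a * (T 0 * S) := by rw [hTS, mul_one]
      _ = S * (z * (T 0 * a * T 0)) * S := by noncomm_ring
      _ = (S * T 0) * a * T 0 * z * S := by rw [hzT]; noncomm_ring
      _ = a * T 0 * z * S := by rw [hST, one_mul]
  have hT : T 0 = q • S + (q - 1) • (1 : A) := gen_eq_invGen hq 0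
  have hleft : S * z * T 0 * a = q • (S * z * S * a) := by
    rw [hT, mul_add, add_mul, mul_smul_comm, smul_mul_assoc, mul_smul_comm, smul_mul_assoc, mul_one,
      mul_assoc S z a, hza, mul_zero, smul_zero, add_zero]
  have hright : a * T 0 * z * S = q • (a * (S * z * S)) := by
    rw [hT, mul_add, add_mul, add_mul, mul_smul_comm, mul_smul_comm, mul_one,
      smul_mul_assoc (q - 1), haz, smul_zero, zero_mul, add_zero, smul_mul_assoc, smul_mul_assoc]
    simp only [mul_assoc]
  rw [hleft, hright] at hconj
  exact (smul_right_injective A hq hconj).symm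

lemma dual : HeckeRelations q⁻¹ n z (invGen q T) where
  quad _ hi := H.invGen_quad hq hi
  braid_zero hn := by
    have h := commute_of_mem_adjoin_singleton hz
      (H.commute_zeroth_invGen_mul_mul_invGen hq hz hza haz hn)
    simp only [Commute, SemiconjBy, ← mul_assoc] at h
    exact h
  commute_zero i h1 hi :=
    commute_of_mem_adjoin_singleton hz (commute_invGen (H.commute_zero i h1 hi))
  commute i j hij hj :=
    (commute_invGen (commute_invGen (H.commute i j hij hj)).symm).symm
  braid _ hi := H.invGen_braid hq hi

lemma commute_dualMurphy_gen_of_lt {i j : ℕ} (hij : i < j) (hj : j + 1 < n) :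
    Commute (dualMurphy q z T i) (T j) :=
  commute_of_commute_invGen hq ((H.dual hq hz hza haz).commute_murphy_gen_of_lt hij hj)

lemma commute_dualMurphy_zeroth {i : ℕ} (hi : i < n) : Commute (dualMurphy q z T i) a :=
  (commute_murphy (commute_of_mem_adjoin_singleton hz (Commute.refl a)).symm
    (fun j h1 hj => commute_invGen (H.commute_zero j h1 hj))
    (fun hn => (H.commute_zeroth_invGen_mul_mul_invGen hq hz hza haz hn).smul_right _) hi).symm

lemma commute_dualMurphy_parabolic {i : ℕ} (hi : i < n) {h : A} (hh : h ∈ parabolic K a T i) :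
    Commute (dualMurphy q z T i) h :=
  commute_of_mem_parabolic (fun _ => H.commute_dualMurphy_zeroth hq hz hza haz hi)
    (fun _ hj => commute_of_commute_invGen hq
      ((H.dual hq hz hza haz).commute_murphy_gen_of_add_two_le (by omega) hi)) hh

end Dual

end HeckeRelations

end Relations

end CyclotomicHecke

/-! ### Standard multitableaux -/

namespace CyclotomicHecke

section Tableaux

/-- A label `(j, c)` stands for a box of content `c` in the `j`-th component of a multipartition. -/
abbrev Label (ι : Type*) := ι × ℤ

variable {ι : Type*} [DecidableEq ι]

/-- The label `x` is the residue of an addable box of the multipartition whose diagonals have the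
lengths recorded by `s`: compared with the diagonal of content `x.2`, the next diagonal towards the
main one is one longer, and the next one away from it is equally long. -/
def Addable (s : List (Label ι)) (x : Label ι) : Prop :=
  s.count (x.1, x.2 - 1) = s.count x + (if 0 < x.2 then 1 else 0) ∧
  s.count (x.1, x.2 + 1) = s.count x + (if x.2 < 0 then 1 else 0)

/-- The label `x` is the residue of a removable box, again in terms of diagonal lengths. -/
def Removable (s : List (Label ι)) (x : Label ι) : Prop :=
  s.count (x.1, x.2 - 1) + 1 = s.count x + (if 0 < x.2 then 1 else 0) ∧
  s.count (x.1, x.2 + 1) + 1 = s.count x + (if x.2 < 0 then 1 else 0)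

/-- Standard multitableaux, encoded by the labels of their boxes, the most recent box first. -/
def IsStandard : List (Label ι) → Prop
  | [] => True
  | b :: s => Addable s b ∧ IsStandard s

/-- Two labels are adjacent if they have the same colour and neighbouring contents. -/
def Adjacent (x y : Label ι) : Prop := x.1 = y.1 ∧ (x.2 = y.2 + 1 ∨ y.2 = x.2 + 1)

omit [DecidableEq ι] in
lemma Adjacent.symm {x y : Label ι} (h : Adjacent x y) : Adjacent y x := ⟨h.1.symm, h.2.symm⟩

lemma count_cons_label (j : ι) (c : ℤ) (b : Label ι) (s : List (Label ι)) :
    (b :: s).count (j, c) = s.count (j, c) + if b.1 = j ∧ b.2 = c then 1 else 0 := by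
  simp only [List.count_cons, beq_iff_eq, Prod.ext_iff]

lemma IsStandard.of_append {u s : List (Label ι)} (h : IsStandard (u ++ s)) : IsStandard s := by
  induction u with
  | nil => exact h
  | cons b u ih => exact ih h.2

lemma IsStandard.count_le {s : List (Label ι)} (hs : IsStandard s) (j : ι) (c : ℤ) :
    (0 ≤ c → s.count (j, c + 1) ≤ s.count (j, c) ∧ s.count (j, c) ≤ s.count (j, c + 1) + 1) ∧
    (c ≤ 0 → s.count (j, c - 1) ≤ s.count (j, c) ∧ s.count (j, c) ≤ s.count (j, c - 1) + 1) := by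
  induction s generalizing c with
  | nil => simp
  | cons b s ih =>
    obtain ⟨⟨hleft, hright⟩, hs⟩ := hs
    have ih := ih hs c
    obtain ⟨j', d⟩ := b
    simp only [count_cons_label] at *
    by_cases hj : j' = j
    · subst hj
      rcases eq_or_ne d c with rfl | hd
      · grind
      rcases eq_or_ne d (c + 1) with rfl | hd'
      · grind
      rcases eq_or_ne d (c - 1) with rfl | hd''
      · grind
      simpa [hd, hd', hd''] using ih
    · simpa [hj] using ih

lemma Addable.not_adjacent {s : List (Label ι)} {x y : Label ι} (hx : Addable s x)
    (hy : Addable s y) : ¬ Adjacent x y := by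
  rintro ⟨hcol, hcont⟩
  obtain ⟨j, c⟩ := x
  obtain ⟨j', c'⟩ := y
  simp only [Addable] at *
  subst hcol
  rcases hcont with rfl | rfl <;> simp only [add_sub_cancel_right] at * <;> grind

lemma addable_cons_iff {s : List (Label ι)} {x y : Label ι} (hne : x ≠ y) (hadj : ¬ Adjacent x y) :
    Addable (x :: s) y ↔ Addable s y := by
  obtain ⟨j, c⟩ := x
  obtain ⟨j', c'⟩ := y
  have hc : ¬ (j = j' ∧ c = c') := fun e => hne (by rw [e.1, e.2])
  have hpred : ¬ (j = j' ∧ c = c' - 1) := fun e => hadj ⟨e.1, Or.inr (by simp [e.2])⟩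
  have hsucc : ¬ (j = j' ∧ c = c' + 1) := fun e => hadj ⟨e.1, Or.inl (by simp [e.2])⟩
  simp only [Addable, count_cons_label, hc, hpred, hsucc, if_false, add_zero]

lemma Addable.cons {s : List (Label ι)} {x y : Label ι} (hx : Addable s x) (hy : Addable s y)
    (hne : x ≠ y) : Addable (x :: s) y :=
  (addable_cons_iff hne (hx.not_adjacent hy)).2 hy

lemma Addable.perm {s t : List (Label ι)} {x : Label ι} (hs : Addable s x) (hst : s.Perm t) :
    Addable t x := by
  simpa only [Addable, hst.count_eq] using hs

lemma Removable.perm {s t : List (Label ι)} {x : Label ι} (hs : Removable s x)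
    (hst : s.Perm t) : Removable t x := by
  simpa only [Removable, hst.count_eq] using hs

lemma Addable.removable_cons {s : List (Label ι)} {x : Label ι} (hx : Addable s x) :
    Removable (x :: s) x := by
  obtain ⟨j, c⟩ := x
  simp only [Addable, Removable, count_cons_label] at *
  grind

lemma removable_of_not_addable_cons {s : List (Label ι)} {b c : Label ι} (hs : IsStandard s)
    (hc : Addable s c) (hbc : Adjacent b c) (hb : ¬ Addable (c :: s) b) : Removable s b := by
  obtain ⟨j, c⟩ := c
  obtain ⟨j', b⟩ := b
  obtain ⟨rfl, hcont⟩ := hbc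
  have hb_shape := hs.count_le j' b
  have hsucc_shape := hs.count_le j' (b + 1)
  have hpred_shape := hs.count_le j' (b - 1)
  simp only [add_sub_cancel_right, sub_add_cancel] at hsucc_shape hpred_shape
  simp only [Addable, Removable, count_cons_label, true_and] at *
  rcases hcont with rfl | rfl <;> simp only [add_sub_cancel_right] at * <;> grind

lemma IsStandard.exists_eq_append_of_removable {s : List (Label ι)} {b : Label ι}
    (hs : IsStandard s) (hb : Removable s b) :
    ∃ u r, s = u ++ b :: r ∧ ∀ d ∈ u, d ≠ b ∧ ¬ Adjacent d b := by
  obtain ⟨j, c⟩ := b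
  have hmem : ((j, c) : Label ι) ∈ s := by
    rw [← List.count_pos_iff]
    simp only [Removable] at hb
    grind
  obtain ⟨u, r, rfl, hu⟩ := List.eq_append_cons_of_mem hmem
  refine ⟨u, r, rfl, fun d hd => ⟨fun e => hu (e ▸ hd), ?_⟩⟩
  obtain ⟨hpred, hsucc⟩ := hs.of_append.1
  have hcount : u.count (j, c) = 0 := List.count_eq_zero.2 hu
  simp only [Removable, List.count_append, count_cons_label, true_and] at hb hpred hsucc
  have hcount_pred : u.count (j, c - 1) = 0 := by grind
  have hcount_succ : u.count (j, c + 1) = 0 := by grind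
  rw [List.count_eq_zero] at hcount_pred hcount_succ
  obtain ⟨j', d⟩ := d
  rintro ⟨hcol, hcont⟩
  simp only at hcol hcont
  subst hcol
  rcases hcont with rfl | rfl
  · exact hcount_succ hd
  · exact hcount_pred (by rwa [add_sub_cancel_right])

lemma IsStandard.erase_middle {u r : List (Label ι)} {b : Label ι} (hs : IsStandard (u ++ b :: r))
    (hu : ∀ d ∈ u, d ≠ b ∧ ¬ Adjacent d b) : IsStandard (u ++ r) := by
  induction u with
  | nil => exact hs.2
  | cons d u ih =>
    obtain ⟨hne, hadj⟩ := hu d List.mem_cons_self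
    refine ⟨?_, ih hs.2 fun e he => hu e (List.mem_cons_of_mem _ he)⟩
    exact (addable_cons_iff hne.symm fun h => hadj h.symm).1 (hs.1.perm List.perm_middle)

lemma IsStandard.addable_erase_middle {u r : List (Label ι)} {b : Label ι}
    (hs : IsStandard (u ++ b :: r)) (hu : ∀ d ∈ u, d ≠ b ∧ ¬ Adjacent d b) :
    Addable (u ++ r) b := by
  induction u with
  | nil => exact hs.1
  | cons d u ih =>
    obtain ⟨hne, hadj⟩ := hu d List.mem_cons_self
    exact (addable_cons_iff hne hadj).2 (ih hs.2 fun e he => hu e (List.mem_cons_of_mem _ he))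

lemma countP_color_add_le (s : List (Label ι)) {j j' : ι} (hj : j ≠ j') :
    s.countP (·.1 = j) + s.countP (·.1 = j') ≤ s.length := by
  induction s with
  | nil => simp
  | cons b s ih =>
    simp only [List.countP_cons, List.length_cons, decide_eq_true_eq]
    split_ifs with h h'
    · exact absurd (h.symm.trans h') hj
    all_goals omega

lemma IsStandard.exists_content_bounds {s : List (Label ι)} (hs : IsStandard s) (j : ι) :
    ∃ lo hi : ℤ, lo ≤ 0 ∧ 0 ≤ hi ∧ hi ≤ s.countP (·.1 = j) ∧ -lo ≤ s.countP (·.1 = j) ∧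
      hi - lo ≤ s.countP (·.1 = j) + 1 ∧ ∀ c : ℤ, 0 < s.count (j, c) → lo < c ∧ c < hi := by
  induction s with
  | nil => exact ⟨0, 0, by simp⟩
  | cons b s ih =>
    obtain ⟨lo, hi, hlo, hhi, hhi_le, hlo_le, hdiff, hmem⟩ := ih hs.2
    obtain ⟨⟨hpred, hsucc⟩, -⟩ := hs
    obtain ⟨j', x⟩ := b
    simp only [List.countP_cons, count_cons_label, decide_eq_true_eq]
    by_cases hj : j' = j
    · subst hj
      have hmem_pred := hmem (x - 1)
      have hmem_succ := hmem (x + 1)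
      simp only at hpred hsucc
      refine ⟨min lo (x - 1), max hi (x + 1), by omega, by omega, ?_, ?_, ?_, fun c hc => ?_⟩
      any_goals simp only [if_true]; push_cast; split_ifs at * <;> omega
      rcases eq_or_ne x c with rfl | hxc
      · omega
      · have := hmem c (by simpa [hxc] using hc)
        omega
    · simp only [hj, if_false, false_and, add_zero]
      exact ⟨lo, hi, hlo, hhi, hhi_le, hlo_le, hdiff, hmem⟩

lemma IsStandard.exists_content_bounds_of_mem_or_addable {s : List (Label ι)} (hs : IsStandard s)
    (j : ι) : ∃ lo hi : ℤ, hi ≤ s.countP (·.1 = j) ∧ -lo ≤ s.countP (·.1 = j) ∧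
      hi - lo ≤ s.countP (·.1 = j) + 1 ∧
      ∀ c : ℤ, (j, c) ∈ s ∨ Addable s (j, c) → lo ≤ c ∧ c ≤ hi := by
  obtain ⟨lo, hi, hlo, hhi, hhi_le, hlo_le, hdiff, hmem⟩ := hs.exists_content_bounds j
  refine ⟨lo, hi, hhi_le, hlo_le, hdiff, fun c hc => ?_⟩
  rcases hc with hc | ⟨hpred, hsucc⟩
  · have := hmem c (List.count_pos_iff.2 hc)
    omega
  · have hmem_pred := hmem (c - 1)
    have hmem_succ := hmem (c + 1)
    simp only at hpred hsucc
    split_ifs at * <;> omega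

section Contents

variable {s : List (Label ι)} (hs : IsStandard s) {x y : Label ι}
include hs

lemma IsStandard.natAbs_content_le (hx : x ∈ s ∨ Addable s x) : x.2.natAbs ≤ s.length := by
  obtain ⟨lo, hi, hhi, hlo, -, hmem⟩ := hs.exists_content_bounds_of_mem_or_addable x.1
  have hx := hmem x.2 hx
  have := s.countP_le_length (p := (·.1 = x.1))
  omega

lemma IsStandard.natAbs_content_sub_le_of_eq (hx : x ∈ s ∨ Addable s x) (hy : y ∈ s ∨ Addable s y)
    (hxy : x.1 = y.1) : (x.2 - y.2).natAbs ≤ s.length + 1 := by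
  obtain ⟨lo, hi, -, -, hdiff, hmem⟩ := hs.exists_content_bounds_of_mem_or_addable x.1
  have hx := hmem x.2 hx
  have hy := hmem y.2 (by rw [hxy]; exact hy)
  have := s.countP_le_length (p := (·.1 = x.1))
  omega

lemma IsStandard.natAbs_content_sub_le_of_ne (hx : x ∈ s ∨ Addable s x) (hy : y ∈ s ∨ Addable s y)
    (hxy : x.1 ≠ y.1) : (x.2 - y.2).natAbs ≤ s.length := by
  obtain ⟨lo, hi, hhi, hlo, -, hmem⟩ := hs.exists_content_bounds_of_mem_or_addable x.1
  obtain ⟨lo', hi', hhi', hlo', -, hmem'⟩ := hs.exists_content_bounds_of_mem_or_addable y.1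
  have hx := hmem x.2 hx
  have hy := hmem' y.2 hy
  have := countP_color_add_le s hxy
  omega

end Contents

variable [Fintype ι]

/-- The finite set of labels addable to `s`; the bound on contents is automatic for standard `s`. -/
def addables (s : List (Label ι)) : Finset (Label ι) :=
  (Finset.univ ×ˢ Finset.Icc (-(s.length : ℤ)) s.length).filter (Addable s)

lemma IsStandard.mem_addables {s : List (Label ι)} (hs : IsStandard s) {x : Label ι} :
    x ∈ addables s ↔ Addable s x := by
  simp only [addables, Finset.mem_filter, Finset.mem_product, Finset.mem_univ, true_and,
    Finset.mem_Icc, and_iff_right_iff_imp]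
  intro hx
  have := hs.natAbs_content_le (Or.inr hx)
  omega

variable (ι) in
/-- The finite set of standard multitableaux with `i` boxes. -/
def standards : ℕ → Finset (List (Label ι))
  | 0 => {[]}
  | i + 1 => (standards i).biUnion fun s => (addables s).image (· :: s)

lemma mem_standards {i : ℕ} {t : List (Label ι)} :
    t ∈ standards ι i ↔ IsStandard t ∧ t.length = i := by
  induction i generalizing t with
  | zero =>
    simp only [standards, Finset.mem_singleton, List.length_eq_zero_iff]
    exact ⟨fun h => ⟨h ▸ trivial, h⟩, fun h => h.2⟩
  | succ i ih =>
    simp only [standards, Finset.mem_biUnion, Finset.mem_image, ih]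
    constructor
    · rintro ⟨s, ⟨hs, rfl⟩, d, hd, rfl⟩
      exact ⟨⟨hs.mem_addables.1 hd, hs⟩, rfl⟩
    · rintro ⟨ht, hlen⟩
      obtain ⟨d, s, rfl⟩ := List.exists_cons_of_length_eq_add_one hlen
      exact ⟨s, ⟨ht.2, by simpa using hlen⟩, d, ht.2.mem_addables.2 ht.1, rfl⟩

end Tableaux

end CyclotomicHecke

namespace CyclotomicHecke

/-- A realisation of the relations of `H_n(v; q)` in an algebra `A`, with `q` not a root of unity
of order at most `n` and the parameters `v j` separated by powers of `q`. At most one `v j` is zero;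
`z` is the projection onto the corresponding eigenspace of `a`, and is `0` if there is none. -/
structure SeparatedDatum (K A ι : Type*) [Field K] [Ring A] [Algebra K A] [Fintype ι] (n : ℕ) where
  q : K
  v : ι → K
  a : A
  T : ℕ → A
  z : A
  relations : HeckeRelations q n a T
  q_ne_zero : q ≠ 0
  n_pos : 1 ≤ n
  q_pow_ne_one : ∀ d : ℕ, 1 ≤ d → d ≤ n → q ^ d ≠ 1
  zpow_mul_ne : ∀ i : ℤ, i.natAbs < n → ∀ j j', j ≠ j' → q ^ i * v j ≠ v j'
  z_mul_a : z * a = 0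
  a_mul_z : a * z = 0
  z_mem : z ∈ Algebra.adjoin K {a}
  exists_eigen_decomposition : ∀ x : A, ∃ r : ι → A, ∑ j, r j = x ∧
    ∀ j, a * r j = v j • r j ∧ z * r j = (if v j = 0 then (1 : K) else 0) • r j

namespace SeparatedDatum

variable {K A ι : Type*} [Field K] [Ring A] [Algebra K A] [Fintype ι] {n : ℕ}
  (D : SeparatedDatum K A ι n)

/-- The Murphy elements of the datum. -/
abbrev L (i : ℕ) : A := murphy D.q D.a D.T i

/-- The dual Murphy elements of the datum. -/
abbrev Z (i : ℕ) : A := dualMurphy D.q D.z D.T i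

/-- The subalgebra generated by the first `i` generators of the datum. -/
abbrev level (i : ℕ) : Subalgebra K A := parabolic K D.a D.T i

/-- The eigenvalue of a Murphy element attached to a label. -/
def residue (b : Label ι) : K := D.v b.1 * D.q ^ b.2

/-- The eigenvalue of a dual Murphy element attached to a label. It separates the contents in the
component with `v j = 0`, where all residues vanish. -/
def coresidue (b : Label ι) : K := if D.v b.1 = 0 then D.q ^ (-b.2) else 0

lemma L_mem {i l : ℕ} (hil : i < l) : D.L i ∈ D.level l := murphy_mem_parabolic hil

lemma Z_mem {i l : ℕ} (hil : i < l) : D.Z i ∈ D.level l := dualMurphy_mem_parabolic D.z_mem hil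

lemma T_mem {i l : ℕ} (hil : i + 1 < l) : D.T i ∈ D.level l := mem_parabolic_gen hil

lemma commute_L {i : ℕ} (hi : i < n) {h : A} (hh : h ∈ D.level i) : Commute (D.L i) h :=
  D.relations.commute_murphy_parabolic hi hh

lemma commute_Z {i : ℕ} (hi : i < n) {h : A} (hh : h ∈ D.level i) : Commute (D.Z i) h :=
  D.relations.commute_dualMurphy_parabolic D.q_ne_zero D.z_mem D.z_mul_a D.a_mul_z hi hh

lemma commute_L_T {i l : ℕ} (hil : i < l) (hl : l + 1 < n) : Commute (D.L i) (D.T l) :=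
  D.relations.commute_murphy_gen_of_lt hil hl

lemma commute_Z_T {i l : ℕ} (hil : i < l) (hl : l + 1 < n) : Commute (D.Z i) (D.T l) :=
  D.relations.commute_dualMurphy_gen_of_lt D.q_ne_zero D.z_mem D.z_mul_a D.a_mul_z hil hl

lemma T_mul_T_mul {l : ℕ} (hl : l + 1 < n) (x : A) :
    D.T l * (D.T l * x) = (D.q - 1) • (D.T l * x) + D.q • x := by
  rw [← mul_assoc, D.relations.quad l hl, add_mul, smul_mul_assoc, smul_mul_assoc, one_mul]

lemma q_zpow_ne_one {d : ℤ} (hd : d ≠ 0) (hdn : d.natAbs ≤ n) : D.q ^ d ≠ 1 := by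
  intro h
  refine D.q_pow_ne_one d.natAbs (by omega) hdn ?_
  rcases Int.natAbs_eq d with hd' | hd'
  · rwa [hd', zpow_natCast] at h
  · rwa [hd', zpow_neg, zpow_natCast, inv_eq_one] at h

lemma q_ne_one : D.q ≠ 1 := by
  simpa using D.q_pow_ne_one 1 le_rfl D.n_pos

lemma one_add_q_ne_zero (hn : 2 ≤ n) : 1 + D.q ≠ 0 := by
  intro h
  apply D.q_pow_ne_one 2 (by norm_num) hn
  linear_combination (D.q - 1) * h

lemma residue_add_one (j : ι) (c : ℤ) : D.residue (j, c + 1) = D.q * D.residue (j, c) := by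
  simp only [residue, zpow_add_one₀ D.q_ne_zero]
  ring

lemma q_mul_coresidue_add_one (j : ι) (c : ℤ) :
    D.q * D.coresidue (j, c + 1) = D.coresidue (j, c) := by
  simp only [coresidue]
  split_ifs
  · rw [neg_add, zpow_add₀ D.q_ne_zero, zpow_neg_one, mul_comm, mul_assoc,
      inv_mul_cancel₀ D.q_ne_zero, mul_one]
  · rw [mul_zero]

lemma residue_ne_zero_or (b : Label ι) : D.residue b ≠ 0 ∨ D.coresidue b ≠ 0 := by
  simp only [residue, coresidue]
  by_cases hv : D.v b.1 = 0
  · exact Or.inr (by simpa only [hv, if_true] using zpow_ne_zero _ D.q_ne_zero)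
  · exact Or.inl (mul_ne_zero hv (zpow_ne_zero _ D.q_ne_zero))

lemma eq_of_residue_eq {x y : Label ι} (hres : D.residue x = D.residue y)
    (hcores : D.coresidue x = D.coresidue y) (hsame : x.1 = y.1 → (x.2 - y.2).natAbs ≤ n)
    (hdiff : x.1 ≠ y.1 → (x.2 - y.2).natAbs < n) : x = y := by
  obtain ⟨j, c⟩ := x
  obtain ⟨j', c'⟩ := y
  simp only [residue, coresidue] at *
  have hq := zpow_ne_zero c' D.q_ne_zero
  by_cases hj : j = j'
  · subst hj
    by_contra hne
    refine D.q_zpow_ne_one (d := c - c') (fun h => hne (by rw [sub_eq_zero.1 h])) (hsame rfl) ?_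
    rw [zpow_sub₀ D.q_ne_zero, div_eq_one_iff_eq hq]
    by_cases hv : D.v j = 0
    · simpa only [hv, if_true, zpow_neg, inv_inj] using hcores
    · exact mul_left_cancel₀ hv hres
  · refine absurd ?_ (D.zpow_mul_ne (c - c') (hdiff hj) j j' hj)
    rw [zpow_sub₀ D.q_ne_zero, div_mul_eq_mul_div, mul_comm, hres, mul_div_assoc, div_self hq,
      mul_one]

lemma residue_ne_or_of_adjacent {x y : Label ι} (h : Adjacent x y) :
    D.residue x ≠ D.residue y ∨ D.coresidue x ≠ D.coresidue y := by
  by_contra! hcon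
  have hn := D.n_pos
  obtain ⟨hcol, hcont⟩ := h
  have hxy := D.eq_of_residue_eq hcon.1 hcon.2 (fun _ => by omega) (fun hne => absurd hcol hne)
  subst hxy
  omega

lemma residue_ne_or [DecidableEq ι] {s : List (Label ι)} (hs : IsStandard s)
    (hlen : s.length + 1 ≤ n) {x y : Label ι} (hx : x ∈ s ∨ Addable s x)
    (hy : y ∈ s ∨ Addable s y) (hne : x ≠ y) :
    D.residue x ≠ D.residue y ∨ D.coresidue x ≠ D.coresidue y := by
  by_contra! hcon
  refine hne (D.eq_of_residue_eq hcon.1 hcon.2 (fun h => ?_) (fun h => ?_))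
  · have := hs.natAbs_content_sub_le_of_eq hx hy h
    omega
  · have := hs.natAbs_content_sub_le_of_ne hx hy h
    omega

/-- `α` is the coefficient for which `T - α` exchanges the labels `b` and `c` of a weight; the two
equations determine it from the Murphy and from the dual Murphy elements. -/
def IsSwapCoeff (b c : Label ι) (α : K) : Prop :=
  α * (D.residue b - D.residue c) = (D.q - 1) * D.residue b ∧
    α * (D.coresidue c - D.coresidue b) = (D.q - 1) * D.coresidue c

lemma exists_isSwapCoeff {b c : Label ι}
    (h : D.residue b ≠ D.residue c ∨ D.coresidue b ≠ D.coresidue c) :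
    ∃ α, D.IsSwapCoeff b c α := by
  have hres := sub_ne_zero (a := D.residue b) (b := D.residue c)
  have hcores := (sub_ne_zero (a := D.coresidue c) (b := D.coresidue b)).trans ne_comm
  by_cases hb : D.v b.1 = 0 <;> by_cases hc : D.v c.1 = 0 <;>
    simp only [IsSwapCoeff, residue, coresidue, hb, hc, if_true, if_false, zero_mul, mul_zero,
      sub_zero, zero_sub, ne_eq, not_true, false_or, or_false, and_true, true_and] at *
  · exact ⟨_, div_mul_cancel₀ _ (hcores.2 h)⟩
  · exact ⟨0, by simp⟩
  · exact ⟨D.q - 1, by simp⟩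
  · exact ⟨_, div_mul_cancel₀ _ (hres.2 h)⟩

section SwapCoeff

variable {b c : Label ι} {j j' : ι} {d d' : ℤ} {α : K} {D}

lemma IsSwapCoeff.residue_eq_of_eq_q (h : D.IsSwapCoeff (j, d) (j', d') D.q) :
    D.residue (j, d) = D.residue (j', d' + 1) ∧
      D.coresidue (j, d) = D.coresidue (j', d' + 1) := by
  refine ⟨?_, mul_left_cancel₀ D.q_ne_zero ?_⟩
  · rw [residue_add_one]
    linear_combination h.1
  · rw [q_mul_coresidue_add_one]
    linear_combination -h.2

lemma IsSwapCoeff.residue_eq_of_eq_neg_one (h : D.IsSwapCoeff (j, d) (j', d') (-1)) :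
    D.residue (j', d') = D.residue (j, d + 1) ∧
      D.coresidue (j', d') = D.coresidue (j, d + 1) := by
  refine ⟨?_, mul_left_cancel₀ D.q_ne_zero ?_⟩
  · rw [residue_add_one]
    linear_combination h.1
  · rw [q_mul_coresidue_add_one]
    linear_combination -h.2

lemma IsSwapCoeff.mul_ne_zero [DecidableEq ι] (h : D.IsSwapCoeff b c α) {s : List (Label ι)}
    (hs : IsStandard s) (hlen : s.length + 2 ≤ n) (hb : b ∈ s ∨ Addable s b)
    (hc : c ∈ s ∨ Addable s c) (hadj : ¬ Adjacent b c) : (D.q - α) * (1 + α) ≠ 0 := by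
  have hsame := hs.natAbs_content_sub_le_of_eq hb hc
  have hdiff := hs.natAbs_content_sub_le_of_ne hb hc
  obtain ⟨j, d⟩ := b
  obtain ⟨j', d'⟩ := c
  simp only at hsame hdiff
  refine mul_ne_zero_iff.2 ⟨sub_ne_zero.2 ?_, fun hα => ?_⟩
  · rintro rfl
    obtain ⟨hres, hcores⟩ := h.residue_eq_of_eq_q
    have heq := D.eq_of_residue_eq hres hcores (fun e => by have := hsame e; simp only; omega)
      (fun e => by have := hdiff e; simp only; omega)
    rw [Prod.mk.injEq] at heq
    exact hadj ⟨heq.1, Or.inl heq.2⟩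
  · obtain rfl : α = -1 := by linear_combination hα
    obtain ⟨hres, hcores⟩ := h.residue_eq_of_eq_neg_one
    have heq := D.eq_of_residue_eq hres hcores
      (fun e => by have := hsame e.symm; simp only; omega)
      (fun e => by have := hdiff (Ne.symm e); simp only; omega)
    rw [Prod.mk.injEq] at heq
    exact hadj ⟨heq.1.symm, Or.inr heq.2⟩

lemma IsSwapCoeff.eq_q (h : D.IsSwapCoeff (j, d + 1) (j, d) α) : α = D.q := by
  obtain ⟨hres, hcores⟩ := h
  have hq : D.q - 1 ≠ 0 := sub_ne_zero.2 D.q_ne_one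
  have hshift := D.q_mul_coresidue_add_one j d
  rw [residue_add_one] at hres
  refine sub_eq_zero.1 ((D.residue_ne_zero_or (j, d)).elim (fun hne => ?_) fun hne => ?_) <;>
    refine (mul_eq_zero.1 ?_).resolve_left (_root_.mul_ne_zero hq hne)
  · linear_combination hres
  · linear_combination D.q * hcores + α * hshift

lemma IsSwapCoeff.eq_neg_one (h : D.IsSwapCoeff (j, d) (j, d + 1) α) : α = -1 := by
  obtain ⟨hres, hcores⟩ := h
  have hq : D.q - 1 ≠ 0 := sub_ne_zero.2 D.q_ne_one
  have hshift := D.q_mul_coresidue_add_one j d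
  rw [residue_add_one] at hres
  refine eq_neg_of_add_eq_zero_left
    ((D.residue_ne_zero_or (j, d)).elim (fun hne => ?_) fun hne => ?_) <;>
    refine (mul_eq_zero.1 ?_).resolve_left (_root_.mul_ne_zero hq hne)
  · linear_combination -hres
  · linear_combination -D.q * hcores + (α - D.q + 1) * hshift

end SwapCoeff

end SeparatedDatum

end CyclotomicHecke

/-! ### Weight spaces -/

namespace CyclotomicHecke.SeparatedDatum

variable {K A ι : Type*} [Field K] [Ring A] [Algebra K A] [Fintype ι] {n : ℕ}
  (D : SeparatedDatum K A ι n)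

/-- The simultaneous eigenspace of the Murphy and dual Murphy elements for the left regular
representation; the list is read from the last box, so `D.weightSpace (b :: s)` prescribes the
eigenvalues of the elements of index `s.length` by `b`. -/
def weightSpace : List (Label ι) → Submodule K A
  | [] => ⊤
  | b :: s => weightSpace s ⊓
      (Module.End.eigenspace (LinearMap.mulLeft K (D.L s.length)) (D.residue b) ⊓
        Module.End.eigenspace (LinearMap.mulLeft K (D.Z s.length)) (D.coresidue b))

variable {D} {s t u r : List (Label ι)} {b c d : Label ι} {h x : A} {α : K} {i j l : ℕ}

lemma mem_weightSpace_cons : x ∈ D.weightSpace (b :: s) ↔ x ∈ D.weightSpace s ∧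
    D.L s.length * x = D.residue b • x ∧ D.Z s.length * x = D.coresidue b • x := by
  simp only [weightSpace, Submodule.mem_inf, Module.End.mem_eigenspace_iff,
    LinearMap.mulLeft_apply]

lemma weightSpace_cons_le : D.weightSpace (b :: s) ≤ D.weightSpace s := inf_le_left

lemma L_mul_of_mem (hs : s.length = l + 1) (hx : x ∈ D.weightSpace s) :
    D.L l * x = (s.head?.map D.residue).getD 0 • x := by
  obtain _ | ⟨b, s⟩ := s
  · cases hs
  · exact Nat.succ.inj hs ▸ (mem_weightSpace_cons.1 hx).2.1

lemma Z_mul_of_mem (hs : s.length = l + 1) (hx : x ∈ D.weightSpace s) :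
    D.Z l * x = (s.head?.map D.coresidue).getD 0 • x := by
  obtain _ | ⟨b, s⟩ := s
  · cases hs
  · exact Nat.succ.inj hs ▸ (mem_weightSpace_cons.1 hx).2.2

lemma mul_mem_weightSpace_of_commute (hL : ∀ i < s.length, Commute (D.L i) h)
    (hZ : ∀ i < s.length, Commute (D.Z i) h) (hx : x ∈ D.weightSpace s) :
    h * x ∈ D.weightSpace s := by
  induction s with
  | nil => trivial
  | cons b s ih =>
    rw [mem_weightSpace_cons] at hx ⊢
    rw [List.length_cons] at hL hZ
    refine ⟨ih (fun i hi => hL i (by omega)) (fun i hi => hZ i (by omega)) hx.1, ?_, ?_⟩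
    · rw [(hL _ (by omega)).left_comm, hx.2.1, mul_smul_comm]
    · rw [(hZ _ (by omega)).left_comm, hx.2.2, mul_smul_comm]

lemma T_mul_mem_weightSpace (hl : s.length ≤ l) (hln : l + 1 < n) (hx : x ∈ D.weightSpace s) :
    D.T l * x ∈ D.weightSpace s :=
  mul_mem_weightSpace_of_commute (fun _ hi => D.commute_L_T (by omega) hln)
    (fun _ hi => D.commute_Z_T (by omega) hln) hx

lemma mul_mem_weightSpace_cons (hts : t.length = s.length) (ht : t.length < n)
    (hh : h ∈ D.level t.length) (hx : x ∈ D.weightSpace (b :: t)) (hhx : h * x ∈ D.weightSpace s) :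
    h * x ∈ D.weightSpace (b :: s) := by
  rw [mem_weightSpace_cons] at hx ⊢
  rw [← hts]
  refine ⟨hhx, ?_, ?_⟩
  · rw [(D.commute_L ht hh).left_comm, hx.2.1, mul_smul_comm]
  · rw [(D.commute_Z ht hh).left_comm, hx.2.2, mul_smul_comm]

section MurphyRelations

variable (D)

lemma L_mul_T_mul (hl : l + 1 < n) (x : A) :
    D.L l * (D.T l * x) = D.T l * (D.L (l + 1) * x) - (D.q - 1) • (D.L (l + 1) * x) := by
  rw [← mul_assoc, D.relations.murphy_mul_gen D.q_ne_zero hl, sub_mul, mul_assoc, smul_mul_assoc]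

lemma L_succ_mul_T_mul (hl : l + 1 < n) (x : A) :
    D.L (l + 1) * (D.T l * x) = D.T l * (D.L l * x) + (D.q - 1) • (D.L (l + 1) * x) := by
  rw [← mul_assoc, D.relations.murphy_succ_mul_gen D.q_ne_zero hl, add_mul, mul_assoc,
    smul_mul_assoc]

lemma Z_mul_T_mul (hl : l + 1 < n) (x : A) :
    D.Z l * (D.T l * x) = D.T l * (D.Z (l + 1) * x) + (D.q - 1) • (D.Z l * x) := by
  rw [← mul_assoc, D.relations.dualMurphy_mul_gen D.q_ne_zero hl, add_mul, mul_assoc,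
    smul_mul_assoc]

lemma Z_succ_mul_T_mul (hl : l + 1 < n) (x : A) :
    D.Z (l + 1) * (D.T l * x) = D.T l * (D.Z l * x) - (D.q - 1) • (D.Z l * x) := by
  rw [← mul_assoc, D.relations.dualMurphy_succ_mul_gen D.q_ne_zero hl, sub_mul, mul_assoc,
    smul_mul_assoc]

lemma T_sub_mul_T_sub_mul (hl : l + 1 < n) (α : K) (x : A) :
    (D.T l - (D.q - 1 - α) • 1) * ((D.T l - α • 1) * x) = ((D.q - α) * (1 + α)) • x := by
  simp only [sub_mul, smul_mul_assoc, one_mul, mul_sub, mul_smul_comm, D.T_mul_T_mul hl]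
  module

end MurphyRelations

lemma T_sub_mul_mem_weightSpace (hα : D.IsSwapCoeff b c α) (hl : s.length + 1 < n)
    (hx : x ∈ D.weightSpace (b :: c :: s)) :
    (D.T s.length - α • 1) * x ∈ D.weightSpace (c :: b :: s) := by
  rw [mem_weightSpace_cons, mem_weightSpace_cons] at hx
  simp only [List.length_cons] at hx
  obtain ⟨⟨hs, hLc, hZc⟩, hLb, hZb⟩ := hx
  have hres := congrArg (· • x) hα.1
  have hcores := congrArg (· • x) hα.2
  rw [mem_weightSpace_cons, mem_weightSpace_cons]
  simp only [List.length_cons, sub_mul, smul_mul_assoc, one_mul, mul_sub, mul_smul_comm]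
  refine ⟨⟨sub_mem (T_mul_mem_weightSpace le_rfl hl hs) (Submodule.smul_mem _ _ hs), ?_, ?_⟩,
    ?_, ?_⟩
  · rw [D.L_mul_T_mul hl, hLb, hLc, mul_smul_comm]
    linear_combination (norm := module) hres
  · rw [D.Z_mul_T_mul hl, hZb, hZc, mul_smul_comm]
    linear_combination (norm := module) -hcores
  · rw [D.L_succ_mul_T_mul hl, hLb, hLc, mul_smul_comm]
    linear_combination (norm := module) -hres
  · rw [D.Z_succ_mul_T_mul hl, hZb, hZc, mul_smul_comm]
    linear_combination (norm := module) hcores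

lemma IsSwapCoeff.T_mul_eq_smul {α : K} (hα : D.IsSwapCoeff b c α) (hl : s.length + 1 < n)
    (hbot : D.weightSpace (c :: b :: s) = ⊥) (hx : x ∈ D.weightSpace (b :: c :: s)) :
    D.T s.length * x = α • x := by
  have h := T_sub_mul_mem_weightSpace hα hl hx
  rwa [hbot, Submodule.mem_bot, sub_mul, smul_mul_assoc, one_mul, sub_eq_zero] at h

variable (D) in
/-- Some element of the level `t.length` maps `D.weightSpace t` into `D.weightSpace s` and is
undone by another one. -/
def Linked (t s : List (Label ι)) : Prop :=
  t.length = s.length ∧ ∃ g ∈ D.level t.length, ∃ g' ∈ D.level t.length,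
    ∀ x ∈ D.weightSpace t, g * x ∈ D.weightSpace s ∧ g' * (g * x) = x

lemma Linked.refl (t : List (Label ι)) : D.Linked t t :=
  ⟨rfl, 1, one_mem _, 1, one_mem _, fun x hx => by simpa only [one_mul, and_true] using hx⟩

lemma Linked.trans (h₁ : D.Linked t s) (h₂ : D.Linked s r) : D.Linked t r := by
  obtain ⟨hts, g₁, hg₁, g₁', hg₁', hx₁⟩ := h₁
  obtain ⟨hsr, g₂, hg₂, g₂', hg₂', hx₂⟩ := h₂
  rw [← hts] at hsr hg₂ hg₂'
  refine ⟨hsr, g₂ * g₁, mul_mem hg₂ hg₁, g₁' * g₂', mul_mem hg₁' hg₂', fun x hx => ?_⟩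
  obtain ⟨hmem₁, hinv₁⟩ := hx₁ x hx
  obtain ⟨hmem₂, hinv₂⟩ := hx₂ _ hmem₁
  exact ⟨by rwa [mul_assoc], by rw [mul_assoc g₂, mul_assoc g₁', hinv₂, hinv₁]⟩

lemma Linked.cons (h : D.Linked t s) (ht : t.length < n) (b : Label ι) :
    D.Linked (b :: t) (b :: s) := by
  obtain ⟨hts, g, hg, g', hg', hx⟩ := h
  have hmono : D.level t.length ≤ D.level (b :: t).length := parabolic_mono (by simp)
  refine ⟨by simpa using hts, g, hmono hg, g', hmono hg', fun x hxt => ?_⟩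
  obtain ⟨hmem, hinv⟩ := hx x (weightSpace_cons_le hxt)
  exact ⟨mul_mem_weightSpace_cons hts ht hg hxt hmem, hinv⟩

lemma Linked.swap (hα : D.IsSwapCoeff b c α) (hα₀ : (D.q - α) * (1 + α) ≠ 0)
    (hl : s.length + 1 < n) : D.Linked (b :: c :: s) (c :: b :: s) := by
  have hmem (β : K) : D.T s.length - β • 1 ∈ D.level (s.length + 2) :=
    sub_mem (D.T_mem (by omega)) (Subalgebra.smul_mem _ (one_mem _) β)
  refine ⟨rfl, _, hmem α, _, Subalgebra.smul_mem _ (hmem (D.q - 1 - α)) ((D.q - α) * (1 + α))⁻¹,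
    fun x hx => ⟨T_sub_mul_mem_weightSpace hα hl hx, ?_⟩⟩
  rw [smul_mul_assoc, D.T_sub_mul_T_sub_mul hl, inv_smul_smul₀ hα₀]

lemma Linked.move_to_front [DecidableEq ι] (hs : IsStandard (u ++ b :: r))
    (hl : (u ++ b :: r).length ≤ n) (hu : ∀ d ∈ u, d ≠ b ∧ ¬ Adjacent d b) :
    D.Linked (u ++ b :: r) (b :: (u ++ r)) := by
  induction u with
  | nil => exact Linked.refl _
  | cons d u ih =>
    obtain ⟨hne, hadj⟩ := hu d List.mem_cons_self
    have hu' : ∀ e ∈ u, e ≠ b ∧ ¬ Adjacent e b := fun e he => hu e (List.mem_cons_of_mem _ he)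
    simp only [List.cons_append, List.length_cons, List.length_append] at hs hl ih ⊢
    have hur : IsStandard (u ++ r) := hs.2.erase_middle hu'
    have hb : Addable (u ++ r) b := hs.2.addable_erase_middle hu'
    have hd : Addable (u ++ r) d := (addable_cons_iff hne.symm fun h => hadj h.symm).1
      (hs.1.perm List.perm_middle)
    have hlen : (u ++ r).length + 1 < n := by
      rw [List.length_append]
      omega
    obtain ⟨α, hα⟩ := D.exists_isSwapCoeff
      (D.residue_ne_or hur hlen.le (Or.inr hd) (Or.inr hb) hne)
    have hα₀ := hα.mul_ne_zero hur hlen (Or.inr hd) (Or.inr hb) hadj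
    refine ((ih hs.2 (by omega) hu').cons ?_ d).trans (Linked.swap hα hα₀ hlen)
    simp only [List.length_append, List.length_cons]
    omega

lemma Linked.eq_bot (h : D.Linked t s) (hs : D.weightSpace s = ⊥) : D.weightSpace t = ⊥ := by
  obtain ⟨-, g, -, g', -, hx⟩ := h
  refine (Submodule.eq_bot_iff _).2 fun x hxt => ?_
  obtain ⟨hmem, hinv⟩ := hx x hxt
  rw [hs, Submodule.mem_bot] at hmem
  rw [← hinv, hmem, mul_zero]

end CyclotomicHecke.SeparatedDatum

namespace CyclotomicHecke.SeparatedDatum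

variable {K A ι : Type*} [Field K] [Ring A] [Algebra K A] [Fintype ι] [DecidableEq ι] {n : ℕ}
  {D : SeparatedDatum K A ι n} {s t u : List (Label ι)} {b c d : Label ι} {x : A} {i l : ℕ}

lemma exists_separator (ht : IsStandard t) (hu : IsStandard u) (hlen : t.length = u.length)
    (htn : t.length ≤ n) (hne : t ≠ u) : ∃ X ∈ D.level t.length, ∃ f : List (Label ι) → K,
      (∀ w, w.length = t.length → ∀ x ∈ D.weightSpace w, X * x = f w • x) ∧ f t ≠ f u := by
  induction t generalizing u with
  | nil => exact absurd (List.length_eq_zero_iff.1 hlen.symm).symm hne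
  | cons b t ih =>
    obtain _ | ⟨c, u⟩ := u
    · cases hlen
    rw [List.length_cons, List.length_cons, Nat.add_right_cancel_iff] at hlen
    rw [List.length_cons] at htn ⊢
    by_cases htu : t = u
    · subst htu
      have hbc : b ≠ c := fun h => hne (by rw [h])
      rcases D.residue_ne_or ht.2 htn (Or.inr ht.1) (Or.inr hu.1) hbc with hres | hcores
      · exact ⟨D.L t.length, D.L_mem (by omega), _, fun w hw x hx => L_mul_of_mem hw hx, hres⟩
      · exact ⟨D.Z t.length, D.Z_mem (by omega), _, fun w hw x hx => Z_mul_of_mem hw hx, hcores⟩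
    · obtain ⟨X, hX, f, hf, hne⟩ := ih ht.2 hu.2 hlen (by omega) htu
      refine ⟨X, parabolic_mono (by omega) hX, fun w => f w.tail, ?_, hne⟩
      rintro (_ | ⟨e, w⟩) hw x hx
      · cases hw
      · exact hf w (by simpa using hw) x (weightSpace_cons_le hx)

variable (D) in
lemma exists_separator_finset (ht : IsStandard t) (htn : t.length ≤ n)
    (F : Finset (List (Label ι))) (hF : F ⊆ standards ι t.length) (htF : t ∉ F) :
    ∃ p ∈ D.level t.length, ∃ f : List (Label ι) → K,
      (∀ w, w.length = t.length → ∀ x ∈ D.weightSpace w, p * x = f w • x) ∧ f t = 1 ∧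
        ∀ u ∈ F, f u = 0 := by
  induction F using Finset.induction_on with
  | empty => exact ⟨1, one_mem _, fun _ => 1, by simp⟩
  | insert u F _ ih =>
    obtain ⟨hu, hF⟩ := Finset.insert_subset_iff.1 hF
    obtain ⟨hu, hul⟩ := mem_standards.1 hu
    rw [Finset.mem_insert, not_or] at htF
    obtain ⟨p, hp, f, hf, hft, hfF⟩ := ih hF htF.2
    obtain ⟨X, hX, g, hg, hgtu⟩ := exists_separator (D := D) ht hu hul.symm htn htF.1
    refine ⟨(g t - g u)⁻¹ • ((X - g u • 1) * p), Subalgebra.smul_mem _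
      (mul_mem (sub_mem hX (Subalgebra.smul_mem _ (one_mem _) _)) hp) _,
      fun w => (g t - g u)⁻¹ * ((g w - g u) * f w), fun w hw x hx => ?_, ?_, ?_⟩
    · simp only [smul_mul_assoc, sub_mul, mul_assoc, one_mul, hf w hw x hx, mul_smul_comm,
        hg w hw x hx]
      module
    · simp only [hft, mul_one, inv_mul_cancel₀ (sub_ne_zero.2 hgtu)]
    · rintro w hw
      rcases Finset.mem_insert.1 hw with rfl | hw
      · simp
      · simp [hfF w hw]

variable (D) in
lemma exists_weightProj (ht : IsStandard t) (htn : t.length ≤ n) : ∃ p ∈ D.level t.length,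
    ∀ u ∈ standards ι t.length, ∀ x ∈ D.weightSpace u, p * x = if u = t then x else 0 := by
  obtain ⟨p, hp, f, hf, hft, hfu⟩ := D.exists_separator_finset ht htn _
    (Finset.erase_subset t _) (Finset.notMem_erase t (standards ι t.length))
  refine ⟨p, hp, fun u hu x hx => ?_⟩
  rw [hf u (mem_standards.1 hu).2 x hx]
  split_ifs with hut
  · rw [hut, hft, one_smul]
  · rw [hfu u (Finset.mem_erase.2 ⟨hut, hu⟩), zero_smul]

variable (D) in
/-- The projection onto the weight space of a standard tableau along the other ones, realised by
an element of the level `t.length`. -/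
def weightProj (t : List (Label ι)) : A :=
  if ht : IsStandard t ∧ t.length ≤ n then (D.exists_weightProj ht.1 ht.2).choose else 0

lemma weightProj_mem (t : List (Label ι)) : D.weightProj t ∈ D.level t.length := by
  rw [weightProj]
  split_ifs with ht
  · exact (D.exists_weightProj ht.1 ht.2).choose_spec.1
  · exact zero_mem _

lemma weightProj_mul (ht : t ∈ standards ι i) (hi : i ≤ n) (hu : u ∈ standards ι i)
    (hx : x ∈ D.weightSpace u) : D.weightProj t * x = if u = t then x else 0 := by
  obtain ⟨hst, rfl⟩ := mem_standards.1 ht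
  rw [weightProj, dif_pos ⟨hst, hi⟩]
  exact (D.exists_weightProj hst hi).choose_spec.2 u hu x hx

variable (D) in
/-- The algebra is the sum of the weight spaces of the standard tableaux with `i` boxes. -/
def IsComplete (i : ℕ) : Prop := ⨆ t ∈ standards ι i, D.weightSpace t = ⊤

namespace IsComplete

variable (hc : D.IsComplete i)
include hc

lemma ext {g g' : A} (h : ∀ t ∈ standards ι i, ∀ x ∈ D.weightSpace t, g * x = g' * x) :
    g = g' := by
  have hle : ⨆ t ∈ standards ι i, D.weightSpace t ≤
      LinearMap.eqLocus (LinearMap.mulLeft K g) (LinearMap.mulLeft K g') :=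
    iSup₂_le fun t ht x hx => h t ht x hx
  simpa using hle (hc ▸ Submodule.mem_top : (1 : A) ∈ _)

lemma sum_weightProj (hi : i ≤ n) : ∑ t ∈ standards ι i, D.weightProj t = 1 := by
  refine hc.ext fun u hu x hx => ?_
  rw [Finset.sum_mul, Finset.sum_congr rfl fun t ht => weightProj_mul ht hi hu hx,
    Finset.sum_ite_eq, if_pos hu, one_mul]

lemma weightProj_mul_mem (hi : i ≤ n) (ht : t ∈ standards ι i) (x : A) :
    D.weightProj t * x ∈ D.weightSpace t := by
  have hle : ⨆ u ∈ standards ι i, D.weightSpace u ≤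
      (D.weightSpace t).comap (LinearMap.mulLeft K (D.weightProj t)) := by
    refine iSup₂_le fun u hu y hy => ?_
    rw [Submodule.mem_comap, LinearMap.mulLeft_apply, weightProj_mul ht hi hu hy]
    split_ifs with hut
    · exact hut ▸ hy
    · exact zero_mem _
  exact hle (hc ▸ Submodule.mem_top)

lemma weightProj_mem_weightSpace (hi : i ≤ n) (ht : t ∈ standards ι i) :
    D.weightProj t ∈ D.weightSpace t := by
  simpa using hc.weightProj_mul_mem hi ht 1

lemma eq_zero_of_weightProj_mul_eq_zero (hi : i ≤ n)
    (hx : ∀ t ∈ standards ι i, D.weightProj t * x = 0) : x = 0 := by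
  rw [← one_mul x, ← hc.sum_weightProj hi, Finset.sum_mul, Finset.sum_eq_zero hx]

lemma weightProj_mul_mul (hi : i ≤ n) {X : A} {f : List (Label ι) → K}
    (hX : ∀ t ∈ standards ι i, ∀ x ∈ D.weightSpace t, X * x = f t • x) (ht : t ∈ standards ι i)
    (x : A) : D.weightProj t * (X * x) = f t • (D.weightProj t * x) := by
  have hcomm : D.weightProj t * X = X * D.weightProj t := hc.ext fun u hu x hx => by
    rw [mul_assoc, mul_assoc, hX u hu x hx, mul_smul_comm, weightProj_mul ht hi hu hx]
    split_ifs
    · rw [hX u hu x hx]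
    · rw [smul_zero, mul_zero]
  rw [← mul_assoc, hcomm, mul_assoc, hX t ht _ (hc.weightProj_mul_mem hi ht x)]

lemma weightProj_mul_eq_zero (hi : i ≤ n) {X : A} {f : List (Label ι) → K}
    (hX : ∀ t ∈ standards ι i, ∀ x ∈ D.weightSpace t, X * x = f t • x) (ht : t ∈ standards ι i)
    {r : K} (hx : X * x = r • x) (hr : f t ≠ r) : D.weightProj t * x = 0 := by
  have hp := hc.weightProj_mul_mul hi hX ht x
  rw [hx, mul_smul_comm] at hp
  exact (smul_eq_zero.1 (sub_eq_zero.2 hp.symm ▸ sub_smul (f t) r _)).resolve_left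
    (sub_ne_zero.2 hr)

lemma eq_zero_of_jordan (hi : i ≤ n) {X : A} {f : List (Label ι) → K}
    (hX : ∀ t ∈ standards ι i, ∀ x ∈ D.weightSpace t, X * x = f t • x) {y w : A} {r : K}
    (hy : X * y = r • y + w) (hw : X * w = r • w) : w = 0 := by
  refine hc.eq_zero_of_weightProj_mul_eq_zero hi fun t ht => ?_
  rcases eq_or_ne (f t) r with h | h
  · have hpy := hc.weightProj_mul_mul hi hX ht y
    rwa [hy, mul_add, mul_smul_comm, h, add_eq_left] at hpy
  · exact hc.weightProj_mul_eq_zero hi hX ht hw h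

end IsComplete

lemma IsComplete.of_succ (hc : D.IsComplete (i + 1)) : D.IsComplete i := by
  refine top_le_iff.1 (hc.ge.trans (iSup₂_le fun t ht => ?_))
  obtain ⟨ht, hlen⟩ := mem_standards.1 ht
  obtain _ | ⟨b, t⟩ := t
  · cases hlen
  · exact weightSpace_cons_le.trans
      (le_iSup₂_of_le t (mem_standards.2 ⟨ht.2, by simpa using hlen⟩) le_rfl)

lemma weightSpace_cons_cons_self (hc : D.IsComplete (s.length + 1)) (hl : s.length + 1 < n) :
    D.weightSpace (b :: b :: s) = ⊥ := by
  refine (Submodule.eq_bot_iff _).2 fun x hx => ?_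
  rw [mem_weightSpace_cons, mem_weightSpace_cons] at hx
  simp only [List.length_cons] at hx
  obtain ⟨⟨-, hL, hZ⟩, hL', hZ'⟩ := hx
  have hq : D.q - 1 ≠ 0 := sub_ne_zero.2 D.q_ne_one
  have hres : -(((D.q - 1) * D.residue b) • x) = 0 := by
    refine hc.eq_zero_of_jordan hl.le
      (fun w hw y hy => L_mul_of_mem (mem_standards.1 hw).2 hy) (y := D.T s.length * x)
      (r := D.residue b) ?_ ?_
    · rw [D.L_mul_T_mul hl, hL', mul_smul_comm]
      module
    · rw [mul_neg, mul_smul_comm, hL]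
      module
  have hcores : ((D.q - 1) * D.coresidue b) • x = 0 := by
    refine hc.eq_zero_of_jordan hl.le
      (fun w hw y hy => Z_mul_of_mem (mem_standards.1 hw).2 hy) (y := D.T s.length * x)
      (r := D.coresidue b) ?_ ?_
    · rw [D.Z_mul_T_mul hl, hZ', hZ, mul_smul_comm]
      module
    · rw [mul_smul_comm, hZ]
      module
  rcases D.residue_ne_zero_or b with h | h
  · exact (smul_eq_zero.1 (neg_eq_zero.1 hres)).resolve_left (mul_ne_zero hq h)
  · exact (smul_eq_zero.1 hcores).resolve_left (mul_ne_zero hq h)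

/-- The two generators act on such a weight vector by the distinct scalars `q` and `-1`,
which the braid relation forbids. -/
lemma weightSpace_cons_cons_cons_self (hbc : Adjacent b c) (hc : D.IsComplete (s.length + 2))
    (hl : s.length + 2 < n) : D.weightSpace (b :: c :: b :: s) = ⊥ := by
  refine (Submodule.eq_bot_iff _).2 fun x hx => ?_
  obtain ⟨α, hα⟩ := D.exists_isSwapCoeff (D.residue_ne_or_of_adjacent hbc.symm)
  obtain ⟨β, hβ⟩ := D.exists_isSwapCoeff (D.residue_ne_or_of_adjacent hbc)
  have hTα : D.T s.length * x = α • x := by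
    have hmem := weightSpace_cons_le hx
    have h := mul_mem_weightSpace_cons (t := c :: b :: s) (s := b :: c :: s) rfl
      (by simpa using hl) (sub_mem (D.T_mem (by simp)) (Subalgebra.smul_mem _ (one_mem _) α)) hx
      (T_sub_mul_mem_weightSpace hα (by omega) hmem)
    rwa [weightSpace_cons_cons_self (s := c :: s) hc hl, Submodule.mem_bot, sub_mul,
      smul_mul_assoc, one_mul, sub_eq_zero] at h
  have hTβ : D.T (s.length + 1) * x = β • x := by
    refine hβ.T_mul_eq_smul (s := b :: s) hl (eq_bot_mono weightSpace_cons_le ?_) hx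
    exact weightSpace_cons_cons_self hc.of_succ (by omega)
  have hbraid := congrArg (· * x) (D.relations.braid s.length hl)
  simp only [mul_assoc, hTα, hTβ, mul_smul_comm, smul_smul] at hbraid
  have hzero : (α * β * (β - α)) • x = 0 := by
    linear_combination (norm := module) hbraid
  refine (smul_eq_zero.1 hzero).resolve_left ?_
  have hq2 := D.one_add_q_ne_zero (by omega)
  obtain ⟨j, b⟩ := b
  obtain ⟨j', c⟩ := c
  obtain ⟨rfl, hcont⟩ := hbc
  simp only at hcont
  rcases hcont with rfl | rfl
  · rw [hα.eq_neg_one, hβ.eq_q]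
    simpa [D.q_ne_zero, add_comm] using hq2
  · rw [hα.eq_q, hβ.eq_neg_one]
    have : -1 - D.q ≠ 0 := fun e => hq2 (by linear_combination -e)
    simpa [D.q_ne_zero] using this

lemma weightSpace_eq_bot_of_not_addable (hs : IsStandard (c :: s)) (hbc : Adjacent b c)
    (hb : ¬ Addable (c :: s) b) (hc : D.IsComplete (s.length + 1)) (hl : s.length + 1 < n) :
    D.weightSpace (b :: c :: s) = ⊥ := by
  obtain ⟨u, r, rfl, hu⟩ := hs.2.exists_eq_append_of_removable
    (removable_of_not_addable_cons hs.2 hs.1 hbc hb)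
  have hlen : (u ++ b :: r).length = (u ++ r).length + 1 := by simp [add_assoc]
  have hlink : D.Linked (b :: c :: (u ++ b :: r)) (b :: c :: b :: (u ++ r)) :=
    ((Linked.move_to_front hs.2 (by omega) hu).cons (by omega) c).cons (by simpa using hl) b
  rw [hlen] at hc hl
  exact hlink.eq_bot (weightSpace_cons_cons_cons_self hbc hc hl)

end CyclotomicHecke.SeparatedDatum

namespace CyclotomicHecke.SeparatedDatum

variable {K A ι : Type*} [Field K] [Ring A] [Algebra K A] [Fintype ι] {n : ℕ}
  {D : SeparatedDatum K A ι n} {s t u : List (Label ι)} {b c d : Label ι} {x y : A} {i l : ℕ}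

lemma mem_weightSpace_of_T_mul_eq_q_smul (hl : s.length + 1 < n) (hx : x ∈ D.weightSpace (c :: s))
    (hT : D.T s.length * x = D.q • x) : x ∈ D.weightSpace ((c.1, c.2 + 1) :: c :: s) := by
  refine mem_weightSpace_cons.2 ⟨hx, ?_, ?_⟩
  · have h := D.L_succ_mul_T_mul hl x
    rw [(mem_weightSpace_cons.1 hx).2.1, hT, mul_smul_comm, mul_smul_comm, hT] at h
    rw [residue_add_one, List.length_cons]
    linear_combination (norm := module) h
  · have h := D.Z_succ_mul_T_mul hl x
    rw [(mem_weightSpace_cons.1 hx).2.2, hT, mul_smul_comm, mul_smul_comm, hT] at h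
    refine (smul_right_injective A D.q_ne_zero) ?_
    simp only [smul_smul, q_mul_coresidue_add_one, List.length_cons]
    linear_combination (norm := module) h

lemma mem_weightSpace_of_T_mul_eq_neg (hl : s.length + 1 < n) (hx : x ∈ D.weightSpace (c :: s))
    (hT : D.T s.length * x = -x) : x ∈ D.weightSpace ((c.1, c.2 - 1) :: c :: s) := by
  have hres := D.residue_add_one c.1 (c.2 - 1)
  have hcores := D.q_mul_coresidue_add_one c.1 (c.2 - 1)
  rw [sub_add_cancel] at hres hcores
  refine mem_weightSpace_cons.2 ⟨hx, ?_, ?_⟩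
  · have h := D.L_succ_mul_T_mul hl x
    rw [(mem_weightSpace_cons.1 hx).2.1, hT, mul_neg, mul_smul_comm, hT, hres] at h
    refine (smul_right_injective A D.q_ne_zero) ?_
    simp only [smul_smul, List.length_cons]
    linear_combination (norm := module) -h
  · have h := D.Z_succ_mul_T_mul hl x
    rw [(mem_weightSpace_cons.1 hx).2.2, hT, mul_neg, mul_smul_comm, hT] at h
    rw [← hcores, List.length_cons]
    linear_combination (norm := module) -h

lemma mem_sup_of_T_mul_mem (hl : s.length + 1 < n) (hx : x ∈ D.weightSpace (c :: s))
    (hTx : D.T s.length * x ∈ D.weightSpace (c :: s)) :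
    x ∈ D.weightSpace ((c.1, c.2 + 1) :: c :: s) ⊔ D.weightSpace ((c.1, c.2 - 1) :: c :: s) := by
  have hq : 1 + D.q ≠ 0 := D.one_add_q_ne_zero (by omega)
  have hsum : x = (1 + D.q)⁻¹ • ((D.T s.length * x + x) + (D.q • x - D.T s.length * x)) := by
    rw [show (D.T s.length * x + x) + (D.q • x - D.T s.length * x) = (1 + D.q) • x by module,
      inv_smul_smul₀ hq]
  rw [hsum]
  refine Submodule.smul_mem _ _ (Submodule.add_mem_sup ?_ ?_)
  · refine mem_weightSpace_of_T_mul_eq_q_smul hl (add_mem hTx hx) ?_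
    rw [mul_add, D.T_mul_T_mul hl]
    module
  · refine mem_weightSpace_of_T_mul_eq_neg hl (sub_mem (Submodule.smul_mem _ _ hx) hTx) ?_
    rw [mul_sub, mul_smul_comm, D.T_mul_T_mul hl]
    module

variable [DecidableEq ι]

lemma cons_mem_standards (hs : IsStandard s) (hb : Addable s b) :
    b :: s ∈ standards ι (s.length + 1) :=
  mem_standards.2 ⟨⟨hb, hs⟩, rfl⟩

lemma IsComplete.sum_weightProj_cons_mul (hc : D.IsComplete (s.length + 1)) (hl : s.length < n)
    (hs : IsStandard s) (hy : y ∈ D.weightSpace s) :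
    ∑ d ∈ addables s, D.weightProj (d :: s) * y = y := by
  have hproj : D.weightProj s * y = y := by
    have hs := mem_standards.2 ⟨hs, rfl⟩
    rw [weightProj_mul hs hl.le hs hy, if_pos rfl]
  have hsub : (addables s).image (· :: s) ⊆ standards ι (s.length + 1) := by
    intro w hw
    obtain ⟨d, hd, rfl⟩ := Finset.mem_image.1 hw
    exact cons_mem_standards hs (hs.mem_addables.1 hd)
  calc ∑ d ∈ addables s, D.weightProj (d :: s) * y
      = ∑ w ∈ (addables s).image (· :: s), D.weightProj s * (D.weightProj w * y) := by
        rw [Finset.sum_image fun d _ e _ hde => (List.cons.inj hde).1]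
        refine Finset.sum_congr rfl fun d hd => ?_
        have hmem := hc.weightProj_mul_mem hl (hsub (Finset.mem_image_of_mem _ hd)) y
        have hs := mem_standards.2 ⟨hs, rfl⟩
        rw [weightProj_mul hs hl.le hs (weightSpace_cons_le hmem), if_pos rfl]
    _ = ∑ w ∈ standards ι (s.length + 1), D.weightProj s * (D.weightProj w * y) := by
        refine Finset.sum_subset hsub fun w hw hws => ?_
        have hmem := hc.weightProj_mul_mem hl hw y
        obtain ⟨hw', hlen⟩ := mem_standards.1 hw
        obtain _ | ⟨d, w⟩ := w
        · cases hlen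
        rw [weightProj_mul (mem_standards.2 ⟨hs, rfl⟩) hl.le
          (mem_standards.2 ⟨hw'.2, Nat.succ.inj hlen⟩) (weightSpace_cons_le hmem), if_neg]
        rintro rfl
        exact hws (Finset.mem_image_of_mem _ (hs.mem_addables.2 hw'.1))
    _ = y := by
        rw [← Finset.mul_sum, ← Finset.sum_mul, hc.sum_weightProj hl, one_mul, hproj]

lemma weightProj_mul_T_mul_mem (hc : D.IsComplete (s.length + 1)) (hl : s.length + 1 < n)
    (hs : IsStandard s) (hcs : Addable s c) (hds : Addable s d) (hdc : d ≠ c)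
    (hx : x ∈ D.weightSpace (c :: s)) :
    D.weightProj (d :: s) * (D.T s.length * x) ∈ D.weightSpace (c :: d :: s) := by
  have hd := cons_mem_standards hs hds
  have hp : D.weightProj (d :: s) ∈ D.level (s.length + 1) := weightProj_mem (d :: s)
  have hpx : D.weightProj (d :: s) * x = 0 := by
    rw [weightProj_mul hd hl.le (cons_mem_standards hs hcs) hx, if_neg]
    exact fun h => hdc (List.cons.inj h).1.symm
  obtain ⟨-, hLx, hZx⟩ := mem_weightSpace_cons.1 hx
  refine mem_weightSpace_cons.2 ⟨hc.weightProj_mul_mem hl.le hd _, ?_, ?_⟩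
  · have hpL : D.weightProj (d :: s) * (D.L (s.length + 1) * x) = 0 := by
      rw [← (D.commute_L hl hp).left_comm, hpx, mul_zero]
    rw [List.length_cons, (D.commute_L hl hp).left_comm, D.L_succ_mul_T_mul hl, hLx, mul_add,
      mul_smul_comm, mul_smul_comm, mul_smul_comm, hpL, smul_zero, add_zero]
  · rw [List.length_cons, (D.commute_Z hl hp).left_comm, D.Z_succ_mul_T_mul hl, hZx, mul_sub,
      mul_smul_comm, mul_smul_comm, mul_smul_comm, mul_smul_comm, hpx, smul_zero, smul_zero,
      sub_zero]

lemma exists_T_mul_eq_smul_add (hs : IsStandard s) (hl : s.length + 1 < n) (hcs : Addable s c)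
    (hds : Addable s d) (hdc : d ≠ c) (hy : y ∈ D.weightSpace (c :: d :: s)) :
    ∃ z ∈ D.weightSpace (d :: c :: s), ∃ β : K, D.T s.length * z = β • z + y := by
  obtain ⟨α, hα⟩ := D.exists_isSwapCoeff
    (D.residue_ne_or hs hl.le (Or.inr hcs) (Or.inr hds) hdc.symm)
  have hα₀ := hα.mul_ne_zero hs hl (Or.inr hcs) (Or.inr hds) (hcs.not_adjacent hds)
  refine ⟨((D.q - α) * (1 + α))⁻¹ • ((D.T s.length - α • 1) * y),
    Submodule.smul_mem _ _ (T_sub_mul_mem_weightSpace hα hl hy), D.q - 1 - α, ?_⟩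
  have h : D.T s.length * ((D.T s.length - α • 1) * y) =
      (D.q - 1 - α) • ((D.T s.length - α • 1) * y) + ((D.q - α) * (1 + α)) • y := by
    rw [← D.T_sub_mul_T_sub_mul hl, sub_mul _ ((D.q - 1 - α) • 1), smul_mul_assoc, one_mul,
      add_sub_cancel]
  rw [mul_smul_comm, h, smul_add, inv_smul_smul₀ hα₀, smul_comm]

/-- Subtracting from `x` suitable elements of the weight spaces of `d :: c :: s` makes the
components of `T x` outside the weight space of `c :: s` vanish. -/
lemma weightSpace_le_iSup_addables_erase_sup (hc : D.IsComplete (s.length + 1))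
    (hl : s.length + 1 < n) (hs : IsStandard (c :: s)) :
    D.weightSpace (c :: s) ≤ (⨆ d ∈ (addables s).erase c, D.weightSpace (d :: c :: s)) ⊔
      (D.weightSpace ((c.1, c.2 + 1) :: c :: s) ⊔ D.weightSpace ((c.1, c.2 - 1) :: c :: s)) := by
  intro x hx
  have haddable : ∀ d ∈ (addables s).erase c, Addable s d := fun d hd =>
    hs.2.mem_addables.1 (Finset.mem_of_mem_erase hd)
  have hzero : ∀ d ∈ (addables s).erase c, ∀ y ∈ D.weightSpace (c :: s),
      D.weightProj (d :: s) * y = 0 := fun d hd y hy => by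
    rw [weightProj_mul (cons_mem_standards hs.2 (haddable d hd)) hl.le
      (cons_mem_standards hs.2 hs.1) hy, if_neg]
    exact fun h => Finset.ne_of_mem_erase hd (List.cons.inj h).1.symm
  have hex := fun d (hd : d ∈ (addables s).erase c) =>
    exists_T_mul_eq_smul_add hs.2 hl hs.1 (haddable d hd) (Finset.ne_of_mem_erase hd)
      (weightProj_mul_T_mul_mem hc hl hs.2 hs.1 (haddable d hd) (Finset.ne_of_mem_erase hd) hx)
  choose! z hz β hβ using hex
  have hprojTz : ∀ d ∈ (addables s).erase c, ∀ e ∈ (addables s).erase c,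
      D.weightProj (d :: s) * (D.T s.length * z e) =
        if e = d then D.weightProj (e :: s) * (D.T s.length * x) else 0 := fun d hd e he => by
    have he' := cons_mem_standards hs.2 (haddable e he)
    rw [hβ e he, mul_add, mul_smul_comm, hzero d hd _ (weightSpace_cons_le (hz e he)), smul_zero,
      zero_add, weightProj_mul (cons_mem_standards hs.2 (haddable d hd)) hl.le he'
        (hc.weightProj_mul_mem hl.le he' _)]
    simp only [List.cons.injEq, and_true]
  set x' := x - ∑ d ∈ (addables s).erase c, z d with hx'_def
  have hx' : x' ∈ D.weightSpace (c :: s) :=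
    sub_mem hx (Submodule.sum_mem _ fun d hd => weightSpace_cons_le (hz d hd))
  have hTx' : D.T s.length * x' ∈ D.weightSpace (c :: s) := by
    rw [← hc.sum_weightProj_cons_mul (by omega) hs.2
      (T_mul_mem_weightSpace le_rfl hl (weightSpace_cons_le hx')),
      ← Finset.add_sum_erase _ _ (hs.2.mem_addables.2 hs.1), Finset.sum_eq_zero, add_zero]
    · exact hc.weightProj_mul_mem hl.le (cons_mem_standards hs.2 hs.1) _
    intro d hd
    rw [hx'_def, mul_sub, mul_sub, Finset.mul_sum, Finset.mul_sum,
      Finset.sum_congr rfl fun e he => hprojTz d hd e he, Finset.sum_ite_eq', if_pos hd, sub_self]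
  have hmem := mem_sup_of_T_mul_mem hl hx' hTx'
  rw [← add_sub_cancel (∑ d ∈ (addables s).erase c, z d) x]
  exact Submodule.add_mem_sup (Submodule.sum_mem _ fun d hd =>
    Submodule.mem_iSup_of_mem d (Submodule.mem_iSup_of_mem hd (hz d hd))) hmem

lemma isComplete_zero : D.IsComplete 0 := by
  simp [IsComplete, standards, weightSpace]

lemma weightSpace_nil_le_iSup_addables :
    D.weightSpace [] ≤ ⨆ b ∈ addables ([] : List (Label ι)), D.weightSpace [b] := by
  intro x _
  obtain ⟨r, rfl, hr⟩ := D.exists_eigen_decomposition x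
  refine Submodule.sum_mem _ fun j _ => Submodule.mem_iSup_of_mem (j, 0)
    (Submodule.mem_iSup_of_mem ?_ (mem_weightSpace_cons.2 ⟨Submodule.mem_top, ?_, ?_⟩))
  · exact (IsStandard.mem_addables (s := []) trivial).2 (by simp [Addable])
  · simpa [residue, murphy] using (hr j).1
  · simpa [coresidue, murphy] using (hr j).2

lemma weightSpace_le_iSup_addables (hs : IsStandard s) (hc : D.IsComplete s.length)
    (hl : s.length < n) : D.weightSpace s ≤ ⨆ b ∈ addables s, D.weightSpace (b :: s) := by
  obtain _ | ⟨c, s⟩ := s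
  · exact weightSpace_nil_le_iSup_addables
  have hadj : ∀ b, Adjacent b c →
      D.weightSpace (b :: c :: s) ≤ ⨆ b ∈ addables (c :: s), D.weightSpace (b :: c :: s) := by
    intro b hbc
    by_cases hb : Addable (c :: s) b
    · exact le_iSup₂_of_le b (hs.mem_addables.2 hb) le_rfl
    · rw [weightSpace_eq_bot_of_not_addable hs hbc hb hc hl]
      exact bot_le
  refine (weightSpace_le_iSup_addables_erase_sup hc hl hs).trans
    (sup_le (iSup₂_le fun d hd => ?_) (sup_le (hadj _ ⟨rfl, by simp⟩) (hadj _ ⟨rfl, by simp⟩)))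
  obtain ⟨hdc, hd⟩ := Finset.mem_erase.1 hd
  exact le_iSup₂_of_le d
    (hs.mem_addables.2 (hs.1.cons (hs.2.mem_addables.1 hd) hdc.symm)) le_rfl

lemma isComplete (hi : i ≤ n) : D.IsComplete i := by
  induction i with
  | zero => exact isComplete_zero
  | succ i ih =>
    refine top_le_iff.1 ((ih (by omega)).ge.trans (iSup₂_le fun s hs => ?_))
    obtain ⟨hst, rfl⟩ := mem_standards.1 hs
    refine (weightSpace_le_iSup_addables hst (ih (by omega)) hi).trans (iSup₂_le fun b hb => ?_)
    exact le_iSup₂_of_le _ (cons_mem_standards hst (hst.mem_addables.1 hb)) le_rfl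

end CyclotomicHecke.SeparatedDatum

namespace CyclotomicHecke

lemma parabolic_mul_mem {K A : Type*} [Field K] [Ring A] [Algebra K A] {a : A} {T : ℕ → A} {i : ℕ}
    {N : Submodule K A} (ha : 1 ≤ i → ∀ y ∈ N, a * y ∈ N)
    (hT : ∀ j, j + 1 < i → ∀ y ∈ N, T j * y ∈ N) {h y : A} (hh : h ∈ parabolic K a T i)
    (hy : y ∈ N) : h * y ∈ N := by
  induction hh using Algebra.adjoin_induction generalizing y with
  | mem x hx =>
    rcases hx with ⟨hi, rfl⟩ | ⟨j, hj, rfl⟩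
    · exact ha hi y hy
    · exact hT j hj y hy
  | algebraMap k => simpa only [← Algebra.smul_def] using N.smul_mem k hy
  | add h₁ h₂ _ _ ih₁ ih₂ => simpa only [add_mul] using N.add_mem (ih₁ hy) (ih₂ hy)
  | mul h₁ h₂ _ _ ih₁ ih₂ => simpa only [mul_assoc] using ih₁ (ih₂ hy)

lemma Addable.ne {ι : Type*} [DecidableEq ι] {s : List (Label ι)} {b c : Label ι}
    (hc : Addable s c) (hb : Addable (c :: s) b) : b ≠ c := by
  rintro rfl
  have h := hc.removable_cons.1
  have h' := hb.1
  omega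

namespace SeparatedDatum

variable {K A ι : Type*} [Field K] [Ring A] [Algebra K A] [Fintype ι] [DecidableEq ι] {n : ℕ}
  {D : SeparatedDatum K A ι n} {s t u : List (Label ι)} {b c : Label ι} {h x y : A} {i j : ℕ}

lemma weightSpace_cons_eq_bot_of_not_addable (hs : IsStandard (b :: c :: u))
    (hl : u.length + 1 < n) (hb : ¬ Addable u b) : D.weightSpace (b :: u) = ⊥ := by
  refine (Submodule.eq_bot_iff _).2 fun x hx => ?_
  obtain ⟨hxu, hLx, hZx⟩ := mem_weightSpace_cons.1 hx
  rw [← (isComplete (D := D) hl.le).sum_weightProj_cons_mul (by omega) hs.2.2 hxu]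
  refine Finset.sum_eq_zero fun d hd => ?_
  have hd' := hs.2.2.mem_addables.1 hd
  have hsep : D.residue b ≠ D.residue d ∨ D.coresidue b ≠ D.coresidue d := by
    refine D.residue_ne_or (s := c :: u) hs.2 hl (Or.inr hs.1) ?_ fun hbd => hb (hbd ▸ hd')
    by_cases hdc : d = c
    · exact Or.inl (hdc ▸ List.mem_cons_self)
    · exact Or.inr (hs.2.1.cons hd' (Ne.symm hdc))
  have hdu : d :: u ∈ standards ι (u.length + 1) := cons_mem_standards hs.2.2 hd'
  rcases hsep with hres | hcores
  · exact (isComplete hl.le).weightProj_mul_eq_zero hl.le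
      (fun w hw y hy => L_mul_of_mem (mem_standards.1 hw).2 hy) hdu hLx hres.symm
  · exact (isComplete hl.le).weightProj_mul_eq_zero hl.le
      (fun w hw y hy => Z_mul_of_mem (mem_standards.1 hw).2 hy) hdu hZx hcores.symm

lemma exists_T_mul_eq (hs : IsStandard (b :: c :: u)) (hl : u.length + 1 < n)
    (hx : x ∈ D.weightSpace (b :: c :: u)) : ∃ α : K, ∃ y ∈ D.weightSpace (c :: b :: u),
      D.T u.length * x = α • x + y ∧ (y = 0 ∨ IsStandard (c :: b :: u)) := by
  have hbc : b ≠ c := hs.2.1.ne hs.1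
  obtain ⟨α, hα⟩ := D.exists_isSwapCoeff (D.residue_ne_or (s := c :: u) hs.2 hl (Or.inr hs.1)
    (Or.inl List.mem_cons_self) hbc)
  have hy := T_sub_mul_mem_weightSpace hα hl hx
  refine ⟨α, _, hy, by rw [sub_mul, smul_mul_assoc, one_mul, add_sub_cancel], ?_⟩
  by_cases hb : Addable u b
  · exact Or.inr ⟨hb.cons hs.2.1 hbc, hb, hs.2.2⟩
  · have hbot := weightSpace_cons_eq_bot_of_not_addable (D := D) hs hl hb
    exact Or.inl ((Submodule.mem_bot K).1 (hbot ▸ weightSpace_cons_le hy))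

variable (D) in
/-- The Mackey property of a weight vector `y` with `i + 1` labels: any submodule that contains
`h * y` and `h * T (i - 1) * h' * y` for all `h`, `h'` of level `i` contains the whole orbit of `y`
under the level `i + 1`. -/
def IsMackey (i : ℕ) (y : A) : Prop :=
  ∀ N : Submodule K A, (∀ h ∈ D.level i, h * y ∈ N) →
    (∀ j, j + 1 = i → ∀ h ∈ D.level i, ∀ h' ∈ D.level i, h * (D.T j * (h' * y)) ∈ N) →
      ∀ h ∈ D.level (i + 1), h * y ∈ N

omit [DecidableEq ι] in
lemma isMackey_zero (hy : y ∈ D.weightSpace [b]) : D.IsMackey 0 y := by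
  intro N hN _ h hh
  have hle : Submodule.span K {y} ≤ N := by
    rw [Submodule.span_singleton_le_iff_mem]
    simpa using hN 1 (one_mem _)
  refine hle (parabolic_mul_mem (fun _ x hx => ?_) (fun j hj => by omega) hh
    (Submodule.mem_span_singleton_self y))
  obtain ⟨r, rfl⟩ := Submodule.mem_span_singleton.1 hx
  have hay : D.a * y = D.residue b • y := (mem_weightSpace_cons.1 hy).2.1
  rw [mul_smul_comm, hay]
  exact Submodule.smul_mem _ _ (Submodule.smul_mem _ _ (Submodule.mem_span_singleton_self y))

lemma T_mul_mul_T_mul_mem (hl : u.length + 1 < n) (hs : IsStandard (b :: c :: u))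
    (hmackey : ∀ t ∈ standards ι (u.length + 1), ∀ y ∈ D.weightSpace t, D.IsMackey u.length y)
    (hx : x ∈ D.weightSpace (b :: c :: u)) {N : Submodule K A}
    (hN : ∀ h ∈ D.level (u.length + 1), h * x ∈ N)
    (hNT : ∀ h ∈ D.level (u.length + 1), ∀ h' ∈ D.level (u.length + 1),
      h * (D.T u.length * (h' * x)) ∈ N) (hh : h ∈ D.level (u.length + 1)) :
    D.T u.length * (h * (D.T u.length * x)) ∈ N := by
  obtain ⟨α, y, hy, hTx, hstd⟩ := exists_T_mul_eq hs hl hx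
  have hTh : ∀ g ∈ D.level (u.length + 1), D.T u.length * (g * x) ∈ N := fun g hg => by
    simpa using hNT 1 (one_mem _) g hg
  rw [hTx, mul_add, mul_add, mul_smul_comm, mul_smul_comm]
  refine N.add_mem (N.smul_mem _ (hTh h hh)) ?_
  obtain rfl | hstd := hstd
  · simp
  have hmono : D.level u.length ≤ D.level (u.length + 1) := parabolic_mono (by omega)
  have hcomm : ∀ g ∈ D.level u.length, Commute (D.T u.length) g := fun g hg =>
    D.relations.commute_gen_parabolic hl hg
  obtain rfl : y = D.T u.length * x - α • x := by rw [hTx, add_sub_cancel_left]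
  refine hmackey _ (mem_standards.2 ⟨hstd.2, rfl⟩) _ (weightSpace_cons_le hy)
    (N.comap (LinearMap.mulLeft K (D.T u.length))) (fun g hg => ?_) (fun j hj g hg g' hg' => ?_)
    h hh <;> rw [Submodule.mem_comap, LinearMap.mulLeft_apply]
  · rw [(hcomm g hg).left_comm, mul_sub, D.T_mul_T_mul hl, mul_smul_comm]
    simp only [mul_sub, mul_add, mul_smul_comm]
    have hgx := hN g (hmono hg)
    have hgTx : g * (D.T u.length * x) ∈ N := by simpa using hNT g (hmono hg) 1 (one_mem _)
    exact N.sub_mem (N.add_mem (N.smul_mem _ hgTx) (N.smul_mem _ hgx)) (N.smul_mem _ hgTx)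
  · have hj' : D.T j ∈ D.level (u.length + 1) := D.T_mem (by omega)
    have hbraid := D.relations.braid j (by omega)
    rw [hj] at hbraid
    have hmain : D.T u.length * (g * (D.T j * (g' * (D.T u.length * x)))) =
        (g * D.T j) * (D.T u.length * ((D.T j * g') * x)) := by
      rw [(hcomm g hg).left_comm, ← (hcomm g' hg').left_comm]
      simp only [← mul_assoc] at hbraid ⊢
      simp only [mul_assoc g, hbraid]
    simp only [mul_sub, mul_smul_comm]
    rw [hmain]
    refine N.sub_mem (hNT _ (mul_mem (hmono hg) hj') _ (mul_mem hj' (hmono hg'))) (N.smul_mem _ ?_)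
    simpa only [mul_assoc] using hTh _ (mul_mem (hmono hg) (mul_mem hj' (hmono hg')))

end SeparatedDatum

end CyclotomicHecke

namespace CyclotomicHecke.SeparatedDatum

variable {K A ι : Type*} [Field K] [Ring A] [Algebra K A] [Fintype ι] [DecidableEq ι] {n : ℕ}
  {D : SeparatedDatum K A ι n} {s t u : List (Label ι)} {b c d : Label ι} {h x y : A} {i j : ℕ}

variable (D) in
/-- The level `i` maps a weight vector of a standard tableau `t` into the sum of the weight spaces
of the rearrangements of `t`, with scalar component along `t` itself. In other words, the level `i`
acts on the span of its orbit as a full matrix algebra would. -/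
structure IsSchurian (i : ℕ) : Prop where
  perm : ∀ ⦃s⦄, s ∈ standards ι i → ∀ ⦃t⦄, t ∈ standards ι i → ∀ ⦃y⦄, y ∈ D.weightSpace t →
    ∀ ⦃h⦄, h ∈ D.level i → D.weightProj s * (h * y) ≠ 0 → s.Perm t
  scalar : ∀ ⦃t⦄, t ∈ standards ι i → ∀ ⦃y⦄, y ∈ D.weightSpace t → ∀ ⦃h⦄, h ∈ D.level i →
    D.weightProj t * (h * y) ∈ Submodule.span K {y}

omit [DecidableEq ι] in
lemma level_zero : D.level 0 = ⊥ := by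
  rw [level, parabolic, ← Algebra.adjoin_empty]
  congr 1
  ext x
  simp

lemma isSchurian_zero : D.IsSchurian 0 := by
  refine ⟨fun s hs t ht _ _ _ _ _ => ?_, fun t ht y hy h hh => ?_⟩
  · rw [List.length_eq_zero_iff.1 (mem_standards.1 hs).2,
      List.length_eq_zero_iff.1 (mem_standards.1 ht).2]
  · rw [level_zero, Algebra.mem_bot] at hh
    obtain ⟨r, rfl⟩ := hh
    rw [← Algebra.smul_def, mul_smul_comm, weightProj_mul ht (Nat.zero_le n) ht hy, if_pos rfl]
    exact Submodule.smul_mem _ _ (Submodule.mem_span_singleton_self y)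

namespace IsSchurian

variable (hS : D.IsSchurian t.length)
include hS

lemma weightProj_mul_mul_eq_zero_or (hbt : IsStandard (b :: t)) (hl : t.length < n)
    (hy : y ∈ D.weightSpace (b :: t)) (hh : h ∈ D.level t.length)
    (hs : s ∈ standards ι t.length) : D.weightProj s * (h * y) = 0 ∨
      s.Perm t ∧ IsStandard (b :: s) ∧ D.weightProj s * (h * y) ∈ D.weightSpace (b :: s) := by
  refine or_iff_not_imp_left.2 fun hne => ?_
  obtain ⟨hs', hlen⟩ := mem_standards.1 hs
  have hperm := hS.perm hs (mem_standards.2 ⟨hbt.2, rfl⟩) (weightSpace_cons_le hy) hh hne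
  refine ⟨hperm, ⟨hbt.1.perm hperm.symm, hs'⟩, ?_⟩
  rw [← mul_assoc]
  refine mul_mem_weightSpace_cons hlen.symm hl (mul_mem (hlen ▸ weightProj_mem s) hh) hy ?_
  rw [mul_assoc]
  exact (isComplete hl.le).weightProj_mul_mem hl.le hs _

lemma weightProj_cons_mul_mul (hbt : IsStandard (b :: t)) (hl : t.length < n)
    (hy : y ∈ D.weightSpace (b :: t)) (hh : h ∈ D.level t.length)
    (hcs : c :: s ∈ standards ι (t.length + 1)) :
    D.weightProj (c :: s) * (h * y) = if b = c then D.weightProj s * (h * y) else 0 := by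
  have hs : s ∈ standards ι t.length := by
    obtain ⟨hcs, hlen⟩ := mem_standards.1 hcs
    exact mem_standards.2 ⟨hcs.2, Nat.succ.inj hlen⟩
  have hterm : ∀ w ∈ standards ι t.length, D.weightProj (c :: s) * (D.weightProj w * (h * y)) =
      if w = s then (if b = c then D.weightProj w * (h * y) else 0) else 0 := fun w hw => by
    obtain hzero | ⟨-, hbw, hmem⟩ := hS.weightProj_mul_mul_eq_zero_or hbt hl hy hh hw
    · simp only [hzero, mul_zero, ite_self]
    · rw [weightProj_mul hcs hl (mem_standards.2 ⟨hbw, by simp [(mem_standards.1 hw).2]⟩) hmem]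
      simp only [List.cons.injEq, ite_and]
      split_ifs <;> rfl
  calc D.weightProj (c :: s) * (h * y)
      = ∑ w ∈ standards ι t.length, D.weightProj (c :: s) * (D.weightProj w * (h * y)) := by
        rw [← Finset.mul_sum, ← Finset.sum_mul, (isComplete hl.le).sum_weightProj hl.le, one_mul]
    _ = _ := by rw [Finset.sum_congr rfl hterm, Finset.sum_ite_eq', if_pos hs]

lemma mul_T_mul_mul_mem (hbt : IsStandard (b :: t)) (hj : j + 1 = t.length) (hl : t.length < n)
    (hy : y ∈ D.weightSpace (b :: t)) {N : Submodule K A} (hN : ∀ h ∈ D.level t.length, h * y ∈ N)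
    (hswap : ∀ c u, (c :: u).Perm t → IsStandard (c :: b :: u) →
      ∀ z ∈ D.weightSpace (c :: b :: u), ∀ h ∈ D.level t.length, h * z ∈ N)
    {h' : A} (hh : h ∈ D.level t.length) (hh' : h' ∈ D.level t.length) :
    h * (D.T j * (h' * y)) ∈ N := by
  have hsum : h * (D.T j * (h' * y)) =
      ∑ w ∈ standards ι t.length, h * (D.T j * (D.weightProj w * (h' * y))) := by
    rw [← Finset.mul_sum, ← Finset.mul_sum, ← Finset.sum_mul,
      (isComplete hl.le).sum_weightProj hl.le, one_mul]
  rw [hsum]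
  refine N.sum_mem fun w hw => ?_
  obtain hzero | ⟨hperm, hbw, hmem⟩ := hS.weightProj_mul_mul_eq_zero_or hbt hl hy hh' hw
  · simp [hzero]
  have hlen := (mem_standards.1 hw).2
  obtain _ | ⟨c, u⟩ := w
  · simp at hlen
    omega
  have hju : j = u.length := by simpa [← hj, eq_comm] using hlen
  subst hju
  obtain ⟨α, z, hz, hT, hstd⟩ := exists_T_mul_eq hbw (by omega) hmem
  rw [hT, mul_add, mul_smul_comm, ← mul_assoc, ← mul_assoc, mul_assoc h]
  refine N.add_mem (N.smul_mem _ (hN _ (mul_mem hh (mul_mem ?_ hh')))) ?_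
  · exact hlen ▸ weightProj_mem _
  · obtain rfl | hstd := hstd
    · simp
    · exact hswap c u hperm hstd z hz h hh

variable (hmackey : ∀ y ∈ D.weightSpace (b :: t), D.IsMackey t.length y)
include hmackey

lemma mul_mem (hbt : IsStandard (b :: t)) (hl : t.length < n)
    (hy : y ∈ D.weightSpace (b :: t)) {N : Submodule K A} (hN : ∀ h ∈ D.level t.length, h * y ∈ N)
    (hswap : ∀ c u, (c :: u).Perm t → IsStandard (c :: b :: u) →
      ∀ z ∈ D.weightSpace (c :: b :: u), ∀ h ∈ D.level t.length, h * z ∈ N)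
    (hh : h ∈ D.level (t.length + 1)) : h * y ∈ N :=
  hmackey y hy N hN (fun _ hj _ hg _ hg' => hS.mul_T_mul_mul_mem hbt hj hl hy hN hswap hg hg') h hh

lemma perm_cons (hbt : IsStandard (b :: t)) (hl : t.length < n) (hy : y ∈ D.weightSpace (b :: t))
    (hds : d :: s ∈ standards ι (t.length + 1)) (hh : h ∈ D.level (t.length + 1))
    (hne : D.weightProj (d :: s) * (h * y) ≠ 0) : (d :: s).Perm (b :: t) := by
  contrapose! hne with hperm
  have hs : s ∈ standards ι t.length := by
    obtain ⟨hds, hlen⟩ := mem_standards.1 hds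
    exact mem_standards.2 ⟨hds.2, Nat.succ.inj hlen⟩
  refine hS.mul_mem hmackey hbt hl hy (N := LinearMap.ker (LinearMap.mulLeft K _))
    (fun g hg => ?_) (fun c u hcu hstd z hz g hg => ?_) hh <;>
    rw [LinearMap.mem_ker, LinearMap.mulLeft_apply]
  · rw [hS.weightProj_cons_mul_mul hbt hl hy hg hds]
    split_ifs with hbd
    · subst hbd
      by_contra hne
      exact hperm ((hS.perm hs (mem_standards.2 ⟨hbt.2, rfl⟩)
        (weightSpace_cons_le hy) hg hne).cons b)
    · rfl
  · have hlen : (b :: u).length = t.length := hcu.length_eq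
    rw [← hlen] at hS hg hds hs hl
    rw [hS.weightProj_cons_mul_mul hstd hl hz hg hds]
    split_ifs with hcd
    · subst hcd
      by_contra hne
      refine hperm ((((hS.perm hs (mem_standards.2 ⟨hstd.2, rfl⟩)
        (weightSpace_cons_le hz) hg hne).cons c).trans (List.Perm.swap b c u)).trans (hcu.cons b))
    · rfl

lemma scalar_cons (hbt : IsStandard (b :: t)) (hl : t.length < n)
    (hy : y ∈ D.weightSpace (b :: t)) (hh : h ∈ D.level (t.length + 1)) :
    D.weightProj (b :: t) * (h * y) ∈ Submodule.span K {y} := by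
  have hbt' : b :: t ∈ standards ι (t.length + 1) := mem_standards.2 ⟨hbt, rfl⟩
  refine hS.mul_mem hmackey hbt hl hy
    (N := (Submodule.span K {y}).comap (LinearMap.mulLeft K (D.weightProj (b :: t))))
    (fun g hg => ?_) (fun c u hcu hstd z hz g hg => ?_) hh <;>
    rw [Submodule.mem_comap, LinearMap.mulLeft_apply]
  · rw [hS.weightProj_cons_mul_mul hbt hl hy hg hbt', if_pos rfl]
    exact hS.scalar (mem_standards.2 ⟨hbt.2, rfl⟩) (weightSpace_cons_le hy) hg
  · have hlen : (b :: u).length = t.length := hcu.length_eq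
    rw [← hlen] at hS hg hbt' hl
    rw [hS.weightProj_cons_mul_mul hstd hl hz hg hbt', if_neg (hstd.2.1.ne hstd.1)]
    exact zero_mem _

end IsSchurian

lemma IsSchurian.succ (hi : i < n) (hS : D.IsSchurian i)
    (hmackey : ∀ t ∈ standards ι (i + 1), ∀ y ∈ D.weightSpace t, D.IsMackey i y) :
    D.IsSchurian (i + 1) := by
  refine ⟨fun s hs t ht y hy h hh hne => ?_, fun t ht y hy h hh => ?_⟩
  · obtain ⟨hbt, hlen⟩ := mem_standards.1 ht
    have hlen' := (mem_standards.1 hs).2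
    obtain _ | ⟨b, t⟩ := t
    · cases hlen
    obtain _ | ⟨d, s⟩ := s
    · cases hlen'
    obtain rfl : t.length = i := Nat.succ.inj hlen
    exact hS.perm_cons (hmackey _ ht) hbt hi hy hs hh hne
  · obtain ⟨hbt, hlen⟩ := mem_standards.1 ht
    obtain _ | ⟨b, t⟩ := t
    · cases hlen
    obtain rfl : t.length = i := Nat.succ.inj hlen
    exact hS.scalar_cons (hmackey _ ht) hbt hi hy hh

variable (D) in
/-- The span of the two kinds of products of elements of the level `j + 1` with `y` that occur in
`IsMackey (j + 1)`. -/
def mackeySpan (j : ℕ) (y : A) : Submodule K A :=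
  Submodule.span K ({x | ∃ g ∈ D.level (j + 1), g * y = x} ∪
    {x | ∃ g ∈ D.level (j + 1), ∃ g' ∈ D.level (j + 1), g * (D.T j * (g' * y)) = x})

section MackeySpan

omit [DecidableEq ι]

lemma mul_mem_mackeySpan (hh : h ∈ D.level (j + 1)) : h * y ∈ D.mackeySpan j y :=
  Submodule.subset_span (Or.inl ⟨h, hh, rfl⟩)

lemma mul_T_mul_mem_mackeySpan {h' : A} (hh : h ∈ D.level (j + 1)) (hh' : h' ∈ D.level (j + 1)) :
    h * (D.T j * (h' * y)) ∈ D.mackeySpan j y :=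
  Submodule.subset_span (Or.inr ⟨h, hh, h', hh', rfl⟩)

lemma mul_mem_of_mem_mackeySpan (hx : x ∈ D.mackeySpan j y) {N : Submodule K A} {g : A}
    (hN : ∀ h ∈ D.level (j + 1), g * (h * y) ∈ N)
    (hNT : ∀ h ∈ D.level (j + 1), ∀ h' ∈ D.level (j + 1), g * (h * (D.T j * (h' * y))) ∈ N) :
    g * x ∈ N := by
  suffices hle : D.mackeySpan j y ≤ N.comap (LinearMap.mulLeft K g) from hle hx
  refine Submodule.span_le.2 ?_
  rintro _ (⟨h, hh, rfl⟩ | ⟨h, hh, h', hh', rfl⟩)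
  exacts [hN h hh, hNT h hh h' hh']

lemma mul_mem_mackeySpan_of_mem (hh : h ∈ D.level (j + 1)) (hx : x ∈ D.mackeySpan j y) :
    h * x ∈ D.mackeySpan j y := by
  refine mul_mem_of_mem_mackeySpan hx (fun g hg => ?_) (fun g hg g' hg' => ?_) <;> rw [← mul_assoc]
  · exact mul_mem_mackeySpan (mul_mem hh hg)
  · exact mul_T_mul_mem_mackeySpan (mul_mem hh hg) hg'

end MackeySpan

lemma T_mul_mem_mackeySpan (hl : t.length < n) (hj : j + 1 = t.length) (hS : D.IsSchurian t.length)
    (hmackey : ∀ t ∈ standards ι (j + 1), ∀ y ∈ D.weightSpace t, D.IsMackey j y)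
    (hbt : IsStandard (b :: t)) (hy : y ∈ D.weightSpace (b :: t)) (hx : x ∈ D.mackeySpan j y) :
    D.T j * x ∈ D.mackeySpan j y := by
  refine mul_mem_of_mem_mackeySpan hx (fun g hg => ?_) (fun g hg g' hg' => ?_)
  · simpa using mul_T_mul_mem_mackeySpan (y := y) (one_mem _) hg
  have hsum : D.T j * (g * (D.T j * (g' * y))) =
      ∑ w ∈ standards ι t.length, D.T j * (g * (D.T j * (D.weightProj w * (g' * y)))) := by
    rw [← Finset.mul_sum, ← Finset.mul_sum, ← Finset.mul_sum, ← Finset.sum_mul,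
      (isComplete hl.le).sum_weightProj hl.le, one_mul]
  rw [hsum]
  refine Submodule.sum_mem _ fun w hw => ?_
  obtain hzero | ⟨-, hbw, hmem⟩ := hS.weightProj_mul_mul_eq_zero_or hbt hl hy (hj ▸ hg') hw
  · simp [hzero]
  have hlen := (mem_standards.1 hw).2
  have hproj : D.weightProj w * g' ∈ D.level (j + 1) :=
    mul_mem (by rw [hj, ← hlen]; exact weightProj_mem w) hg'
  obtain _ | ⟨c, u⟩ := w
  · rw [← hj] at hlen
    cases hlen
  obtain rfl : j = u.length := by simpa [← hj, eq_comm] using hlen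
  refine T_mul_mul_T_mul_mem (by omega) hbw hmackey hmem (fun r hr => ?_)
    (fun r hr r' hr' => ?_) hg
  · rw [← mul_assoc (D.weightProj _), ← mul_assoc]
    exact mul_mem_mackeySpan (mul_mem hr hproj)
  · rw [← mul_assoc (D.weightProj _), ← mul_assoc r']
    exact mul_T_mul_mem_mackeySpan hr (mul_mem hr' hproj)

lemma isMackey_succ (hj : j + 1 < n) (hS : D.IsSchurian (j + 1))
    (hmackey : ∀ t ∈ standards ι (j + 1), ∀ y ∈ D.weightSpace t, D.IsMackey j y)
    (ht : t ∈ standards ι (j + 2)) (hy : y ∈ D.weightSpace t) : D.IsMackey (j + 1) y := by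
  obtain ⟨hbt, hlen⟩ := mem_standards.1 ht
  obtain _ | ⟨b, t⟩ := t
  · cases hlen
  have hlen : t.length = j + 1 := Nat.succ.inj hlen
  intro N hN hNT h hh
  have hle : D.mackeySpan j y ≤ N := fun x hx => by
    simpa using mul_mem_of_mem_mackeySpan hx (g := 1) (by simpa using hN)
      (by simpa using hNT j rfl)
  refine hle (parabolic_mul_mem (fun _ x hx => ?_) (fun l hl x hx => ?_) hh ?_)
  · exact mul_mem_mackeySpan_of_mem (mem_parabolic_zeroth (by omega)) hx
  · obtain hlj | rfl : l + 1 < j + 1 ∨ l = j := by omega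
    · exact mul_mem_mackeySpan_of_mem (D.T_mem hlj) hx
    · rw [← hlen] at hS hj
      exact T_mul_mem_mackeySpan hj hlen.symm hS hmackey hbt hy hx
  · simpa using mul_mem_mackeySpan (D := D) (y := y) (one_mem _)

lemma isSchurian_and_isMackey (hi : i ≤ n) : D.IsSchurian i ∧
    (i < n → ∀ t ∈ standards ι (i + 1), ∀ y ∈ D.weightSpace t, D.IsMackey i y) := by
  induction i with
  | zero =>
    refine ⟨isSchurian_zero, fun _ t ht y hy => ?_⟩
    obtain ⟨b, rfl⟩ := List.length_eq_one_iff.1 (mem_standards.1 ht).2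
    exact isMackey_zero hy
  | succ j ih =>
    obtain ⟨hS, hM⟩ := ih (by omega)
    have hS' := hS.succ hi (hM hi)
    exact ⟨hS', fun hj t ht y hy => isMackey_succ hj hS' (hM hi) ht hy⟩

lemma isSchurian : D.IsSchurian n := (isSchurian_and_isMackey le_rfl).1

lemma Linked.of_perm (hs : IsStandard s) (ht : IsStandard t) (hst : s.Perm t) (hl : t.length ≤ n) :
    D.Linked t s := by
  induction s generalizing t with
  | nil => rw [List.nil_perm.1 hst]; exact Linked.refl _
  | cons b s ih =>
    obtain ⟨u, r, rfl, hu⟩ := ht.exists_eq_append_of_removable (hs.1.removable_cons.perm hst)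
    have hperm : s.Perm (u ++ r) := List.Perm.cons_inv (hst.trans List.perm_middle)
    have hlen : (u ++ r).length < n := by
      simp only [List.length_append, List.length_cons] at hl ⊢
      omega
    exact (Linked.move_to_front ht hl hu).trans
      ((ih hs.2 (ht.erase_middle hu) hperm hlen.le).cons hlen b)

lemma mem_span_singleton_of_mem (htop : D.level n = ⊤) (ht : t ∈ standards ι n)
    (hx : x ∈ D.weightSpace t) (hy : y ∈ Submodule.span A {x}) (hne : y ≠ 0) :
    x ∈ Submodule.span A {y} := by
  have hmem (g : A) : g ∈ D.level n := htop ▸ Algebra.mem_top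
  obtain ⟨h, rfl⟩ := Submodule.mem_span_singleton.1 hy
  obtain ⟨s, hs, hsy⟩ : ∃ s ∈ standards ι n, D.weightProj s * (h * x) ≠ 0 := by
    contrapose! hne
    exact (isComplete le_rfl).eq_zero_of_weightProj_mul_eq_zero le_rfl hne
  obtain ⟨hs', hslen⟩ := mem_standards.1 hs
  obtain ⟨ht', -⟩ := mem_standards.1 ht
  obtain ⟨-, g, -, g', -, hg⟩ := Linked.of_perm (D := D) ht' hs'
    (isSchurian.perm hs ht hx (hmem h) hsy).symm hslen.le
  obtain ⟨hgmem, hginv⟩ := hg _ ((isComplete le_rfl).weightProj_mul_mem le_rfl hs (h * x))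
  have hscalar := isSchurian.scalar ht hx (hmem (g * D.weightProj s * h))
  rw [mul_assoc, mul_assoc, weightProj_mul ht le_rfl ht hgmem, if_pos rfl] at hscalar
  obtain ⟨r, hr⟩ := Submodule.mem_span_singleton.1 hscalar
  have hr₀ : r ≠ 0 := by
    rintro rfl
    rw [← hginv, ← hr, zero_smul, mul_zero] at hsy
    exact hsy rfl
  refine Submodule.mem_span_singleton.2 ⟨r⁻¹ • (g * D.weightProj s), ?_⟩
  rw [smul_eq_mul, smul_eq_mul, smul_mul_assoc, mul_assoc, ← hr, inv_smul_smul₀ hr₀]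

lemma isSimpleModule_span_singleton (htop : D.level n = ⊤) (ht : t ∈ standards ι n)
    (hx : x ∈ D.weightSpace t) (hx₀ : x ≠ 0) : IsSimpleModule A (Submodule.span A {x}) := by
  refine isSimpleModule_iff_isAtom.2
    ⟨fun h => hx₀ (Submodule.span_singleton_eq_bot.1 h), fun N hN => ?_⟩
  by_contra hbot
  obtain ⟨y, hyN, hy₀⟩ := Submodule.exists_mem_ne_zero_of_ne_bot hbot
  refine hN.not_ge (((Submodule.span_singleton_le_iff_mem _ _).2
    (mem_span_singleton_of_mem htop ht hx (hN.le hyN) hy₀)).trans ?_)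
  exact (Submodule.span_singleton_le_iff_mem _ _).2 hyN

omit [DecidableEq ι] in
variable (D) in
theorem isSemisimpleRing (htop : D.level n = ⊤) : IsSemisimpleRing A := by
  classical
  refine IsSemisimpleModule.of_sSup_simples_eq_top (top_le_iff.1 fun y _ => ?_)
  rw [← mul_one y, ← (isComplete (D := D) le_rfl).sum_weightProj le_rfl, Finset.mul_sum]
  refine Submodule.sum_mem _ fun t ht => Submodule.smul_mem _ y ?_
  rcases eq_or_ne (D.weightProj t) 0 with h₀ | h₀
  · exact h₀ ▸ zero_mem _
  · have hmem := (isComplete le_rfl).weightProj_mem_weightSpace (D := D) le_rfl ht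
    exact le_sSup (a := Submodule.span A {D.weightProj t})
      (isSimpleModule_span_singleton htop ht hmem h₀) (Submodule.mem_span_singleton_self _)

end CyclotomicHecke.SeparatedDatum

/-! ### Spectral idempotents -/

namespace CyclotomicHecke

section SpectralIdempotents

open Polynomial

variable {K A ι : Type*} [Field K] [Ring A] [Algebra K A] [Fintype ι] {v : ι → K} {x : A}

/-- The projection onto the `v j`-eigenspace of a diagonalisable element `x` with distinct
eigenvalues `v`, given by Lagrange interpolation. -/
def spectralIdem (v : ι → K) (x : A) (j : ι) : A := aeval x (Lagrange.basis Finset.univ v j)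

lemma spectralIdem_mem (j : ι) : spectralIdem v x j ∈ Algebra.adjoin K {x} :=
  aeval_mem_adjoin_singleton _ _

lemma sum_spectralIdem [Nonempty ι] (hv : Function.Injective v) : ∑ j, spectralIdem v x j = 1 := by
  simp only [spectralIdem]
  rw [← map_sum, Lagrange.sum_basis hv.injOn Finset.univ_nonempty, map_one]

section Root

variable (hx : aeval x (∏ j, (X - C (v j))) = 0)
include hx

lemma mul_spectralIdem (j : ι) : x * spectralIdem v x j = v j • spectralIdem v x j := by
  have hbasis : (X - C (v j)) * Lagrange.basis Finset.univ v j =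
      C (∏ l ∈ Finset.univ.erase j, (v j - v l)⁻¹) * ∏ l, (X - C (v l)) := by
    rw [Lagrange.basis, map_prod, ← Finset.mul_prod_erase _ _ (Finset.mem_univ j)]
    simp only [Lagrange.basisDivisor, Finset.prod_mul_distrib]
    ring
  have h := congrArg (aeval x) hbasis
  rw [map_mul, map_mul, hx, mul_zero, map_sub, aeval_X, aeval_C, sub_mul, sub_eq_zero,
    ← Algebra.smul_def] at h
  exact h

lemma spectralIdem_mul (j : ι) : spectralIdem v x j * x = v j • spectralIdem v x j := by
  rw [← mul_spectralIdem hx]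
  exact commute_of_mem_adjoin_singleton (spectralIdem_mem j) (Commute.refl x)

lemma aeval_mul_spectralIdem (p : K[X]) (j : ι) :
    aeval x p * spectralIdem v x j = p.eval (v j) • spectralIdem v x j := by
  induction p using Polynomial.induction_on with
  | C c => rw [aeval_C, eval_C, Algebra.smul_def]
  | add p p' hp hp' => rw [map_add, add_mul, hp, hp', eval_add, add_smul]
  | monomial d c ih =>
    rw [pow_succ, ← mul_assoc, map_mul, aeval_X, mul_assoc, mul_spectralIdem hx, mul_smul_comm, ih,
      smul_smul, eval_mul_X, mul_comm]

lemma spectralIdem_mul_self (hv : Function.Injective v) (j : ι) :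
    spectralIdem v x j * spectralIdem v x j = spectralIdem v x j := by
  nth_rewrite 1 [spectralIdem]
  rw [aeval_mul_spectralIdem hx, Lagrange.eval_basis_self hv.injOn (Finset.mem_univ j), one_smul]

lemma spectralIdem_mul_of_ne {j l : ι} (hjl : j ≠ l) :
    spectralIdem v x j * spectralIdem v x l = 0 := by
  nth_rewrite 1 [spectralIdem]
  rw [aeval_mul_spectralIdem hx, Lagrange.eval_basis_of_ne hjl (Finset.mem_univ l), zero_smul]

end Root

/-- The projection onto the kernel of a diagonalisable element `x` with eigenvalues `v`; it is `0`
if no `v j` vanishes. -/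
def kernelIdem (v : ι → K) (x : A) : A := ∑ j, (if v j = 0 then (1 : K) else 0) • spectralIdem v x j

lemma kernelIdem_mem : kernelIdem v x ∈ Algebra.adjoin K {x} :=
  Subalgebra.sum_mem _ fun j _ => Subalgebra.smul_mem _ (spectralIdem_mem j) _

section Root

variable (hx : aeval x (∏ j, (X - C (v j))) = 0)
include hx

lemma kernelIdem_mul : kernelIdem v x * x = 0 := by
  rw [kernelIdem, Finset.sum_mul]
  refine Finset.sum_eq_zero fun j _ => ?_
  rw [smul_mul_assoc, spectralIdem_mul hx, smul_smul]
  split_ifs with hj <;> simp [hj]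

lemma mul_kernelIdem : x * kernelIdem v x = 0 := by
  rw [← kernelIdem_mul hx]
  exact (commute_of_mem_adjoin_singleton kernelIdem_mem (Commute.refl x)).symm

lemma kernelIdem_mul_spectralIdem (hv : Function.Injective v) (j : ι) :
    kernelIdem v x * spectralIdem v x j =
      (if v j = 0 then (1 : K) else 0) • spectralIdem v x j := by
  rw [kernelIdem, Finset.sum_mul, Finset.sum_eq_single j]
  · rw [smul_mul_assoc, spectralIdem_mul_self hx hv]
  · intro l _ hl
    rw [smul_mul_assoc, spectralIdem_mul_of_ne hx hl, smul_zero]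
  · exact fun hj => absurd (Finset.mem_univ j) hj

end Root

theorem HeckeRelations.isSemisimpleRing_of_separated [Nonempty ι] {q : K} {n : ℕ} {a : A}
    {T : ℕ → A} (H : HeckeRelations q n a T) (ha : aeval a (∏ j, (X - C (v j))) = 0)
    (hq : q ≠ 0) (hn : 1 ≤ n) (hpow : ∀ d, 1 ≤ d → d ≤ n → q ^ d ≠ 1)
    (hsep : ∀ i : ℤ, i.natAbs < n → ∀ j j', j ≠ j' → q ^ i * v j ≠ v j')
    (htop : parabolic K a T n = ⊤) : IsSemisimpleRing A := by
  have hv : Function.Injective v := by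
    intro j j' h
    by_contra hne
    exact hsep 0 (by rw [Int.natAbs_zero]; omega) j j' hne (by rw [zpow_zero, one_mul, h])
  let D : SeparatedDatum K A ι n :=
    { q := q, v := v, a := a, T := T, z := kernelIdem v a
      relations := H
      q_ne_zero := hq
      n_pos := hn
      q_pow_ne_one := hpow
      zpow_mul_ne := hsep
      z_mul_a := kernelIdem_mul ha
      a_mul_z := mul_kernelIdem ha
      z_mem := kernelIdem_mem
      exists_eigen_decomposition := fun x => by
        refine ⟨fun j => spectralIdem v a j * x, ?_, fun j => ⟨?_, ?_⟩⟩
        · rw [← Finset.sum_mul, sum_spectralIdem hv, one_mul]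
        · rw [← mul_assoc, mul_spectralIdem ha, smul_mul_assoc]
        · rw [← mul_assoc, kernelIdem_mul_spectralIdem ha hv, smul_mul_assoc] }
  exact D.isSemisimpleRing htop

end SpectralIdempotents

end CyclotomicHecke

/-! ### Averaging in the case `q = 1` -/

namespace CyclotomicHecke

section Averaging

variable {K A R : Type*} [Field K] [Ring A] [Algebra K A]

/-- The elements of `A` whose left multiplications commute with the linear map `p`. -/
def equivariance (p : Module.End K A) : Subalgebra K A :=
  (Subalgebra.centralizer K {p}).comap (Algebra.lmul K A)

lemma mem_equivariance {p : Module.End K A} {h : A} :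
    h ∈ equivariance p ↔ ∀ x, p (h * x) = h * p x := by
  rw [equivariance, Subalgebra.mem_comap, Subalgebra.mem_centralizer_iff]
  exact ⟨fun hp x => LinearMap.congr_fun (hp p rfl) x, fun hp _ hg => hg ▸ LinearMap.ext hp⟩

/-- The map `x ↦ ∑ r, b r * p (c r * x)`. Averaging over a finite group and compressing by a
complete family of orthogonal idempotents are special cases. -/
def average (s : Finset R) (b c : R → A) (p : Module.End K A) : Module.End K A :=
  ∑ r ∈ s, LinearMap.mulLeft K (b r) ∘ₗ p ∘ₗ LinearMap.mulLeft K (c r)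

lemma average_apply (s : Finset R) (b c : R → A) (p : Module.End K A) (x : A) :
    average s b c p x = ∑ r ∈ s, b r * p (c r * x) := by
  simp only [average, LinearMap.sum_apply, LinearMap.comp_apply, LinearMap.mulLeft_apply]

lemma isProj_average {U : Submodule A A} {p : Module.End K A}
    (hp : LinearMap.IsProj (U.restrictScalars K) p) {s : Finset R} {b c : R → A}
    (hbc : ∑ r ∈ s, b r * c r = 1) :
    LinearMap.IsProj (U.restrictScalars K) (average s b c p) where
  map_mem x := by
    rw [average_apply]
    exact U.sum_mem fun r _ => U.smul_mem (b r) (hp.map_mem _)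
  map_id x hx := by
    have hterm : ∀ r ∈ s, b r * p (c r * x) = b r * c r * x := fun r _ => by
      rw [← smul_eq_mul (c r), hp.map_id _ (U.smul_mem (c r) hx), smul_eq_mul, mul_assoc]
    rw [average_apply, Finset.sum_congr rfl hterm, ← Finset.sum_mul, hbc, one_mul]

lemma mem_equivariance_average {p : Module.End K A} {s : Finset R} {b c : R → A} {g : A}
    (σ : Equiv.Perm R) (hσ : ∀ r, r ∈ s ↔ σ r ∈ s)
    (hg : ∀ r ∈ s, ∃ h ∈ equivariance p, g * b r = b (σ r) * h ∧ c (σ r) * g = h * c r) :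
    g ∈ equivariance (average s b c p) := by
  rw [mem_equivariance]
  intro x
  rw [average_apply, average_apply, Finset.mul_sum]
  refine (Finset.sum_equiv σ hσ fun r hr => ?_).symm
  obtain ⟨h, hp, hb, hc⟩ := hg r hr
  rw [← mul_assoc, hb, mul_assoc, ← mem_equivariance.1 hp, ← mul_assoc h, ← hc, mul_assoc]

/-- The average over the conjugates of `p` by the units `c r`, as in Maschke's theorem. -/
def transfer (s : Finset R) (c : R → A) (p : Module.End K A) : Module.End K A :=
  average s (fun r => (s.card : K)⁻¹ • c r) (fun r => Ring.inverse (c r)) p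

lemma isProj_transfer {U : Submodule A A} {p : Module.End K A}
    (hp : LinearMap.IsProj (U.restrictScalars K) p) {s : Finset R} (hs : (s.card : K) ≠ 0)
    {c : R → A} (hc : ∀ r ∈ s, IsUnit (c r)) :
    LinearMap.IsProj (U.restrictScalars K) (transfer s c p) := by
  refine isProj_average hp ?_
  have hterm : ∀ r ∈ s, ((s.card : K)⁻¹ • c r) * Ring.inverse (c r) = (s.card : K)⁻¹ • (1 : A) :=
    fun r hr => by rw [smul_mul_assoc, Ring.mul_inverse_cancel _ (hc r hr)]
  rw [Finset.sum_congr rfl hterm, Finset.sum_const, ← Nat.cast_smul_eq_nsmul K, smul_smul,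
    mul_inv_cancel₀ hs, one_smul]

lemma mem_equivariance_transfer {p : Module.End K A} {s : Finset R} {c : R → A}
    (hc : ∀ r ∈ s, IsUnit (c r)) {g : A} (σ : Equiv.Perm R) (hσ : ∀ r, r ∈ s ↔ σ r ∈ s)
    (hg : ∀ r ∈ s, ∃ h ∈ equivariance p, g * c r = c (σ r) * h) :
    g ∈ equivariance (transfer s c p) := by
  refine mem_equivariance_average σ hσ fun r hr => ?_
  obtain ⟨h, hh, hgc⟩ := hg r hr
  refine ⟨h, hh, by rw [mul_smul_comm, hgc, smul_mul_assoc], ?_⟩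
  rw [Ring.eq_mul_inverse_iff_mul_eq _ _ _ (hc r hr), mul_assoc, hgc, ← mul_assoc,
    Ring.inverse_mul_cancel _ (hc (σ r) ((hσ r).1 hr)), one_mul]

lemma isSemisimpleRing_of_exists_isProj
    (h : ∀ U : Submodule A A, ∃ p : Module.End K A,
      LinearMap.IsProj (U.restrictScalars K) p ∧ equivariance p = ⊤) : IsSemisimpleRing A := by
  refine (isSemisimpleModule_iff A A).2 ⟨fun U => ?_⟩
  obtain ⟨p, hp, heq⟩ := h U
  have hsmul : ∀ g x : A, p (g • x) = g • p x :=
    fun g x => mem_equivariance.1 (heq ▸ Algebra.mem_top : g ∈ equivariance p) x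
  let pA : A →ₗ[A] A := { p with map_smul' := hsmul }
  have hpA : LinearMap.IsProj U pA := ⟨hp.map_mem, hp.map_id⟩
  exact ⟨LinearMap.ker pA, hpA.isCompl⟩

end Averaging

section Maschke

open Polynomial

variable {K A : Type*} [Field K] [Ring A] [Algebra K A]

/-- The product `T_r T_{r+1} ⋯ T_{i-1}`. For `q = 1` these represent the left cosets of the
symmetric group on `i` letters in the one on `i + 1` letters. -/
def cosetRep (T : ℕ → A) (r i : ℕ) : A := ((List.Ico r i).map T).prod

section CosetRep

variable {T : ℕ → A}

lemma cosetRep_self (i : ℕ) : cosetRep T i i = 1 := by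
  rw [cosetRep, List.Ico.self_empty, List.map_nil, List.prod_nil]

lemma cosetRep_succ {r i : ℕ} (hri : r ≤ i) : cosetRep T r (i + 1) = cosetRep T r i * T i := by
  rw [cosetRep, List.Ico.succ_top hri, List.map_append, List.prod_append, List.map_singleton,
    List.prod_singleton, cosetRep]

lemma cosetRep_eq_mul {r i : ℕ} (hri : r < i) : cosetRep T r i = T r * cosetRep T (r + 1) i := by
  rw [cosetRep, List.Ico.eq_cons hri, List.map_cons, List.prod_cons, cosetRep]

lemma commute_cosetRep {x : A} {r i : ℕ} (hx : ∀ l, r ≤ l → l < i → Commute x (T l)) :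
    Commute x (cosetRep T r i) := by
  refine Commute.list_prod_right _ _ fun y hy => ?_
  obtain ⟨l, hl, rfl⟩ := List.mem_map.1 hy
  rw [List.Ico.mem] at hl
  exact hx l hl.1 hl.2

end CosetRep

lemma aeval_mul_eq_mul_aeval {x y c : A} (h : x * c = c * y) (p : K[X]) :
    aeval x p * c = c * aeval y p := by
  induction p using Polynomial.induction_on with
  | C r => rw [aeval_C, aeval_C, Algebra.commutes]
  | add p p' hp hp' => rw [map_add, map_add, add_mul, mul_add, hp, hp']
  | monomial d r ih =>
    rw [pow_succ, ← mul_assoc, map_mul (aeval x) _ X, map_mul (aeval y) _ X, aeval_X, aeval_X,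
      mul_assoc, h, ← mul_assoc, ih, mul_assoc]

namespace HeckeRelations

variable {n : ℕ} {a : A} {T : ℕ → A} (H : HeckeRelations (1 : K) n a T)
include H

lemma gen_mul_self {i : ℕ} (hi : i + 1 < n) : T i * T i = 1 := by
  rw [H.quad i hi, sub_self, zero_smul, zero_add, one_smul]

lemma isUnit_cosetRep {r i : ℕ} (hri : r ≤ i) (hi : i < n) : IsUnit (cosetRep T r i) := by
  induction i, hri using Nat.le_induction with
  | base => rw [cosetRep_self]; exact isUnit_one
  | succ i hri ih =>
    rw [cosetRep_succ hri]
    exact (ih (by omega)).mul ⟨⟨T i, T i, H.gen_mul_self hi, H.gen_mul_self hi⟩, rfl⟩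

lemma zeroth_mul_cosetRep {i : ℕ} (hi : i < n) :
    a * cosetRep T 0 i = cosetRep T 0 i * murphy (1 : K) a T i := by
  induction i with
  | zero => rw [cosetRep_self, mul_one, one_mul, murphy]
  | succ i ih =>
    have hmurphy : T i * murphy (1 : K) a T (i + 1) = murphy (1 : K) a T i * T i := by
      rw [murphy, inv_one, one_smul, mul_assoc, ← mul_assoc, H.gen_mul_self hi, one_mul]
    rw [cosetRep_succ (Nat.zero_le i), ← mul_assoc, ih (by omega), mul_assoc, mul_assoc, hmurphy]

lemma aeval_murphy_eq_zero {p : K[X]} (hp : aeval a p = 0) {i : ℕ} (hi : i < n) :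
    aeval (murphy (1 : K) a T i) p = 0 := by
  have h := aeval_mul_eq_mul_aeval (H.zeroth_mul_cosetRep hi) p
  rw [hp, zero_mul] at h
  exact (H.isUnit_cosetRep (Nat.zero_le i) hi).mul_right_eq_zero.1 h.symm

lemma gen_succ_mul_cosetRep {r l i : ℕ} (hrl : r ≤ l) (hli : l + 2 ≤ i) (hi : i < n) :
    T (l + 1) * cosetRep T r i = cosetRep T r i * T l := by
  induction i, hli using Nat.le_induction with
  | base =>
    have hcomm : Commute (T (l + 1)) (cosetRep T r l) :=
      commute_cosetRep fun j _ hj => (H.commute j (l + 1) (by omega) (by omega)).symm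
    rw [cosetRep_succ (by omega), cosetRep_succ hrl]
    calc T (l + 1) * (cosetRep T r l * T l * T (l + 1))
        = T (l + 1) * cosetRep T r l * (T l * T (l + 1)) := by simp only [mul_assoc]
      _ = cosetRep T r l * (T (l + 1) * T l * T (l + 1)) := by rw [hcomm.eq]; simp only [mul_assoc]
      _ = cosetRep T r l * T l * T (l + 1) * T l := by
          rw [H.braid l (by omega)]; simp only [mul_assoc]
  | succ i hli ih =>
    rw [cosetRep_succ (by omega), ← mul_assoc, ih (by omega), mul_assoc, mul_assoc,
      (H.commute l i (by omega) (by omega)).eq]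

lemma exists_gen_mul_cosetRep {j r i : ℕ} (hji : j < i) (hri : r ≤ i) (hi : i < n) :
    ∃ h ∈ parabolic K a T i,
      T j * cosetRep T r i = cosetRep T (Equiv.swap j (j + 1) r) i * h := by
  rcases lt_trichotomy r j with hrj | rfl | hjr
  · obtain ⟨l, rfl⟩ : ∃ l, j = l + 1 := ⟨j - 1, by omega⟩
    rw [Equiv.swap_apply_of_ne_of_ne (by omega) (by omega)]
    exact ⟨T l, mem_parabolic_gen (by omega),
      H.gen_succ_mul_cosetRep (by omega) (by omega) hi⟩
  · rw [Equiv.swap_apply_left, cosetRep_eq_mul hji, ← mul_assoc, H.gen_mul_self (by omega)]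
    exact ⟨1, one_mem _, by rw [one_mul, mul_one]⟩
  · obtain rfl | hjr := Nat.eq_or_lt_of_le hjr
    · rw [Nat.succ_eq_add_one, Equiv.swap_apply_right, cosetRep_eq_mul hji]
      exact ⟨1, one_mem _, (mul_one _).symm⟩
    · rw [Equiv.swap_apply_of_ne_of_ne (by omega) (by omega)]
      exact ⟨T j, mem_parabolic_gen (by omega),
        commute_cosetRep fun l hl hli => H.commute j l (by omega) (by omega)⟩

lemma exists_zeroth_mul_cosetRep {p : Module.End K A} {r i : ℕ} (hri : r ≤ i) (hi : i < n)
    (hp : parabolic K a T i ≤ equivariance p) (hL : murphy (1 : K) a T i ∈ equivariance p) :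
    ∃ h ∈ equivariance p, a * cosetRep T r i = cosetRep T r i * h := by
  rcases Nat.eq_zero_or_pos r with rfl | hr
  · exact ⟨_, hL, H.zeroth_mul_cosetRep hi⟩
  · exact ⟨a, hp (mem_parabolic_zeroth (by omega)),
      commute_cosetRep fun l hl hli => H.commute_zero l (by omega) (by omega)⟩

lemma exists_isProj_murphy_mem {ι : Type*} [Fintype ι] [Nonempty ι] {v : ι → K}
    (hv : Function.Injective v) (ha : aeval a (∏ j, (X - C (v j))) = 0) {U : Submodule A A} {i : ℕ}
    (hi : i < n) {p : Module.End K A} (hU : LinearMap.IsProj (U.restrictScalars K) p)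
    (hp : parabolic K a T i ≤ equivariance p) :
    ∃ p' : Module.End K A, LinearMap.IsProj (U.restrictScalars K) p' ∧
      parabolic K a T i ≤ equivariance p' ∧ murphy (1 : K) a T i ∈ equivariance p' := by
  have hL := H.aeval_murphy_eq_zero ha hi
  set E := spectralIdem v (murphy (1 : K) a T i)
  refine ⟨average Finset.univ E E p, isProj_average hU ?_, fun h hh => ?_, ?_⟩
  · rw [Finset.sum_congr rfl fun j _ => spectralIdem_mul_self hL hv j, sum_spectralIdem hv]
  · have hcomm : ∀ j, Commute (E j) h := fun j =>
      commute_of_mem_adjoin_singleton (spectralIdem_mem j) (H.commute_murphy_parabolic hi hh)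
    exact mem_equivariance_average (Equiv.refl ι) (fun _ => Iff.rfl) fun j _ =>
      ⟨h, hp hh, (hcomm j).symm, hcomm j⟩
  · refine mem_equivariance_average (Equiv.refl ι) (fun _ => Iff.rfl) fun j _ =>
      ⟨algebraMap K A (v j), Subalgebra.algebraMap_mem _ _, ?_, ?_⟩
    · rw [mul_spectralIdem hL, ← Algebra.commutes, Algebra.smul_def]; rfl
    · rw [← Algebra.smul_def]; exact spectralIdem_mul hL j

lemma exists_isProj_parabolic_succ {U : Submodule A A} {i : ℕ} (hi : i < n)
    (hchar : ((i + 1 : ℕ) : K) ≠ 0) {p : Module.End K A}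
    (hU : LinearMap.IsProj (U.restrictScalars K) p) (hp : parabolic K a T i ≤ equivariance p)
    (hL : murphy (1 : K) a T i ∈ equivariance p) :
    ∃ p' : Module.End K A, LinearMap.IsProj (U.restrictScalars K) p' ∧
      parabolic K a T (i + 1) ≤ equivariance p' := by
  have hunit : ∀ r ∈ Finset.range (i + 1), IsUnit (cosetRep T r i) := fun r hr =>
    H.isUnit_cosetRep (Finset.mem_range_succ_iff.1 hr) hi
  refine ⟨transfer (Finset.range (i + 1)) (fun r => cosetRep T r i) p,
    isProj_transfer hU (by rwa [Finset.card_range]) hunit, Algebra.adjoin_le ?_⟩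
  rintro g (⟨-, rfl⟩ | ⟨j, hj, rfl⟩)
  · exact mem_equivariance_transfer hunit (Equiv.refl ℕ) (fun _ => Iff.rfl) fun r hr =>
      H.exists_zeroth_mul_cosetRep (Finset.mem_range_succ_iff.1 hr) hi hp hL
  · have hswap : ∀ r,
        r ∈ Finset.range (i + 1) ↔ Equiv.swap j (j + 1) r ∈ Finset.range (i + 1) := by
      intro r
      rw [Finset.mem_range, Finset.mem_range, Equiv.swap_apply_def]
      split_ifs <;> omega
    refine mem_equivariance_transfer hunit (Equiv.swap j (j + 1)) hswap fun r hr => ?_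
    obtain ⟨h, hh, heq⟩ :=
      H.exists_gen_mul_cosetRep (by omega : j < i) (Finset.mem_range_succ_iff.1 hr) hi
    exact ⟨h, hp hh, heq⟩

variable {ι : Type*} [Fintype ι] [Nonempty ι] {v : ι → K} (hv : Function.Injective v)
  (ha : aeval a (∏ j, (X - C (v j))) = 0) (hchar : ∀ i : ℕ, 1 ≤ i → i ≤ n → (i : K) ≠ 0)
include hv ha hchar

lemma exists_isProj_parabolic_le (U : Submodule A A) {i : ℕ} (hi : i ≤ n) :
    ∃ p : Module.End K A, LinearMap.IsProj (U.restrictScalars K) p ∧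
      parabolic K a T i ≤ equivariance p := by
  induction i with
  | zero =>
    obtain ⟨V, hV⟩ := Submodule.exists_isCompl (U.restrictScalars K)
    refine ⟨_, ⟨Submodule.projection_apply_mem hV,
      fun _ => Submodule.projection_apply_of_mem_left hV⟩, Algebra.adjoin_le ?_⟩
    rintro x (⟨h, -⟩ | ⟨j, hj, -⟩) <;> omega
  | succ i ih =>
    obtain ⟨p, hU, hp⟩ := ih (by omega)
    obtain ⟨p', hU', hp', hL⟩ := H.exists_isProj_murphy_mem hv ha hi hU hp
    exact H.exists_isProj_parabolic_succ hi (hchar _ (by omega) hi) hU' hp' hL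

theorem isSemisimpleRing_of_q_eq_one (htop : parabolic K a T n = ⊤) : IsSemisimpleRing A := by
  refine isSemisimpleRing_of_exists_isProj (K := K) fun U => ?_
  obtain ⟨p, hU, hp⟩ := H.exists_isProj_parabolic_le hv ha hchar U le_rfl
  exact ⟨p, hU, top_le_iff.1 (htop ▸ hp)⟩

end HeckeRelations

end Maschke

end CyclotomicHecke

/-! ### Word modules -/

namespace CyclotomicHecke

section WordFunctional

variable {K P α I : Type*} [Field K]

/-- The functional `f ↦ ∑ x ∈ s, c x * f (W x)` on functions of words, attached to a finite family
of words `W` with coefficients `c`. -/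
def wordFunctional (s : Finset I) (c : I → K) (W : I → P → α) :
    ((P → α) → K) →ₗ[K] K where
  toFun f := ∑ x ∈ s, c x * f (W x)
  map_add' f g := by simp only [Pi.add_apply, mul_add, Finset.sum_add_distrib]
  map_smul' r f := by
    simp only [Pi.smul_apply, smul_eq_mul, RingHom.id_apply, Finset.mul_sum, mul_left_comm]

variable {s : Finset I} {c : I → K} {W : I → P → α}

lemma wordFunctional_apply (f : (P → α) → K) :
    wordFunctional s c W f = ∑ x ∈ s, c x * f (W x) := rfl

lemma wordFunctional_single [DecidableEq (P → α)] (hW : Set.InjOn W s) {x : I} (hx : x ∈ s) :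
    wordFunctional s c W (Pi.single (W x) 1) = c x := by
  rw [wordFunctional_apply, Finset.sum_eq_single_of_mem x hx, Pi.single_eq_same, mul_one]
  intro y hy hyx
  rw [Pi.single_eq_of_ne (hW.ne hy hx hyx), mul_zero]

end WordFunctional

section WordModule

variable {K P α : Type*} [DecidableEq P]

lemma comp_swap_comp_swap (i j : P) (w : P → α) :
    (w ∘ Equiv.swap i j) ∘ Equiv.swap i j = w := by
  funext p
  simp only [Function.comp_apply, Equiv.swap_apply_self]

lemma comp_swap_eq_self {i j : P} {w : P → α} (h : w i = w j) : w ∘ Equiv.swap i j = w := by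
  funext p
  rw [Function.comp_apply, Equiv.swap_apply_def]
  split_ifs <;> simp_all

lemma comp_swap_comm {i j k l : P} (hik : i ≠ k) (hil : i ≠ l) (hjk : j ≠ k) (hjl : j ≠ l)
    (w : P → α) :
    (w ∘ Equiv.swap i j) ∘ Equiv.swap k l = (w ∘ Equiv.swap k l) ∘ Equiv.swap i j := by
  funext p
  simp only [Function.comp_apply, Equiv.swap_apply_def]
  grind

lemma comp_swap_braid {i j l : P} (hij : i ≠ j) (hjl : j ≠ l) (hil : i ≠ l) (w : P → α) :
    ((w ∘ Equiv.swap i j) ∘ Equiv.swap j l) ∘ Equiv.swap i j =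
      ((w ∘ Equiv.swap j l) ∘ Equiv.swap i j) ∘ Equiv.swap j l := by
  funext p
  simp only [Function.comp_apply, Equiv.swap_apply_def]
  grind

variable [Field K] [LinearOrder α]

/-- The generator of the Hecke algebra exchanging the letters at the positions `i` and `j`, acting
on functions of words `P → α`. -/
def heckeOp (q : K) (i j : P) : Module.End K ((P → α) → K) where
  toFun f w := if w i < w j then f (w ∘ Equiv.swap i j) + (q - 1) * f w
    else q * f (w ∘ Equiv.swap i j)
  map_add' f g := by
    funext w
    simp only [Pi.add_apply]
    split_ifs <;> ring
  map_smul' c f := by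
    funext w
    simp only [Pi.smul_apply, smul_eq_mul, RingHom.id_apply]
    split_ifs <;> ring

lemma heckeOp_apply (q : K) (i j : P) (f : (P → α) → K) (w : P → α) :
    heckeOp q i j f w = if w i < w j then f (w ∘ Equiv.swap i j) + (q - 1) * f w
      else q * f (w ∘ Equiv.swap i j) := rfl

lemma heckeOp_mul_self (q : K) (i j : P) :
    heckeOp q i j * heckeOp q i j =
      (q - 1) • heckeOp q i j + q • (1 : Module.End K ((P → α) → K)) := by
  refine LinearMap.ext fun f => funext fun w => ?_
  simp only [Module.End.mul_apply, LinearMap.add_apply, LinearMap.smul_apply, Module.End.one_apply,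
    Pi.add_apply, Pi.smul_apply, smul_eq_mul, heckeOp_apply, Function.comp_apply,
    Equiv.swap_apply_left, Equiv.swap_apply_right, comp_swap_comp_swap]
  rcases lt_trichotomy (w i) (w j) with h | h | h
  · rw [if_neg h.not_gt, if_pos h, if_pos h]; ring
  · simp only [h, lt_irrefl, if_false, comp_swap_eq_self h]; ring
  · simp only [if_neg h.not_gt, if_pos h]; ring

lemma commute_heckeOp (q : K) {i j k l : P} (hik : i ≠ k) (hil : i ≠ l) (hjk : j ≠ k)
    (hjl : j ≠ l) : Commute (heckeOp (α := α) q i j) (heckeOp q k l) := by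
  refine LinearMap.ext fun f => funext fun w => ?_
  simp only [Module.End.mul_apply, heckeOp_apply, Function.comp_apply,
    Equiv.swap_apply_of_ne_of_ne hik hil, Equiv.swap_apply_of_ne_of_ne hjk hjl,
    Equiv.swap_apply_of_ne_of_ne hik.symm hjk.symm, Equiv.swap_apply_of_ne_of_ne hil.symm hjl.symm,
    comp_swap_comm hik hil hjk hjl]
  split_ifs <;> ring

lemma heckeOp_braid (q : K) {i j l : P} (hij : i ≠ j) (hjl : j ≠ l) (hil : i ≠ l) :
    heckeOp (α := α) q j l * heckeOp q i j * heckeOp q j l =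
      heckeOp q i j * heckeOp q j l * heckeOp q i j := by
  refine LinearMap.ext fun f => funext fun w => ?_
  simp only [Module.End.mul_apply, heckeOp_apply, Function.comp_apply,
    Equiv.swap_apply_left, Equiv.swap_apply_right, comp_swap_comp_swap,
    Equiv.swap_apply_of_ne_of_ne hij hil, Equiv.swap_apply_of_ne_of_ne hil.symm hjl.symm,
    comp_swap_braid hij hjl hil]
  have swap_ij : w i = w j → w ∘ Equiv.swap i j = w := comp_swap_eq_self
  have swap_jl : w j = w l → w ∘ Equiv.swap j l = w := comp_swap_eq_self
  rcases lt_trichotomy (w i) (w j) with hlt_ij | heq_ij | hgt_ij <;>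
  rcases lt_trichotomy (w j) (w l) with hlt_jl | heq_jl | hgt_jl <;>
  rcases lt_trichotomy (w i) (w l) with hlt_il | heq_il | hgt_il <;> grind

lemma heckeOp_apply_of_eq (q : K) {i j : P} (f : (P → α) → K) {w : P → α} (h : w i = w j) :
    heckeOp q i j f w = q * f w := by
  rw [heckeOp_apply, if_neg h.not_lt, comp_swap_eq_self h]

lemma apply_comp_swap_of_heckeOp_eq_smul {q : K} (hq : q ≠ 0) {i j : P} {f : (P → α) → K}
    (hf : heckeOp q i j f = q • f) (w : P → α) : f (w ∘ Equiv.swap i j) = f w := by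
  have eval_of_not_lt : ∀ w : P → α, ¬ w i < w j → f (w ∘ Equiv.swap i j) = f w := by
    intro w h
    have hw := congrFun hf w
    rw [heckeOp_apply, if_neg h] at hw
    exact mul_left_cancel₀ hq hw
  by_cases h : w i < w j
  · rw [← eval_of_not_lt (w ∘ Equiv.swap i j) (by simpa using h.le), comp_swap_comp_swap]
  · exact eval_of_not_lt w h

variable {I : Type*} {s : Finset I} {c : I → K} {W : I → P → α}

lemma wordFunctional_heckeOp {q : K} {i j : P} {σ : I → I} (hσ : Function.Involutive σ)
    (hs : ∀ x ∈ s, σ x ∈ s) (hW : ∀ x, W (σ x) = W x ∘ Equiv.swap i j)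
    (hc : ∀ x ∈ s, W x i < W x j → c x = q * c (σ x)) (f : (P → α) → K) :
    wordFunctional s c W (heckeOp q i j f) = q * wordFunctional s c W f := by
  have term_eq_zero : ∀ x, W x i = W x j →
      c x * heckeOp q i j f (W x) - q * (c x * f (W x)) = 0 := by
    intro x h
    rw [heckeOp_apply_of_eq q f h]; ring
  have term_add_term : ∀ x ∈ s, W x i < W x j →
      c x * heckeOp q i j f (W x) - q * (c x * f (W x)) +
        (c (σ x) * heckeOp q i j f (W (σ x)) - q * (c (σ x) * f (W (σ x)))) = 0 := by
    intro x hx h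
    rw [heckeOp_apply, heckeOp_apply, if_pos h, if_neg (by simpa [hW] using h.le), hW,
      comp_swap_comp_swap, hc x hx h]
    ring
  rw [← sub_eq_zero, wordFunctional_apply, wordFunctional_apply, Finset.mul_sum,
    ← Finset.sum_sub_distrib]
  refine Finset.sum_involution (fun x _ => σ x) (fun x hx => ?_) (fun x _ hne hfix => hne ?_) hs
    (fun x _ => hσ x)
  · rcases lt_trichotomy (W x i) (W x j) with h | h | h
    · exact term_add_term x hx h
    · rw [term_eq_zero x h, term_eq_zero (σ x) (by simp [hW, h]), add_zero]
    · rw [add_comm]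
      simpa only [hσ x] using term_add_term (σ x) (hs x hx) (by simpa [hW] using h)
  · exact term_eq_zero x (by simpa [hfix] using congrFun (hW x) i)

end WordModule

lemma heckeRelations_heckeOp {K α : Type*} [Field K] [LinearOrder α] (q : K) (n : ℕ)
    {a : Module.End K ((ℕ → α) → K)}
    (hbraid : a * heckeOp q 0 1 * a * heckeOp q 0 1 = heckeOp q 0 1 * a * heckeOp q 0 1 * a)
    (hcomm : ∀ i, 1 ≤ i → Commute a (heckeOp q i (i + 1))) :
    HeckeRelations q n a (fun t => heckeOp q t (t + 1)) where
  quad i _ := heckeOp_mul_self q i (i + 1)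
  braid_zero _ := hbraid
  commute_zero i hi _ := hcomm i hi
  commute i j hij _ := commute_heckeOp q (by lia) (by lia) (by lia) (by lia)
  braid i _ := heckeOp_braid q (by lia) (by lia) (by lia)

end CyclotomicHecke

namespace CyclotomicHecke

universe u v

open Polynomial

section Character

variable {K A M : Type*} [Field K] [Ring A] [Algebra K A] [AddCommGroup M] [Module K M]
  [IsSemisimpleRing A]

lemma exists_eigenvector_of_character (χ : A →ₐ[K] K) :
    ∃ e : A, (∀ h, h * e = χ h • e) ∧ χ e = 1 := by
  obtain ⟨J, hJ⟩ := exists_isCompl (RingHom.ker χ : Ideal A)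
  obtain ⟨i, hi, e, he, hie⟩ := Submodule.mem_sup.1 (hJ.sup_eq_top ▸ Submodule.mem_top (x := 1))
  have hχe : χ e = 1 := by
    simpa only [map_add, RingHom.mem_ker.1 hi, zero_add, map_one] using congrArg χ hie
  refine ⟨e, fun h => sub_eq_zero.1 ?_, hχe⟩
  have mem_ker : h * e - χ h • e ∈ (RingHom.ker χ : Ideal A) := by
    simp [RingHom.mem_ker, hχe]
  have mem_J : h * e - χ h • e ∈ J := by
    rw [Algebra.smul_def]
    exact J.sub_mem (J.smul_mem h he) (J.smul_mem (algebraMap K A (χ h)) he)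
  exact Submodule.disjoint_def.1 hJ.disjoint _ mem_ker mem_J

/-- In a semisimple algebra the multiplicity of a character as a quotient of a module is its
multiplicity as a submodule. -/
lemma functional_eq_zero_of_eigenvectors (χ : A →ₐ[K] K) (Φ : A →ₐ[K] Module.End K M) {S : Set A}
    (hS : Algebra.adjoin K S = ⊤) (l : M →ₗ[K] K) (hl : ∀ s ∈ S, ∀ x, l (Φ s x) = χ s * l x)
    (heig : ∀ f, (∀ s ∈ S, Φ s f = χ s • f) → l f = 0) : l = 0 := by
  obtain ⟨e, he, hχe⟩ := exists_eigenvector_of_character χ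
  have equivariant : ∀ h : A, ∀ x, l (Φ h x) = χ h * l x := by
    intro h
    induction hS ▸ Algebra.mem_top (R := K) (x := h) using Algebra.adjoin_induction with
    | mem s hs => exact hl s hs
    | algebraMap r => intro x; simp [Algebra.algebraMap_eq_smul_one]
    | add a b _ _ iha ihb => intro x; simp [iha, ihb, add_mul]
    | mul a b _ _ iha ihb => intro x; simp [iha, ihb, mul_assoc]
  refine LinearMap.ext fun x => ?_
  have hzero : l (Φ e x) = 0 := heig (Φ e x) fun s _ => by
    rw [← Module.End.mul_apply, ← map_mul, he, map_smul, LinearMap.smul_apply]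
  rwa [equivariant, hχe, one_mul] at hzero

end Character

/-- `A` is the algebra presented by generators `a`, `T i` (`i + 1 < n`), the relations
`HeckeRelations q n a T` and the equation `P(a) = 0`. The universal property is restricted to
algebras in the universe of `K`, which contains the trivial module and the word modules. -/
structure IsHeckeAlgebra {K : Type u} {A : Type v} [Field K] [Ring A] [Algebra K A] (q : K) (n : ℕ)
    (P : K[X]) (a : A) (T : ℕ → A) : Prop where
  relations : HeckeRelations q n a T
  aeval_eq_zero : aeval a P = 0
  parabolic_eq_top : parabolic K a T n = ⊤
  exists_algHom : ∀ (B : Type u) [Ring B] [Algebra K B] (b : B) (S : ℕ → B),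
    HeckeRelations q n b S → aeval b P = 0 →
      ∃ Φ : A →ₐ[K] B, Φ a = b ∧ ∀ i, i + 1 < n → Φ (T i) = S i

namespace IsHeckeAlgebra

variable {K : Type u} {A : Type v} [Field K] [Ring A] [Algebra K A] {q : K} {n : ℕ}
  {P : K[X]} {a : A} {T : ℕ → A}

lemma exists_character (H : IsHeckeAlgebra q n P a T) {x : K} (hx : P.eval x = 0) :
    ∃ χ : A →ₐ[K] K, χ a = x ∧ ∀ i, i + 1 < n → χ (T i) = q := by
  refine H.exists_algHom K x (fun _ => q) ⟨?_, ?_, ?_, ?_, ?_⟩ (by simpa using hx)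
  · intro i _; simp only [smul_eq_mul]; ring
  · intro _; ring
  · intro i _ _; exact Commute.all _ _
  · intro i _ _ _; exact Commute.all _ _
  · intro i _; ring

lemma functional_eq_zero [IsSemisimpleRing A] (H : IsHeckeAlgebra q n P a T) (hn : 0 < n)
    {x : K} (hx : P.eval x = 0) {M : Type u} [AddCommGroup M] [Module K M] {b : Module.End K M}
    {S : ℕ → Module.End K M} (hrel : HeckeRelations q n b S) (hb : aeval b P = 0) (l : M →ₗ[K] K)
    (hlb : ∀ f, l (b f) = x * l f) (hlS : ∀ i, i + 1 < n → ∀ f, l (S i f) = q * l f)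
    (heig : ∀ f, b f = x • f → (∀ i, i + 1 < n → S i f = q • f) → l f = 0) : l = 0 := by
  obtain ⟨χ, hχa, hχT⟩ := H.exists_character hx
  obtain ⟨Φ, hΦa, hΦT⟩ := H.exists_algHom _ b S hrel hb
  refine functional_eq_zero_of_eigenvectors χ Φ H.parabolic_eq_top l ?_ fun f hf => heig f ?_ ?_
  · rintro s (⟨_, rfl⟩ | ⟨i, hi, rfl⟩) f
    · rw [hΦa, hχa, hlb]
    · rw [hΦT i hi, hχT i hi, hlS i hi]
  · rw [← hΦa, ← hχa]
    exact hf a (Or.inl ⟨hn, rfl⟩)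
  · intro i hi
    rw [← hΦT i hi, ← hχT i hi]
    exact hf (T i) (Or.inr ⟨i, hi, rfl⟩)

end IsHeckeAlgebra

end CyclotomicHecke

namespace CyclotomicHecke

open Polynomial

section SignedWord

variable {P : Type*} [DecidableEq P]

/-- The word `w` with its letter at the position `i` negated. -/
def flipAt (i : P) (w : P → Bool) : P → Bool := Function.update w i (!w i)

lemma flipAt_apply_self (i : P) (w : P → Bool) : flipAt i w i = !w i := Function.update_self ..

lemma flipAt_apply_of_ne {i p : P} (h : p ≠ i) (w : P → Bool) : flipAt i w p = w p :=
  Function.update_of_ne h ..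

lemma flipAt_flipAt (i : P) (w : P → Bool) : flipAt i (flipAt i w) = w := by
  simp only [flipAt, Function.update_self, Bool.not_not, Function.update_idem,
    Function.update_eq_self]

lemma flipAt_comp (σ : Equiv.Perm P) (i : P) (w : P → Bool) :
    flipAt i (w ∘ σ) = flipAt (σ i) w ∘ σ := by
  simp only [flipAt, Function.comp_apply, Function.update_comp_eq_of_injective _ σ.injective]

variable {K : Type*} [Field K]

/-- The first generator of the cyclotomic Hecke algebra acting on functions of words in two
letters, with eigenvalues `x` and `y`; it changes the letter at the position `i`. -/
def flipOp (x y : K) (i : P) : Module.End K ((P → Bool) → K) where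
  toFun f w := if w i then f (flipAt i w) + (x + y) * f w else -(x * y) * f (flipAt i w)
  map_add' f g := by
    funext w
    simp only [Pi.add_apply]
    split_ifs <;> ring
  map_smul' c f := by
    funext w
    simp only [Pi.smul_apply, smul_eq_mul, RingHom.id_apply]
    split_ifs <;> ring

lemma flipOp_apply (x y : K) (i : P) (f : (P → Bool) → K) (w : P → Bool) :
    flipOp x y i f w =
      if w i then f (flipAt i w) + (x + y) * f w else -(x * y) * f (flipAt i w) := rfl

lemma aeval_flipOp_eq_zero {x y : K} {Q : K[X]} (hQ : (X - C x) * (X - C y) ∣ Q) (i : P) :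
    aeval (flipOp x y i) Q = 0 := by
  refine zero_dvd_iff.1 (dvd_trans (zero_dvd_iff.2 ?_) (map_dvd (aeval (flipOp x y i)) hQ))
  refine LinearMap.ext fun f => funext fun w => ?_
  simp only [map_mul, map_sub, aeval_X, aeval_C, Module.End.mul_apply, LinearMap.sub_apply,
    Module.algebraMap_end_apply, map_smul, Pi.sub_apply, Pi.smul_apply, smul_eq_mul, flipOp_apply,
    flipAt_apply_self, flipAt_flipAt, LinearMap.zero_apply, Pi.zero_apply]
  cases w i <;> simp <;> ring

lemma commute_flipOp_heckeOp (q x y : K) {l i j : P} (hli : l ≠ i) (hlj : l ≠ j) :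
    Commute (flipOp x y l) (heckeOp q i j) := by
  refine LinearMap.ext fun f => funext fun w => ?_
  simp only [Module.End.mul_apply, flipOp_apply, heckeOp_apply, flipAt_comp, Function.comp_apply,
    Equiv.swap_apply_of_ne_of_ne hli hlj, flipAt_apply_of_ne hli.symm, flipAt_apply_of_ne hlj.symm]
  split_ifs <;> ring

lemma flipOp_heckeOp_braid (q x y : K) {i j : P} (hij : i ≠ j) :
    flipOp x y i * heckeOp q i j * flipOp x y i * heckeOp q i j =
      heckeOp q i j * flipOp x y i * heckeOp q i j * flipOp x y i := by
  refine LinearMap.ext fun f => funext fun w => ?_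
  have flipAt_comm : flipAt i (flipAt j w) = flipAt j (flipAt i w) := by
    funext p
    simp only [flipAt, Function.update_apply]
    grind
  have swap_flipAt_i : w i ≠ w j → flipAt i w ∘ Equiv.swap i j = flipAt i w := fun h =>
    comp_swap_eq_self (by
      rw [flipAt_apply_self, flipAt_apply_of_ne hij.symm]
      revert h
      cases w i <;> cases w j <;> simp)
  have swap_flipAt_eq : w i = w j → flipAt j w ∘ Equiv.swap i j = flipAt i w := fun h => by
    simpa [comp_swap_eq_self h] using (flipAt_comp (Equiv.swap i j) i w).symm
  simp only [Module.End.mul_apply, flipOp_apply, heckeOp_apply, flipAt_comp, Function.comp_apply,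
    Equiv.swap_apply_left, Equiv.swap_apply_right, flipAt_apply_self, flipAt_apply_of_ne hij,
    flipAt_apply_of_ne hij.symm, comp_swap_comp_swap, flipAt_flipAt]
  have not_lt : ¬ true < false := by decide
  cases hi : w i <;> cases hj : w j <;>
    simp only [hi, hj, not_lt, lt_self_iff_false, Bool.false_lt_true, Bool.not_true, Bool.not_false,
      if_true, if_false, reduceCtorEq, ne_eq, not_true, not_false_iff, forall_const,
      IsEmpty.forall_iff] at * <;>
    simp only [*] <;> ring

end SignedWord

end CyclotomicHecke

namespace CyclotomicHecke

universe u v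

open Polynomial Finset

section SubsetWord

/-- The word in two letters whose letter `true` occurs exactly at the positions in `s`. -/
def subsetWord (s : Finset ℕ) : ℕ → Bool := fun r => decide (r ∈ s)

lemma subsetWord_injective : Function.Injective subsetWord := fun s t h =>
  Finset.ext fun r => by simpa [subsetWord] using congrFun h r

lemma subsetWord_map_swap (i j : ℕ) (s : Finset ℕ) :
    subsetWord (s.map (Equiv.swap i j).toEmbedding) = subsetWord s ∘ Equiv.swap i j := by
  funext r
  simp only [subsetWord, Function.comp_apply, mem_map_equiv, Equiv.symm_swap]

lemma flipAt_subsetWord_insert {i : ℕ} {s : Finset ℕ} (hi : i ∉ s) :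
    flipAt i (subsetWord (insert i s)) = subsetWord s := by
  funext r
  rcases eq_or_ne r i with rfl | hr
  · simp [flipAt_apply_self, subsetWord, hi]
  · simp [flipAt_apply_of_ne hr, subsetWord, hr]

lemma map_swap_map_swap (i j : ℕ) (s : Finset ℕ) :
    (s.map (Equiv.swap i j).toEmbedding).map (Equiv.swap i j).toEmbedding = s := by
  ext r
  simp only [mem_map_equiv, Equiv.symm_swap, Equiv.swap_apply_self]

lemma map_swap_mem_powerset_range {n i : ℕ} (hi : i + 1 < n) {s : Finset ℕ}
    (hs : s ∈ (range n).powerset) :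
    s.map (Equiv.swap i (i + 1)).toEmbedding ∈ (range n).powerset := by
  rw [mem_powerset] at hs ⊢
  intro r hr
  rw [mem_map_equiv, Equiv.symm_swap] at hr
  have hmem := mem_range.1 (hs hr)
  rw [Equiv.swap_apply_def] at hmem
  rw [mem_range]
  split_ifs at hmem <;> lia

lemma prod_eq_mul_prod_map_swap {K : Type*} [CommMonoid K] (x q : K) {i : ℕ} {s : Finset ℕ}
    (hi : i ∉ s) (hs : i + 1 ∈ s) : ∏ p ∈ s, x * q ^ p =
      q * ∏ p ∈ s.map (Equiv.swap i (i + 1)).toEmbedding, x * q ^ p := by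
  rw [prod_map, ← mul_prod_erase s _ hs, ← mul_prod_erase s (fun p => x * q ^ _) hs]
  have hrest : ∏ p ∈ s.erase (i + 1), x * q ^ (Equiv.swap i (i + 1)).toEmbedding p =
      ∏ p ∈ s.erase (i + 1), x * q ^ p := by
    refine prod_congr rfl fun p hp => ?_
    rw [Equiv.toEmbedding_apply, Equiv.swap_apply_of_ne_of_ne]
    · rintro rfl; exact hi (mem_of_mem_erase hp)
    · exact ne_of_mem_erase hp
  rw [hrest, Equiv.toEmbedding_apply, Equiv.swap_apply_right, pow_succ]
  simp only [mul_assoc, mul_left_comm, mul_comm]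

variable {K : Type*} [Field K]

/-- The functional on functions of words of length `n` in two letters through which the quotient
of the word module on which `a = x` and `T i = q` factors. -/
def subsetFunctional (x q : K) (n : ℕ) : ((ℕ → Bool) → K) →ₗ[K] K :=
  wordFunctional (range n).powerset (fun s => ∏ p ∈ s, x * q ^ p) subsetWord

lemma subsetFunctional_heckeOp (x q : K) {n i : ℕ} (hi : i + 1 < n) (f : (ℕ → Bool) → K) :
    subsetFunctional x q n (heckeOp q i (i + 1) f) = q * subsetFunctional x q n f := by
  refine wordFunctional_heckeOp (σ := fun s => s.map (Equiv.swap i (i + 1)).toEmbedding)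
    (fun s => ?_) (fun s => map_swap_mem_powerset_range hi) (subsetWord_map_swap i (i + 1))
    (fun s _ hs => ?_) f
  · exact map_swap_map_swap i (i + 1) s
  · simp only [subsetWord, Bool.lt_iff, decide_eq_false_iff_not, decide_eq_true_iff] at hs
    exact prod_eq_mul_prod_map_swap x q hs.1 hs.2

lemma subsetFunctional_eq_sum_insert (x q : K) {n i : ℕ} (hi : i < n) (f : (ℕ → Bool) → K) :
    subsetFunctional x q n f = ∑ s ∈ ((range n).erase i).powerset, (∏ p ∈ s, x * q ^ p) *
      (f (subsetWord s) + x * q ^ i * f (subsetWord (insert i s))) := by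
  rw [subsetFunctional, wordFunctional_apply, ← insert_erase (mem_range.2 hi),
    sum_powerset_insert (notMem_erase i _), ← sum_add_distrib, erase_insert (notMem_erase i _)]
  refine sum_congr rfl fun s hs => ?_
  have his : i ∉ s := fun h => notMem_erase i _ (mem_powerset.1 hs h)
  rw [prod_insert his]
  ring

lemma subsetFunctional_flipOp (x y q : K) {n : ℕ} (hn : 0 < n) (f : (ℕ → Bool) → K) :
    subsetFunctional x q n (flipOp x y 0 f) = x * subsetFunctional x q n f := by
  rw [subsetFunctional_eq_sum_insert x q hn, subsetFunctional_eq_sum_insert x q hn, mul_sum]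
  refine sum_congr rfl fun s hs => ?_
  have hs0 : 0 ∉ s := fun h => notMem_erase 0 _ (mem_powerset.1 hs h)
  have hflip := flipAt_subsetWord_insert hs0
  have hflip' : flipAt 0 (subsetWord s) = subsetWord (insert 0 s) := by rw [← hflip, flipAt_flipAt]
  rw [flipOp_apply, flipOp_apply, hflip, hflip', if_neg (by simpa [subsetWord] using hs0),
    if_pos (by simp [subsetWord])]
  ring

lemma apply_flipAt_of_eigenvector {x y q : K} (hq : q ≠ 0) {n : ℕ} {f : (ℕ → Bool) → K}
    (hflip : flipOp x y 0 f = x • f)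
    (hhecke : ∀ i, i + 1 < n → heckeOp q i (i + 1) f = q • f) :
    ∀ j < n, ∀ w : ℕ → Bool, w j → f (flipAt j w) = -y * f w := by
  intro j
  induction j with
  | zero =>
    intro _ w hw
    have hfw := congrFun hflip w
    rw [flipOp_apply, if_pos hw, Pi.smul_apply, smul_eq_mul] at hfw
    linear_combination hfw
  | succ j ih =>
    intro hj w hw
    have hsymm := apply_comp_swap_of_heckeOp_eq_smul hq (hhecke j hj)
    have hflip_swap := flipAt_comp (Equiv.swap j (j + 1)) j w
    rw [Equiv.swap_apply_left] at hflip_swap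
    rw [← hsymm, ← hsymm w, ← hflip_swap]
    exact ih (by lia) _ (by simpa using hw)

lemma subsetFunctional_eq_zero_of_eigenvector {x y q : K} (hq : q ≠ 0) {n i : ℕ} (hi : i < n)
    (hxy : x * q ^ i = y) {f : (ℕ → Bool) → K} (hflip : flipOp x y 0 f = x • f)
    (hhecke : ∀ i, i + 1 < n → heckeOp q i (i + 1) f = q • f) : subsetFunctional x q n f = 0 := by
  rw [subsetFunctional_eq_sum_insert x q hi]
  refine sum_eq_zero fun s hs => ?_
  have his : i ∉ s := fun h => notMem_erase i _ (mem_powerset.1 hs h)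
  rw [← flipAt_subsetWord_insert his,
    apply_flipAt_of_eigenvector hq hflip hhecke i hi _ (by simp [subsetWord]), hxy]
  ring

lemma subsetFunctional_ne_zero (x q : K) (n : ℕ) : subsetFunctional x q n ≠ 0 := by
  intro h
  have hone := wordFunctional_single (c := fun s => ∏ p ∈ s, x * q ^ p)
    subsetWord_injective.injOn (empty_mem_powerset (range n))
  rw [prod_empty] at hone
  exact one_ne_zero (hone.symm.trans (LinearMap.congr_fun h _))

end SubsetWord

theorem IsHeckeAlgebra.mul_pow_ne {K : Type u} {A : Type v} [Field K] [Ring A] [Algebra K A]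
    [IsSemisimpleRing A] {q : K} {n : ℕ} {P : K[X]} {a : A} {T : ℕ → A}
    (H : IsHeckeAlgebra q n P a T) (hq : q ≠ 0) {x y : K} (hP : (X - C x) * (X - C y) ∣ P) {i : ℕ}
    (hi : i < n) : x * q ^ i ≠ y := by
  intro hxy
  have hx : P.eval x = 0 := by
    obtain ⟨Q, rfl⟩ := hP
    simp
  have hrel : HeckeRelations q n (flipOp x y 0) (fun t => heckeOp q t (t + 1)) :=
    heckeRelations_heckeOp q n (flipOp_heckeOp_braid q x y zero_ne_one)
      fun i hi => commute_flipOp_heckeOp q x y (by lia) (by lia)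
  have hn : 0 < n := by lia
  exact subsetFunctional_ne_zero x q n <|
    H.functional_eq_zero hn hx hrel (aeval_flipOp_eq_zero hP 0) (subsetFunctional x q n)
      (subsetFunctional_flipOp x y q hn) (fun i hi => subsetFunctional_heckeOp x q hi)
      fun f hflip hhecke => subsetFunctional_eq_zero_of_eigenvector hq hi hxy hflip hhecke

end CyclotomicHecke

namespace CyclotomicHecke

universe u v

open Polynomial Finset

lemma apply_comp_swap_of_adjacent {α β : Type*} {n : ℕ} {f : (ℕ → α) → β}
    (hf : ∀ i, i + 1 < n → ∀ w, f (w ∘ Equiv.swap i (i + 1)) = f w) {i j : ℕ} (hi : i < n)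
    (hj : j < n) (w : ℕ → α) : f (w ∘ Equiv.swap i j) = f w := by
  wlog hij : i < j generalizing i j
  · rcases (not_lt.1 hij).eq_or_lt with rfl | hji
    · rw [comp_swap_eq_self rfl]
    · rw [Equiv.swap_comm]
      exact this hj hi hji
  induction j, hij using Nat.le_induction generalizing w with
  | base => exact hf i hj w
  | succ j hij ih =>
    have hconj : Equiv.swap i (j + 1) =
        Equiv.swap j (j + 1) * Equiv.swap i j * Equiv.swap j (j + 1) := by
      rw [Equiv.swap_mul_swap_mul_swap (x := i) (by lia) (by lia), Equiv.swap_comm]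
    rw [hconj, Equiv.Perm.coe_mul, Equiv.Perm.coe_mul, ← Function.comp_assoc,
      ← Function.comp_assoc, hf j hj, ih _ (by lia), hf j hj]

section MarkedWord

/-- The word with letters `0` on `Z` and `2` off `Z`, except for a letter `1` at `p`. -/
def markedWord (Z : Finset ℕ) (p : ℕ) : ℕ → ℕ :=
  fun r => if r = p then 1 else if r ∈ Z then 0 else 2

lemma markedWord_map_swap (i j : ℕ) (Z : Finset ℕ) (p : ℕ) :
    markedWord (Z.map (Equiv.swap i j).toEmbedding) (Equiv.swap i j p) =
      markedWord Z p ∘ Equiv.swap i j := by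
  funext r
  simp only [markedWord, Function.comp_apply, mem_map_equiv, Equiv.symm_swap,
    Equiv.swap_apply_eq_iff, eq_comm (a := r)]

lemma markedWord_injOn :
    Set.InjOn (fun x : (_ : Finset ℕ) × ℕ => markedWord x.1 x.2) {x | x.2 ∈ x.1} := by
  rintro ⟨Z, p⟩ hp ⟨Z', p'⟩ hp' h
  have hletter := congrFun h
  simp only [markedWord, Set.mem_ofPred_eq] at hletter hp hp'
  obtain rfl : p = p' := by grind
  obtain rfl : Z = Z' := by ext r; grind
  rfl

lemma map_swap_eq_self {i j : ℕ} {Z : Finset ℕ} (hi : i ∈ Z) (hj : j ∈ Z) :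
    Z.map (Equiv.swap i j).toEmbedding = Z := by
  ext r
  rw [mem_map_equiv, Equiv.symm_swap, Equiv.swap_apply_def]
  split_ifs <;> simp_all

lemma card_filter_lt_map_swap {i p : ℕ} {Z : Finset ℕ} (hp : p ∈ Z) (hi : i ∉ Z ∨ i + 1 ∉ Z) :
    #{r ∈ Z.map (Equiv.swap i (i + 1)).toEmbedding | r < Equiv.swap i (i + 1) p} =
      #{r ∈ Z | r < p} := by
  rw [filter_map, card_map]
  congr 1
  refine filter_congr fun r hr => ?_
  simp only [Function.comp_apply, Equiv.toEmbedding_apply, Equiv.swap_apply_def]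
  grind

lemma sum_pow_card_filter_lt {α R : Type*} [LinearOrder α] [Semiring R] (q : R) (Z : Finset α) :
    ∑ p ∈ Z, q ^ #{r ∈ Z | r < p} = ∑ j ∈ range #Z, q ^ j := by
  induction Z using Finset.induction_on_max with
  | empty => simp
  | insert a s hmax ih =>
    have ha : a ∉ s := fun h => lt_irrefl _ (hmax a h)
    rw [sum_insert ha, card_insert_of_notMem ha, sum_range_succ, ← ih, add_comm]
    congr 1
    · refine sum_congr rfl fun p hp => ?_
      rw [filter_insert, if_neg (hmax p hp).not_gt]
    · rw [filter_insert, if_neg (lt_irrefl _), filter_true_of_mem hmax]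

variable {K : Type*} [Field K]

/-- The coefficient of a marked word. Up to a constant factor it is `q` to the number of
non-inversions of the word. -/
def markedWeight (q : K) (Z : Finset ℕ) (p : ℕ) : K :=
  (∏ z ∈ Z, q⁻¹ ^ z) * q ^ #{r ∈ Z | r < p}

lemma markedWeight_eq_mul_map_swap {q : K} (hq : q ≠ 0) {i p : ℕ} {Z : Finset ℕ} (hp : p ∈ Z)
    (hlt : markedWord Z p i < markedWord Z p (i + 1)) :
    markedWeight q Z p = q * markedWeight q (Z.map (Equiv.swap i (i + 1)).toEmbedding)
      (Equiv.swap i (i + 1) p) := by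
  have hi : i ∈ Z := by
    by_contra hi
    simp only [markedWord] at hlt
    grind
  by_cases hi1 : i + 1 ∈ Z
  · obtain rfl : i + 1 = p := by
      simp only [markedWord] at hlt
      grind
    have hrank : #{r ∈ Z | r < i + 1} = #{r ∈ Z | r < i} + 1 := by
      rw [← card_insert_of_notMem (a := i) (by simp)]
      congr 1
      grind
    rw [map_swap_eq_self hi hi1, Equiv.swap_apply_right, markedWeight, markedWeight, hrank,
      pow_succ]
    ring
  · have hprod : ∏ z ∈ Z.map (Equiv.swap i (i + 1)).toEmbedding, q⁻¹ ^ z =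
        q⁻¹ * ∏ z ∈ Z, q⁻¹ ^ z := by
      have := prod_eq_mul_prod_map_swap 1 q⁻¹ (s := Z.map (Equiv.swap i (i + 1)).toEmbedding)
        (i := i) (by simpa [mem_map_equiv] using hi1) (by simpa [mem_map_equiv] using hi)
      simpa [map_swap_map_swap] using this
    rw [markedWeight, markedWeight, card_filter_lt_map_swap hp (Or.inr hi1), hprod]
    field_simp

/-- The functional on functions of words of length `n` through which the quotient of the word
module with `e` letters `0` or `1` on which `T i = q` factors. -/
def markedFunctional (q : K) (e n : ℕ) : ((ℕ → ℕ) → K) →ₗ[K] K :=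
  wordFunctional ((powersetCard e (range n)).sigma fun Z => Z)
    (fun x => markedWeight q x.1 x.2) (fun x => markedWord x.1 x.2)

lemma markedFunctional_heckeOp {q : K} (hq : q ≠ 0) (e : ℕ) {n i : ℕ} (hi : i + 1 < n)
    (f : (ℕ → ℕ) → K) :
    markedFunctional q e n (heckeOp q i (i + 1) f) = q * markedFunctional q e n f := by
  refine wordFunctional_heckeOp (σ := fun x =>
      ⟨x.1.map (Equiv.swap i (i + 1)).toEmbedding, Equiv.swap i (i + 1) x.2⟩)
    (fun x => ?_) (fun x hx => ?_) (fun x => markedWord_map_swap i (i + 1) x.1 x.2)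
    (fun x hx hlt => markedWeight_eq_mul_map_swap hq (mem_sigma.1 hx).2 hlt) f
  · simp only [map_swap_map_swap, Equiv.swap_apply_self]
  · obtain ⟨hZ, hp⟩ := mem_sigma.1 hx
    obtain ⟨hsub, hcard⟩ := mem_powersetCard.1 hZ
    refine mem_sigma.2 ⟨mem_powersetCard.2 ⟨?_, by rw [card_map, hcard]⟩, ?_⟩
    · exact mem_powerset.1 (map_swap_mem_powerset_range hi (mem_powerset.2 hsub))
    · simpa [mem_map_equiv] using hp

lemma markedFunctional_ne_zero {q : K} (hq : q ≠ 0) {e n : ℕ} (he : 1 ≤ e) (hen : e ≤ n) :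
    markedFunctional q e n ≠ 0 := by
  intro h
  have hmem : (⟨range e, 0⟩ : (_ : Finset ℕ) × ℕ) ∈
      (powersetCard e (range n)).sigma fun Z => Z := by
    simpa [mem_powersetCard, hen] using Nat.pos_of_ne_zero (Nat.one_le_iff_ne_zero.1 he)
  have hvalue := wordFunctional_single (c := fun x => markedWeight q x.1 x.2)
    (markedWord_injOn.mono fun x hx => (mem_sigma.1 hx).2) hmem
  have hweight : markedWeight q (range e) 0 ≠ 0 :=
    mul_ne_zero (prod_ne_zero_iff.2 fun z _ => pow_ne_zero z (inv_ne_zero hq)) (pow_ne_zero _ hq)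
  exact hweight (hvalue.symm.trans (LinearMap.congr_fun h _))

lemma markedFunctional_eq_zero_of_eigenvector {q : K} (hq : q ≠ 0) {e n : ℕ}
    (he : ∑ j ∈ range e, q ^ j = 0) {f : (ℕ → ℕ) → K}
    (hf : ∀ i, i + 1 < n → heckeOp q i (i + 1) f = q • f) : markedFunctional q e n f = 0 := by
  rw [markedFunctional, wordFunctional_apply, sum_sigma]
  refine sum_eq_zero fun Z hZ => ?_
  obtain ⟨hsub, hcard⟩ := mem_powersetCard.1 hZ
  rcases Z.eq_empty_or_nonempty with rfl | ⟨p₀, hp₀⟩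
  · rfl
  have hconst : ∀ p ∈ Z, f (markedWord Z p) = f (markedWord Z p₀) := by
    intro p hp
    have hswap := markedWord_map_swap p p₀ Z p₀
    rw [map_swap_eq_self hp hp₀, Equiv.swap_apply_right] at hswap
    rw [hswap, apply_comp_swap_of_adjacent
      (fun i hi => apply_comp_swap_of_heckeOp_eq_smul hq (hf i hi))
      (mem_range.1 (hsub hp)) (mem_range.1 (hsub hp₀))]
  calc ∑ p ∈ Z, markedWeight q Z p * f (markedWord Z p)
      = (∏ z ∈ Z, q⁻¹ ^ z) * (∑ p ∈ Z, q ^ #{r ∈ Z | r < p}) * f (markedWord Z p₀) := by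
        rw [mul_sum, sum_mul]
        exact sum_congr rfl fun p hp => by rw [hconst p hp, markedWeight]
    _ = 0 := by rw [sum_pow_card_filter_lt, hcard, he, mul_zero, zero_mul]

end MarkedWord

theorem IsHeckeAlgebra.geom_sum_ne_zero {K : Type u} {A : Type v} [Field K] [Ring A] [Algebra K A]
    [IsSemisimpleRing A] {q : K} {n : ℕ} {P : K[X]} {a : A} {T : ℕ → A}
    (H : IsHeckeAlgebra q n P a T) (hq : q ≠ 0) {x : K} (hx : P.eval x = 0) {e : ℕ} (he : 1 ≤ e)
    (hen : e ≤ n) : ∑ j ∈ range e, q ^ j ≠ 0 := by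
  intro hsum
  have hcomm (b : Module.End K ((ℕ → ℕ) → K)) : Commute (algebraMap K _ x) b :=
    Algebra.commutes x b
  have hrel : HeckeRelations q n (algebraMap K (Module.End K ((ℕ → ℕ) → K)) x)
      (fun t => heckeOp q t (t + 1)) :=
    heckeRelations_heckeOp q n (by rw [mul_assoc, (hcomm _).eq]; simp only [mul_assoc])
      fun i _ => hcomm _
  have hroot : aeval (algebraMap K (Module.End K ((ℕ → ℕ) → K)) x) P = 0 := by
    rw [aeval_algebraMap_apply, coe_aeval_eq_eval, hx, map_zero]
  exact markedFunctional_ne_zero hq he hen <|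
    H.functional_eq_zero (by lia) hx hrel hroot (markedFunctional q e n) (by simp)
      (fun i hi => markedFunctional_heckeOp hq e hi)
      fun f _ hf => markedFunctional_eq_zero_of_eigenvector hq hsum hf

end CyclotomicHecke

/-! ### The presented algebra -/

namespace CyclotomicHecke

open Polynomial
open Cyclo (CH Rel gen)

section Presentation

variable {k : Type} [Field k] {m n : ℕ} {v : Fin m → k} {q : k}

lemma aeval_prod_X_sub_C {B : Type*} [Ring B] [Algebra k B] (v : Fin m → k) (b : B) :
    aeval b (∏ j, (X - C (v j))) = (List.ofFn fun j => b - algebraMap k B (v j)).prod := by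
  rw [← List.prod_ofFn, map_list_prod, List.map_ofFn]
  congr 2
  funext j
  simp

lemma quadratic_iff {B : Type*} [Ring B] [Algebra k B] (q : k) (b : B) :
    (b - algebraMap k B q) * (b + 1) = 0 ↔ b * b = (q - 1) • b + q • (1 : B) := by
  have hexpand : (b - algebraMap k B q) * (b + 1) = b * b - ((q - 1) • b + q • (1 : B)) := by
    rw [sub_mul, mul_add, mul_add, ← Algebra.smul_def, ← Algebra.smul_def, sub_smul]
    simp only [mul_one, one_smul]
    abel
  rw [hexpand, sub_eq_zero]

variable (k m n v q) in
/-- The presentation of the Hecke algebra as a quotient of the free algebra. -/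
def presentation : FreeAlgebra k (Fin n) →ₐ[k] CH k m n v q :=
  RingQuot.mkAlgHom k (Rel k m n v q)

lemma presentation_eq_of_rel {x y : FreeAlgebra k (Fin n)} (h : Rel k m n v q x y) :
    presentation k m n v q x = presentation k m n v q y :=
  RingQuot.mkAlgHom_rel k h

lemma presentation_surjective : Function.Surjective (presentation k m n v q) :=
  RingQuot.mkAlgHom_surjective k _

lemma exists_algHom_presentation {B : Type*} [Ring B] [Algebra k B]
    {φ : FreeAlgebra k (Fin n) →ₐ[k] B} (hφ : ∀ ⦃x y⦄, Rel k m n v q x y → φ x = φ y) :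
    ∃ Φ : CH k m n v q →ₐ[k] B, ∀ x, Φ (presentation k m n v q x) = φ x :=
  ⟨RingQuot.liftAlgHom k ⟨φ, hφ⟩, fun x => RingQuot.liftAlgHom_mkAlgHom_apply k φ hφ x⟩

variable [NeZero n]

lemma presentation_ι {t : ℕ} (ht : t < n) :
    presentation k m n v q (FreeAlgebra.ι k ⟨t, ht⟩) = gen k m n v q t := by
  rw [gen, Fin.natCast_eq_mk ht]
  rfl

lemma aeval_gen_zero : aeval (gen k m n v q 0) (∏ j, (X - C (v j))) = 0 := by
  have hrel := presentation_eq_of_rel (k := k) (v := v) (q := q)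
    (Rel.cyclo ⟨0, NeZero.pos n⟩ rfl)
  rw [map_list_prod, List.map_ofFn, map_zero] at hrel
  rw [aeval_prod_X_sub_C, ← hrel]
  congr 2
  funext j
  rw [Function.comp_apply, map_sub, presentation_ι, AlgHom.commutes]

lemma heckeRelations_gen :
    HeckeRelations q n (gen k m n v q 0) (fun i => gen k m n v q (i + 1)) where
  quad i hi := by
    have hrel := presentation_eq_of_rel (Rel.quad (k := k) (v := v) (q := q) ⟨i + 1, hi⟩ (by simp))
    rwa [map_mul, map_sub, map_add, map_one, map_zero, AlgHom.commutes, presentation_ι,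
      quadratic_iff] at hrel
  braid_zero hn := by
    simpa only [map_mul, presentation_ι] using presentation_eq_of_rel
      (Rel.braid0 (k := k) (v := v) (q := q) ⟨0, NeZero.pos n⟩ ⟨1, hn⟩ rfl rfl)
  commute_zero i hi hin := by
    simpa only [map_mul, presentation_ι] using! presentation_eq_of_rel
      (Rel.comm (k := k) (v := v) (q := q) ⟨0, NeZero.pos n⟩ ⟨i + 1, hin⟩ (by lia))
  commute i j hij hj := by
    have hi : i + 1 < n := by lia
    simpa only [map_mul, presentation_ι] using! presentation_eq_of_rel
      (Rel.comm (k := k) (v := v) (q := q) ⟨i + 1, hi⟩ ⟨j + 1, hj⟩ (by lia))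
  braid i hi := by
    simpa only [map_mul, presentation_ι] using presentation_eq_of_rel
      (Rel.braid (k := k) (v := v) (q := q) ⟨i + 1, Nat.lt_of_succ_lt hi⟩ ⟨i + 2, hi⟩ (by simp) rfl)

lemma parabolic_gen_eq_top :
    parabolic k (gen k m n v q 0) (fun i => gen k m n v q (i + 1)) n = ⊤ := by
  refine eq_top_iff.2 fun x _ => ?_
  obtain ⟨y, rfl⟩ := presentation_surjective x
  induction y using FreeAlgebra.induction with
  | grade0 r => rw [AlgHom.commutes]; exact Subalgebra.algebraMap_mem _ r
  | grade1 i =>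
    obtain ⟨_ | t, ht⟩ := i
    · rw [presentation_ι]; exact mem_parabolic_zeroth NeZero.one_le
    · rw [presentation_ι]; exact mem_parabolic_gen (T := fun i => gen k m n v q (i + 1)) ht
  | mul x y hx hy => rw [map_mul]; exact Subalgebra.mul_mem _ (hx trivial) (hy trivial)
  | add x y hx hy => rw [map_add]; exact Subalgebra.add_mem _ (hx trivial) (hy trivial)

/-- The sequence `b, S 0, S 1, …` of images of the generators `a_1, a_2, a_3, …`. -/
def consSeq {B : Type*} (b : B) (S : ℕ → B) : ℕ → B
  | 0 => b
  | i + 1 => S i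

omit [NeZero n] in
lemma HeckeRelations.lift_eq_of_rel {B : Type*} [Ring B] [Algebra k B] {b : B} {S : ℕ → B}
    (H : HeckeRelations q n b S) (hb : aeval b (∏ j, (X - C (v j))) = 0)
    {x y : FreeAlgebra k (Fin n)} (h : Rel k m n v q x y) :
    FreeAlgebra.lift k (fun i : Fin n => consSeq b S i) x =
      FreeAlgebra.lift k (fun i : Fin n => consSeq b S i) y := by
  cases h with
  | cyclo i hi =>
    rw [map_list_prod, List.map_ofFn, map_zero, ← hb, aeval_prod_X_sub_C]
    congr 2
    funext j
    simp [hi, consSeq]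
  | quad i hi =>
    obtain ⟨_ | i, hin⟩ := i
    · simp at hi
    · simp only [map_mul, map_sub, map_add, map_one, map_zero, AlgHom.commutes,
        FreeAlgebra.lift_ι_apply]
      exact (quadratic_iff q _).2 (H.quad i hin)
  | braid0 i j hi hj =>
    simp only [map_mul, FreeAlgebra.lift_ι_apply, hi, hj]
    exact H.braid_zero (hj ▸ j.2)
  | comm i j hij =>
    obtain ⟨_ | j, hj⟩ := j
    · simp at hij
    obtain ⟨_ | i, hi⟩ := i <;> simp only [map_mul, FreeAlgebra.lift_ι_apply]
    · exact H.commute_zero j (by simpa using hij) hj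
    · exact H.commute i j (by simpa using hij) hj
  | braid i j hi hj =>
    obtain ⟨_ | i, hin⟩ := i
    · simp at hi
    · simp only [map_mul, FreeAlgebra.lift_ι_apply, hj]
      exact H.braid i (by have := j.2; lia)

variable (k m n v q) in
theorem isHeckeAlgebra_gen : IsHeckeAlgebra q n (∏ j, (X - C (v j))) (gen k m n v q 0)
    (fun i => gen k m n v q (i + 1)) where
  relations := heckeRelations_gen
  aeval_eq_zero := aeval_gen_zero
  parabolic_eq_top := parabolic_gen_eq_top
  exists_algHom B _ _ b S H hb := by
    obtain ⟨Φ, hΦ⟩ := exists_algHom_presentation fun x y h => H.lift_eq_of_rel (v := v) hb h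
    refine ⟨Φ, ?_, fun i hi => ?_⟩
    · rw [← presentation_ι (NeZero.pos n), hΦ, FreeAlgebra.lift_ι_apply, consSeq]
    · rw [← presentation_ι hi, hΦ, FreeAlgebra.lift_ι_apply, consSeq]

end Presentation

section Criterion

variable {K A ι : Type*} [Field K] [Ring A] [Algebra K A] [Fintype ι] {q : K} {n : ℕ}
  {v : ι → K} {a : A} {T : ℕ → A}

lemma X_sub_C_mul_X_sub_C_dvd_prod {j j' : ι} (hjj' : j ≠ j') :
    (X - C (v j)) * (X - C (v j')) ∣ ∏ j, (X - C (v j)) := by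
  rw [← Finset.prod_pair (f := fun j => X - C (v j)) hjj']
  exact Finset.prod_dvd_prod_of_subset _ _ _ (Finset.subset_univ _)

theorem IsHeckeAlgebra.zpow_mul_ne [IsSemisimpleRing A]
    (H : IsHeckeAlgebra q n (∏ j, (X - C (v j))) a T) (hq : q ≠ 0) {i : ℤ}
    (hi : i.natAbs < n) {j j' : ι} (hjj' : j ≠ j') : q ^ i * v j ≠ v j' := by
  intro heq
  obtain ⟨d, rfl | rfl⟩ := i.eq_nat_or_neg
  · refine H.mul_pow_ne hq (X_sub_C_mul_X_sub_C_dvd_prod hjj') (by simpa using hi) ?_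
    rw [← heq, zpow_natCast, mul_comm]
  · refine H.mul_pow_ne hq (X_sub_C_mul_X_sub_C_dvd_prod hjj'.symm) (by simpa using hi) ?_
    rw [← heq, zpow_neg, zpow_natCast]
    field_simp

theorem HeckeRelations.isSemisimpleRing [Nonempty ι] (H : HeckeRelations q n a T)
    (ha : aeval a (∏ j, (X - C (v j))) = 0) (hq : q ≠ 0) (hn : 1 ≤ n)
    (hsep : ∀ i : ℤ, i.natAbs < n → ∀ j j', j ≠ j' → q ^ i * v j ≠ v j')
    (hsum : ∀ d, 1 ≤ d → d ≤ n → ∑ j ∈ Finset.range d, q ^ j ≠ 0)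
    (htop : parabolic K a T n = ⊤) : IsSemisimpleRing A := by
  rcases eq_or_ne q 1 with rfl | hq1
  · have hv : Function.Injective v := fun j j' h => by
      by_contra hjj'
      exact hsep 0 (by rwa [Int.natAbs_zero]) j j' hjj' (by simpa using h)
    exact H.isSemisimpleRing_of_q_eq_one hv ha (by simpa using hsum) htop
  · refine H.isSemisimpleRing_of_separated ha hq hn (fun d hd hdn hqd => hsum d hd hdn ?_) hsep htop
    have hgeom := geom_sum_mul q d
    rw [hqd, sub_self] at hgeom
    exact (mul_eq_zero.1 hgeom).resolve_right (sub_ne_zero.2 hq1)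

end Criterion

end CyclotomicHecke

namespace Cyclo
variable (k : Type) [Field k] (m n : ℕ) (v : Fin m → k) (q : k)

/-- **Ariki(–Koike).**  `H_n(v_1,…,v_m;q)` is semisimple if and only if the
elements `q^i v_j − v_k` (`|i| < n`, `j ≠ k`) and `1 + q + ⋯ + q^i` (`1 ≤ i < n`) are all
nonzero in `k`. -/
theorem semisimple_iff [NeZero m] [NeZero n] (hq : q ≠ 0) :
    IsSemisimpleRing (CH k m n v q) ↔
      ((∀ i : ℤ, i.natAbs < n → ∀ j j' : Fin m, j ≠ j' → q ^ i * v j - v j' ≠ 0) ∧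
        (∀ i : ℕ, 1 ≤ i → i < n → (∑ j ∈ Finset.range (i + 1), q ^ j) ≠ 0)) := by
  have H := CyclotomicHecke.isHeckeAlgebra_gen k m n v q
  constructor
  · intro hss
    have hroot : (∏ j, (Polynomial.X - Polynomial.C (v j))).eval (v 0) = 0 := by
      rw [Polynomial.eval_prod]
      exact Finset.prod_eq_zero (Finset.mem_univ 0) (by simp)
    exact ⟨fun i hi j j' hjj' => sub_ne_zero.2 (H.zpow_mul_ne hq hi hjj'),
      fun i _ hi => H.geom_sum_ne_zero hq hroot (by lia) hi⟩
  · rintro ⟨hsep, hsum⟩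
    have hsum' : ∀ d, 1 ≤ d → d ≤ n → ∑ j ∈ Finset.range d, q ^ j ≠ 0 := by
      rintro (_ | _ | d) hd hdn
      · lia
      · simp
      · exact hsum (d + 1) (by lia) hdn
    exact H.relations.isSemisimpleRing H.aeval_eq_zero hq NeZero.one_le
      (fun i hi j j' hjj' => sub_ne_zero.1 (hsep i hi j j' hjj')) hsum' H.parabolic_eq_top

end Cyclo
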